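/- Let N ≥ 3, 2* = 2N/(N−2), q ∈ (1, 2*−1), β > 0, and let a, b satisfy (a₁), (b₁), (a₂); fix Ω'_Γ, ν₀ > 0, and f, g, G as above, and let S = inf{ ∫_{ℝ^N} K(|∇u|² + u²) dx : u smooth compactly supported, ∫_{ℝ^N} K|u|^{2*} dx = 1 }. Fix λ ≥ 1 and c ∈ (0, (1/2 − 1/(q+1)) S^{N/2}). Let {u_n} be a sequence of nonnegative continuously differentiable functions on ℝ^N with ‖u_n‖_{K,λ} < ∞ such that Φ_λ(u_n) → c and there exist ε_n → 0 with |⟨Φ'_λ(u_n), φ⟩| ≤ ε_n ‖φ‖_{K,λ} for every n and every continuously differentiable φ with ‖φ‖_{K,λ} < ∞. Then {u_n} has a subsequence that is Cauchy with respect to the norm ‖·‖_{K,λ} (i.e. the subsequence converges strongly in H^1_{K,λ}(ℝ^N)). -/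

import Mathlib

open MeasureTheory Real Filter Topology RealInnerProductSpace

noncomputable section

abbrev En (N : ℕ) := EuclideanSpace ℝ (Fin N)

/-- The weight `K(x) = exp(|x|²/4)`. -/
def Kw {N : ℕ} (x : En N) : ℝ := Real.exp (‖x‖ ^ 2 / 4)

/-- The Laplacian `Δu(x) = ∑ᵢ ∂²u/∂xᵢ²(x)`. -/
def lap {N : ℕ} (u : En N → ℝ) (x : En N) : ℝ :=
  ∑ i : Fin N, fderiv ℝ (fun y => fderiv ℝ u y (EuclideanSpace.single i (1:ℝ))) x
    (EuclideanSpace.single i (1:ℝ))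

/-- The critical Sobolev exponent `2* = 2N/(N−2)`. -/
def twoStar (N : ℕ) : ℝ := 2 * N / ((N : ℝ) - 2)

/-- `h(t) = βt^q + t^{p−1}` for `t ≥ 0`, `h(t) = 0` for `t ≤ 0` (with `p = 2*`). -/
def hfun (q p β : ℝ) (t : ℝ) : ℝ := if t ≤ 0 then 0 else β * t ^ q + t ^ (p - 1)

/-- The truncation `f` of `h`: `f = h` on `[0,ρ]`, `f(t) = ν₀t` for `t ≥ ρ`, `f = 0` on `(-∞,0]`. -/
def ffun (q p β ν₀ ρ : ℝ) (t : ℝ) : ℝ :=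
  if t ≤ 0 then 0 else if t ≤ ρ then β * t ^ q + t ^ (p - 1) else ν₀ * t

/-- `H(t) = ∫₀^t h`. -/
def Hfun (q p β : ℝ) (t : ℝ) : ℝ := ∫ τ in (0:ℝ)..t, hfun q p β τ

/-- `F(t) = ∫₀^t f`. -/
def Ffun (q p β ν₀ ρ : ℝ) (t : ℝ) : ℝ := ∫ τ in (0:ℝ)..t, ffun q p β ν₀ ρ τ

-- `g(x,t) = h(t)` for `x ∈ Ω'_Γ`, `g(x,t) = f(t)` otherwise.
open Classical in
def gfun {N : ℕ} (q p β ν₀ ρ : ℝ) (Ω' : Set (En N)) (x : En N) (t : ℝ) : ℝ :=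
  if x ∈ Ω' then hfun q p β t else ffun q p β ν₀ ρ t

-- `G(x,t) = H(t)` for `x ∈ Ω'_Γ`, `G(x,t) = F(t)` otherwise.
open Classical in
def Gfun {N : ℕ} (q p β ν₀ ρ : ℝ) (Ω' : Set (En N)) (x : En N) (t : ℝ) : ℝ :=
  if x ∈ Ω' then Hfun q p β t else Ffun q p β ν₀ ρ t

/-- The squared norm `‖u‖²_{K,λ} = ∫ K(|∇u|² + (λa+b)u²)`. -/
def nrmSq {N : ℕ} (lam : ℝ) (a b : En N → ℝ) (u : En N → ℝ) : ℝ :=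
  ∫ x, Kw x * (‖gradient u x‖ ^ 2 + (lam * a x + b x) * u x ^ 2)

/-- The modified functional
`Φ_λ(u) = (1/2)∫ K(|∇u|² + (λa+b)u²) − ∫ K G(x,u)`. -/
def Phi {N : ℕ} (q p β ν₀ ρ lam : ℝ) (a b : En N → ℝ) (Ω' : Set (En N)) (u : En N → ℝ) : ℝ :=
  (1/2) * nrmSq lam a b u - ∫ x, Kw x * Gfun q p β ν₀ ρ Ω' x (u x)

/-- The pairing `⟨Φ'_λ(u), φ⟩ = ∫ K(∇u·∇φ + (λa+b)uφ) − ∫ K g(x,u)φ`. -/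
def PhiD {N : ℕ} (q p β ν₀ ρ lam : ℝ) (a b : En N → ℝ) (Ω' : Set (En N)) (u φ : En N → ℝ) : ℝ :=
  (∫ x, Kw x * (⟪gradient u x, gradient φ x⟫ + (lam * a x + b x) * u x * φ x))
    - ∫ x, Kw x * gfun q p β ν₀ ρ Ω' x (u x) * φ x

/-- The best constant `S` of the embedding `H_K^1(ℝ^N) ↪ L_K^{2*}(ℝ^N)`. -/
def Sconst (N : ℕ) : ℝ :=
  sInf {y : ℝ | ∃ u : En N → ℝ, ContDiff ℝ (⊤ : ℕ∞) u ∧ HasCompactSupport u ∧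
    (∫ x, Kw x * |u x| ^ twoStar N) = 1 ∧
    y = ∫ x, Kw x * (‖gradient u x‖ ^ 2 + u x ^ 2)}


/-- The weighted measure `K dx`. -/
def kap (N : ℕ) : Measure (En N) := volume.withDensity (fun x => ENNReal.ofReal (Kw x))

lemma Kw_cont {N : ℕ} : Continuous (Kw : En N → ℝ) := by
  unfold Kw; fun_prop

lemma Kw_pos {N : ℕ} (x : En N) : 0 < Kw x := Real.exp_pos _

lemma Kw_one_le {N : ℕ} (x : En N) : 1 ≤ Kw x := by
  unfold Kw; exact Real.one_le_exp (by positivity)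

instance {N : ℕ} : IsLocallyFiniteMeasure (kap N) :=
  IsLocallyFiniteMeasure.withDensity_ofReal Kw_cont

lemma kap_integral {N : ℕ} (f : En N → ℝ) : ∫ x, f x ∂(kap N) = ∫ x, Kw x * f x := by
  unfold kap
  rw [integral_withDensity_eq_integral_toReal_smul (by exact (Kw_cont.measurable.ennreal_ofReal))
    (by simp)]
  congr 1; ext x
  rw [ENNReal.toReal_ofReal (Kw_pos x).le]; rfl

lemma kap_integrable {N : ℕ} {f : En N → ℝ} :
    Integrable f (kap N) ↔ Integrable (fun x => Kw x * f x) := by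
  unfold kap
  rw [integrable_withDensity_iff_integrable_smul' (by exact (Kw_cont.measurable.ennreal_ofReal))
    (by simp)]
  apply iff_of_eq; congr 1; ext x
  rw [ENNReal.toReal_ofReal (Kw_pos x).le]; rfl

lemma vol_le_kap {N : ℕ} : (volume : Measure (En N)) ≤ kap N := by
  unfold kap
  conv_lhs => rw [← withDensity_one (μ := (volume : Measure (En N)))]
  apply withDensity_mono
  apply Eventually.of_forall
  intro x
  simpa using (ENNReal.one_le_ofReal.2 (Kw_one_le x))

lemma kap_le_on_ball {N : ℕ} (R : ℝ) (A : Set (En N)) (hA : A ⊆ Metric.closedBall 0 R) :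
    kap N A ≤ ENNReal.ofReal (Real.exp (R ^ 2 / 4)) * volume A := by
  unfold kap
  rw [withDensity_apply' _ A]
  have : ∀ x ∈ A, ENNReal.ofReal (Kw x) ≤ ENNReal.ofReal (Real.exp (R ^ 2 / 4)) := by
    intro x hx
    apply ENNReal.ofReal_le_ofReal
    unfold Kw
    apply Real.exp_le_exp.2
    have := hA hx
    rw [mem_closedBall_zero_iff] at this
    gcongr
  calc _ ≤ ∫⁻ x in A, ENNReal.ofReal (Real.exp (R ^ 2 / 4)) := by
        exact setLIntegral_mono measurable_const this
    _ = _ := by simp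

/-! gradient calculus -/

lemma norm_grad {N : ℕ} (u : En N → ℝ) (x : En N) : ‖gradient u x‖ = ‖fderiv ℝ u x‖ := by
  unfold gradient; simp

lemma grad_cont {N : ℕ} {u : En N → ℝ} (h : ContDiff ℝ 1 u) : Continuous (gradient u) := by
  unfold gradient
  exact (LinearIsometryEquiv.continuous _).comp (h.continuous_fderiv (by simp))

lemma hasGrad {N : ℕ} {u : En N → ℝ} (h : ContDiff ℝ 1 u) (x : En N) :
    HasGradientAt u (gradient u x) x :=
  (h.differentiable (by simp) x).hasGradientAt

lemma grad_comp {N : ℕ} {u : En N → ℝ} {ψ : ℝ → ℝ} {ψ' : ℝ} {x : En N}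
    (h : ContDiff ℝ 1 u) (hψ : HasDerivAt ψ ψ' (u x)) :
    gradient (fun y => ψ (u y)) x = ψ' • gradient u x := by
  apply HasGradientAt.gradient
  rw [hasGradientAt_iff_hasFDerivAt]
  have := hψ.comp_hasFDerivAt x (hasGrad h x).hasFDerivAt
  refine HasFDerivAt.congr_fderiv this ?_
  simp

lemma grad_mul {N : ℕ} {u v : En N → ℝ} {x : En N}
    (h : ContDiff ℝ 1 u) (h' : ContDiff ℝ 1 v) :
    gradient (fun y => u y * v y) x = u x • gradient v x + v x • gradient u x := by
  apply HasGradientAt.gradient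
  rw [hasGradientAt_iff_hasFDerivAt]
  have := (hasGrad h x).hasFDerivAt.mul (hasGrad h' x).hasFDerivAt
  refine HasFDerivAt.congr_fderiv this ?_
  simp

lemma grad_sub {N : ℕ} {u v : En N → ℝ} {x : En N}
    (h : ContDiff ℝ 1 u) (h' : ContDiff ℝ 1 v) :
    gradient (fun y => u y - v y) x = gradient u x - gradient v x := by
  apply HasGradientAt.gradient
  rw [hasGradientAt_iff_hasFDerivAt]
  have := (hasGrad h x).hasFDerivAt.sub (hasGrad h' x).hasFDerivAt
  refine HasFDerivAt.congr_fderiv this ?_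
  simp

lemma grad_smul {N : ℕ} {u : En N → ℝ} {x : En N} (c : ℝ)
    (h : ContDiff ℝ 1 u) :
    gradient (fun y => c * u y) x = c • gradient u x := by
  apply grad_comp h
  simpa using (hasDerivAt_id (u x)).const_mul c

/-- membership in `H^1_K`. -/
structure H1 {N : ℕ} (u : En N → ℝ) : Prop where
  c1 : ContDiff ℝ 1 u
  g : Integrable (fun x => ‖gradient u x‖ ^ 2) (kap N)
  l2 : Integrable (fun x => u x ^ 2) (kap N)

def Qn {N : ℕ} (u : En N → ℝ) : ℝ := ∫ x, (‖gradient u x‖ ^ 2 + u x ^ 2) ∂(kap N)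

lemma H1.int {N : ℕ} {u : En N → ℝ} (h : H1 u) :
    Integrable (fun x => ‖gradient u x‖ ^ 2 + u x ^ 2) (kap N) := h.g.add h.l2

lemma Qn_nonneg {N : ℕ} (u : En N → ℝ) : 0 ≤ Qn u := integral_nonneg (fun x => by positivity)

lemma H1.of_cs {N : ℕ} {u : En N → ℝ} (h : ContDiff ℝ 1 u) (hs : HasCompactSupport u) : H1 u := by
  refine ⟨h, ?_, ?_⟩
  · apply Continuous.integrable_of_hasCompactSupport
    · exact ((grad_cont h).norm.pow 2)
    · have : HasCompactSupport (fderiv ℝ u) := hs.fderiv ℝ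
      apply this.mono
      intro x hx
      simp only [Function.mem_support, ne_eq] at *
      rw [norm_grad] at hx
      intro h0; apply hx; rw [h0]; simp
  · apply Continuous.integrable_of_hasCompactSupport
    · exact h.continuous.pow 2
    · apply hs.mono
      intro x hx
      simp only [Function.mem_support, ne_eq] at *
      intro h0; apply hx; rw [h0]; simp

/-- cutoffs with uniformly bounded gradients -/
lemma exists_cutoff (N : ℕ) : ∃ C : ℝ, 0 ≤ C ∧ ∃ χ : ℕ → En N → ℝ, ∀ n, ContDiff ℝ 1 (χ n) ∧
    HasCompactSupport (χ n) ∧ (∀ x, 0 ≤ χ n x ∧ χ n x ≤ 1) ∧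
    (∀ x, ‖x‖ ≤ n + 1 → χ n x = 1) ∧ (∀ x, ‖gradient (χ n) x‖ ≤ C / (n + 1)) := by
  let η : ContDiffBump (0 : En N) := ⟨1, 2, by norm_num, by norm_num⟩
  have hη1 : ContDiff ℝ 1 (η : En N → ℝ) := η.contDiff
  obtain ⟨C, hC⟩ := (grad_cont hη1).bounded_above_of_compact_support (by
      have : HasCompactSupport (fderiv ℝ (η : En N → ℝ)) := η.hasCompactSupport.fderiv ℝ
      apply this.mono
      intro x hx
      simp only [Function.mem_support, ne_eq] at *
      intro h0; apply hx
      rw [← norm_eq_zero, norm_grad, h0]; simp)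
  refine ⟨C, le_trans (norm_nonneg _) (hC 0), fun n x => η ((n + 1 : ℝ)⁻¹ • x), ?_⟩
  intro n
  have hn : (0 : ℝ) < n + 1 := by positivity
  refine ⟨hη1.comp (by fun_prop), ?_, fun x => ⟨η.nonneg, η.le_one⟩, ?_, ?_⟩
  · exact η.hasCompactSupport.comp_smul (by positivity)
  · intro x hx
    apply η.one_of_mem_closedBall
    rw [mem_closedBall_zero_iff, norm_smul, norm_inv, Real.norm_of_nonneg hn.le]
    show _ ≤ (1 : ℝ)
    rw [inv_mul_le_iff₀ hn]; linarith
  · intro x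
    rw [norm_grad]
    have h1 : HasFDerivAt (fun x : En N => η ((n + 1 : ℝ)⁻¹ • x))
        ((fderiv ℝ (η : En N → ℝ) ((n + 1 : ℝ)⁻¹ • x)).comp ((n + 1 : ℝ)⁻¹ • ContinuousLinearMap.id ℝ (En N))) x := by
      exact HasFDerivAt.comp (g := (η : En N → ℝ)) x
        (hη1.differentiable (by simp) _).hasFDerivAt ((n + 1 : ℝ)⁻¹ • ContinuousLinearMap.id ℝ (En N)).hasFDerivAt
    rw [h1.fderiv]
    simp only [ContinuousLinearMap.comp_smul, ContinuousLinearMap.comp_id]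
    rw [norm_smul, norm_inv, Real.norm_of_nonneg hn.le, ← norm_grad, div_eq_inv_mul]
    gcongr
    exact hC _


lemma twoStar_gt {N : ℕ} (hN : 3 ≤ N) : 2 < twoStar N := by
  unfold twoStar
  have : (3 : ℝ) ≤ N := by exact_mod_cast hN
  rw [lt_div_iff₀ (by linarith)]
  linarith

lemma twoStar_ratio {N : ℕ} (hN : 3 ≤ N) : (twoStar N - 2) / twoStar N = 2 / N := by
  unfold twoStar
  have : (3 : ℝ) ≤ N := by exact_mod_cast hN
  have h2 : (N : ℝ) - 2 ≠ 0 := by linarith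
  field_simp
  ring

lemma Qn_smul {N : ℕ} {u : En N → ℝ} (c : ℝ) (h : ContDiff ℝ 1 u) :
    Qn (fun y => c * u y) = c ^ 2 * Qn u := by
  unfold Qn
  rw [← integral_const_mul]
  congr 1; ext x
  rw [grad_smul c h, norm_smul, mul_pow]
  simp only [Real.norm_eq_abs, sq_abs]
  ring

lemma sob_smooth {N : ℕ} (hN : 3 ≤ N) {u : En N → ℝ} (h : ContDiff ℝ (⊤ : ℕ∞) u)
    (hs : HasCompactSupport u) :
    Sconst N * (∫ x, |u x| ^ twoStar N ∂(kap N)) ^ (2 / twoStar N) ≤ Qn u := by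
  have hp := twoStar_gt hN
  set p := twoStar N
  set I := ∫ x, |u x| ^ p ∂(kap N) with hI
  have hI0 : 0 ≤ I := integral_nonneg (fun x => by positivity)
  have h1 : ContDiff ℝ 1 u := h.of_le (by exact_mod_cast le_top)
  rcases hI0.eq_or_lt with h0 | h0
  · rw [← h0, Real.zero_rpow (by positivity), mul_zero]; exact Qn_nonneg u
  · set t := I ^ (-(1 / p)) with ht
    have htp : 0 < t := by positivity
    have key : Sconst N ≤ t ^ 2 * Qn u := by
      apply csInf_le
      · refine ⟨0, ?_⟩
        rintro y ⟨v, -, -, -, rfl⟩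
        apply integral_nonneg
        intro x
        have := Kw_pos x
        positivity
      · refine ⟨fun y => t * u y, contDiff_const.mul h, hs.mul_left, ?_, ?_⟩
        · rw [← kap_integral (fun x => |t * u x| ^ twoStar N)]
          have : ∀ x, |t * u x| ^ p = t ^ p * |u x| ^ p := by
            intro x
            rw [abs_mul, abs_of_pos htp, Real.mul_rpow htp.le (abs_nonneg _)]
          show ∫ x, |t * u x| ^ p ∂(kap N) = 1
          simp_rw [this]
          rw [integral_const_mul, ← hI, ht, ← Real.rpow_mul hI0]
          have : -(1 / p) * p = -1 := by field_simp
          rw [this, Real.rpow_neg_one, inv_mul_cancel₀ h0.ne']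
        · rw [← Qn_smul t h1]
          unfold Qn
          rw [kap_integral]
    have : t ^ 2 = (I ^ (2 / p))⁻¹ := by
      rw [ht, ← Real.rpow_natCast, ← Real.rpow_mul hI0, ← Real.rpow_neg hI0]
      congr 1; push_cast; ring
    rw [this] at key
    have hpos : 0 < I ^ (2 / p) := by positivity
    calc Sconst N * I ^ (2 / p) ≤ ((I ^ (2 / p))⁻¹ * Qn u) * I ^ (2 / p) := by gcongr
      _ = Qn u := by field_simp

lemma mollify {N : ℕ} {w : En N → ℝ} (h : ContDiff ℝ 1 w) (hs : HasCompactSupport w)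
    (ε : ℝ) (hε : 0 < ε) : ∃ v : En N → ℝ, ContDiff ℝ (⊤ : ℕ∞) v ∧ HasCompactSupport v ∧
      (∀ x, |v x - w x| ≤ ε) ∧ (∀ x, ‖gradient v x - gradient w x‖ ≤ ε) ∧
      (∀ x ∉ Metric.cthickening 1 (tsupport w), v x = 0 ∧ gradient v x = 0) := by
  have uc1 : UniformContinuous w := h.continuous.uniformContinuous_of_tendsto_cocompact hs.is_zero_at_infty
  have hc2 : Continuous (fderiv ℝ w) := h.continuous_fderiv (by simp)
  have uc2 : UniformContinuous (fderiv ℝ w) :=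
    hc2.uniformContinuous_of_tendsto_cocompact (hs.fderiv ℝ).is_zero_at_infty
  rw [Metric.uniformContinuous_iff] at uc1 uc2
  obtain ⟨d1, hd1, h1⟩ := uc1 ε hε
  obtain ⟨d2, hd2, h2⟩ := uc2 ε hε
  set d := min (min d1 d2) 1 with hd
  have hdp : 0 < d := by positivity
  let φ : ContDiffBump (0 : En N) := ⟨d / 2, d, by positivity, by linarith⟩
  have hφ : φ.rOut = d := rfl
  let v := convolution (φ.normed volume) w (ContinuousLinearMap.lsmul ℝ ℝ) volume
  have hv0 : ∀ x ∉ Metric.cthickening 1 (tsupport w), v x = 0 := by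
    intro x hx
    have hz : ∀ y ∈ Metric.ball x d, w y = 0 := by
      intro y hy
      by_contra hne
      apply hx
      apply Metric.mem_cthickening_of_dist_le x y 1 _ (subset_tsupport _ hne)
      rw [Metric.mem_ball, dist_comm] at hy
      exact hy.le.trans (min_le_right _ _)
    have hwx : w x = 0 := hz x (Metric.mem_ball_self hdp)
    have := ContDiffBump.dist_normed_convolution_le (φ := φ) (μ := volume) (g := w) (x₀ := x) (ε := 0)
      h.continuous.aestronglyMeasurable (by
        intro y hy
        rw [hφ] at hy
        rw [hz y hy, hwx, dist_self])
    rw [hwx] at this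
    exact dist_le_zero.1 this
  have hvs : ContDiff ℝ (⊤ : ℕ∞) v := by
    apply HasCompactSupport.contDiff_convolution_left
    · exact φ.hasCompactSupport_normed
    · exact φ.contDiff_normed
    · exact h.continuous.locallyIntegrable
  have hvfd : ∀ x, fderiv ℝ v x = convolution (φ.normed volume) (fderiv ℝ w) (ContinuousLinearMap.lsmul ℝ ℝ) volume x := by
    intro x
    have := HasCompactSupport.hasFDerivAt_convolution_right (𝕜 := ℝ) (μ := (volume : Measure (En N))) (f := φ.normed volume) (ContinuousLinearMap.lsmul ℝ ℝ) hs
      (φ.continuous_normed.locallyIntegrable) h x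
    rw [this.fderiv]
    rfl
  refine ⟨v, hvs, ?_, ?_, ?_, ?_⟩
  · apply HasCompactSupport.intro (K := Metric.cthickening 1 (tsupport w))
    · exact IsCompact.cthickening hs
    · exact hv0
  · intro x
    rw [← Real.dist_eq]
    apply ContDiffBump.dist_normed_convolution_le h.continuous.aestronglyMeasurable
    intro y hy
    rw [hφ, Metric.mem_ball] at hy
    exact (h1 (lt_of_lt_of_le hy (by rw [hd]; exact (min_le_left _ _).trans (min_le_left _ _)))).le
  · intro x
    have : gradient v x - gradient w x = (InnerProductSpace.toDual ℝ (En N)).symm (fderiv ℝ v x - fderiv ℝ w x) := by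
      unfold gradient; rw [map_sub]
    rw [this, LinearIsometryEquiv.norm_map, hvfd, ← dist_eq_norm]
    apply ContDiffBump.dist_normed_convolution_le hc2.aestronglyMeasurable
    intro y hy
    rw [hφ, Metric.mem_ball] at hy
    exact (h2 (lt_of_lt_of_le hy (by rw [hd]; exact (min_le_left _ _).trans (min_le_right _ _)))).le
  · intro x hx
    refine ⟨hv0 x hx, ?_⟩
    have : v =ᶠ[𝓝 x] fun _ => 0 := by
      filter_upwards [Metric.isClosed_cthickening.isOpen_compl.mem_nhds hx] with y hy
      exact hv0 y hy
    rw [this.gradient_eq]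
    simp


lemma grad_zero_off {N : ℕ} {w : En N → ℝ} {x : En N} (hx : x ∉ tsupport w) : gradient w x = 0 := by
  have : w =ᶠ[𝓝 x] fun _ => 0 := by
    filter_upwards [(isClosed_tsupport w).isOpen_compl.mem_nhds hx] with y hy
    exact image_eq_zero_of_notMem_tsupport hy
  rw [this.gradient_eq]
  simp

lemma sob_cs {N : ℕ} (hN : 3 ≤ N) {w : En N → ℝ} (h : ContDiff ℝ 1 w)
    (hs : HasCompactSupport w) :
    Sconst N * (∫ x, |w x| ^ twoStar N ∂(kap N)) ^ (2 / twoStar N) ≤ Qn w := by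
  have hp := twoStar_gt hN
  have := fun k : ℕ => mollify h hs (1 / ((k : ℝ) + 1)) (by positivity)
  choose v hv1 hv2 hv3 hv4 hv5 using this
  set D := Metric.cthickening 1 (tsupport w) with hD
  have hDc : IsCompact D := IsCompact.cthickening hs
  have hDw : ∀ x ∉ D, x ∉ tsupport w := fun x hx hx' => hx (Metric.self_subset_cthickening _ hx')
  obtain ⟨C, hC⟩ := h.continuous.bounded_above_of_compact_support hs
  obtain ⟨C', hC'⟩ := (grad_cont h).bounded_above_of_compact_support (f := gradient w) (by
    apply HasCompactSupport.intro hs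
    intro x hx; exact grad_zero_off hx)
  have hC0 : 0 ≤ C := (norm_nonneg _).trans (hC 0)
  have hC0' : 0 ≤ C' := (norm_nonneg _).trans (hC' 0)
  have hk : ∀ k : ℕ, 1 / ((k : ℝ) + 1) ≤ 1 := by
    intro k; rw [div_le_one (by positivity)]; linarith [(Nat.cast_nonneg k : (0 : ℝ) ≤ k)]
  have hvb : ∀ k x, |v k x| ≤ C + 1 := by
    intro k x
    have h1 := hv3 k x
    have h2 := hC x
    rw [Real.norm_eq_abs] at h2
    have := abs_add_le (v k x - w x) (w x)
    simp only [sub_add_cancel] at this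
    linarith [hk k]
  have hgb : ∀ k x, ‖gradient (v k) x‖ ≤ C' + 1 := by
    intro k x
    have := norm_add_le (gradient (v k) x - gradient w x) (gradient w x)
    simp only [sub_add_cancel] at this
    linarith [hk k, hv4 k x, hC' x]
  have hlim : Tendsto (fun k : ℕ => 1 / ((k : ℝ) + 1)) atTop (𝓝 0) := tendsto_one_div_add_atTop_nhds_zero_nat
  have hvl : ∀ x, Tendsto (fun k => v k x) atTop (𝓝 (w x)) := by
    intro x
    rw [tendsto_iff_norm_sub_tendsto_zero]
    exact squeeze_zero (fun _ => norm_nonneg _) (fun k => hv3 k x) hlim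
  have hgl : ∀ x, Tendsto (fun k => gradient (v k) x) atTop (𝓝 (gradient w x)) := by
    intro x
    rw [tendsto_iff_norm_sub_tendsto_zero]
    exact squeeze_zero (fun _ => norm_nonneg _) (fun k => hv4 k x) hlim
  have hintD : ∀ c : ℝ, Integrable (D.indicator (fun _ => c)) (kap N) := by
    intro c
    rw [integrable_indicator_iff hDc.measurableSet]
    exact integrableOn_const hDc.measure_lt_top.ne
  have hvc1 : ∀ k, ContDiff ℝ 1 (v k) := fun k => (hv1 k).of_le (by exact_mod_cast le_top)
  have L1 : Tendsto (fun k => ∫ x, |v k x| ^ twoStar N ∂(kap N)) atTop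
      (𝓝 (∫ x, |w x| ^ twoStar N ∂(kap N))) := by
    apply tendsto_integral_of_dominated_convergence (D.indicator (fun _ => (C + 1) ^ twoStar N))
    · intro k
      exact ((hvc1 k).continuous.abs.rpow_const (fun x => Or.inr (by linarith))).aestronglyMeasurable
    · exact hintD _
    · intro k
      apply Eventually.of_forall
      intro x
      rw [Real.norm_of_nonneg (by positivity)]
      by_cases hx : x ∈ D
      · rw [Set.indicator_of_mem hx]
        exact Real.rpow_le_rpow (abs_nonneg _) (hvb k x) (by linarith)
      · rw [Set.indicator_of_notMem hx, (hv5 k x hx).1, abs_zero, Real.zero_rpow (by linarith)]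
    · apply Eventually.of_forall
      intro x
      exact ((hvl x).abs).rpow_const (Or.inr (by linarith))
  have L2 : Tendsto (fun k => Qn (v k)) atTop (𝓝 (Qn w)) := by
    apply tendsto_integral_of_dominated_convergence (D.indicator (fun _ => (C' + 1) ^ 2 + (C + 1) ^ 2))
    · intro k
      exact (((grad_cont (hvc1 k)).norm.pow 2).add ((hvc1 k).continuous.pow 2)).aestronglyMeasurable
    · exact hintD _
    · intro k
      apply Eventually.of_forall
      intro x
      rw [Real.norm_of_nonneg (by positivity)]
      by_cases hx : x ∈ D
      · rw [Set.indicator_of_mem hx]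
        have h1 := hvb k x
        have h2 := hgb k x
        rw [← sq_abs (v k x)]
        gcongr
      · rw [Set.indicator_of_notMem hx, (hv5 k x hx).1, (hv5 k x hx).2]; simp
    · apply Eventually.of_forall
      intro x
      exact ((hgl x).norm.pow 2).add ((hvl x).pow 2)
  refine le_of_tendsto_of_tendsto' ((L1.rpow_const (Or.inr (by positivity))).const_mul _) L2 ?_
  intro k
  exact sob_smooth hN (hv1 k) (hv2 k)

lemma cutoff_seq {N : ℕ} {u : En N → ℝ} (h : H1 u) : ∃ w : ℕ → En N → ℝ,
    (∀ n, ContDiff ℝ 1 (w n) ∧ HasCompactSupport (w n) ∧ ∀ x ∈ Metric.closedBall (0 : En N) n, w n x = u x)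
    ∧ Tendsto (fun n => Qn (w n)) atTop (𝓝 (Qn u)) := by
  obtain ⟨C, hC, χ, hχ⟩ := exists_cutoff N
  have hc1 : ∀ n, ContDiff ℝ 1 (fun x => χ n x * u x) := fun n => (hχ n).1.mul h.c1
  refine ⟨fun n x => χ n x * u x, fun n => ⟨hc1 n, (hχ n).2.1.mul_right, ?_⟩, ?_⟩
  · intro x hx
    rw [mem_closedBall_zero_iff] at hx
    simp only
    rw [(hχ n).2.2.2.1 x (by linarith), one_mul]
  · apply tendsto_integral_of_dominated_convergence
      (fun x => (2 * ‖gradient u x‖ ^ 2 + 2 * C ^ 2 * u x ^ 2) + u x ^ 2)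
    · intro k
      exact (((grad_cont (hc1 k)).norm.pow 2).add ((hc1 k).continuous.pow 2)).aestronglyMeasurable
    · exact ((h.g.const_mul 2).add (h.l2.const_mul _)).add h.l2
    · intro n
      apply Eventually.of_forall
      intro x
      rw [Real.norm_of_nonneg (by positivity), grad_mul (hχ n).1 h.c1]
      obtain ⟨h0, h1⟩ := (hχ n).2.2.1 x
      have hg := (hχ n).2.2.2.2 x
      have hCn : C / (n + 1) ≤ C := div_le_self hC (by linarith [(Nat.cast_nonneg n : (0 : ℝ) ≤ n)])
      have hn : ‖χ n x • gradient u x + u x • gradient (χ n) x‖ ≤ ‖gradient u x‖ + |u x| * C := by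
        apply (norm_add_le _ _).trans
        rw [norm_smul, norm_smul, Real.norm_of_nonneg h0, Real.norm_eq_abs]
        gcongr
        · exact mul_le_of_le_one_left (norm_nonneg _) h1
        · linarith
      have e1 : ‖χ n x • gradient u x + u x • gradient (χ n) x‖ ^ 2 ≤ (‖gradient u x‖ + |u x| * C) ^ 2 := by gcongr
      have e2 : (χ n x * u x) ^ 2 ≤ u x ^ 2 := by
        rw [mul_pow]
        exact mul_le_of_le_one_left (by positivity) (pow_le_one₀ h0 h1)
      have e3 : (|u x| * C) ^ 2 = C ^ 2 * u x ^ 2 := by rw [mul_pow, sq_abs]; ring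
      nlinarith [sq_nonneg (‖gradient u x‖ - |u x| * C)]
    · apply Eventually.of_forall
      intro x
      apply tendsto_const_nhds.congr'
      obtain ⟨n0, hn0⟩ := exists_nat_gt ‖x‖
      filter_upwards [eventually_ge_atTop n0] with n hn
      have hn' : ‖x‖ < n := lt_of_lt_of_le hn0 (by exact_mod_cast hn)
      have : (fun x => χ n x * u x) =ᶠ[𝓝 x] u := by
        have : Metric.ball (0 : En N) n ∈ 𝓝 x := Metric.isOpen_ball.mem_nhds (by simpa using hn')
        filter_upwards [this] with y hy
        rw [mem_ball_zero_iff] at hy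
        rw [(hχ n).2.2.2.1 y (by linarith), one_mul]
      rw [this.gradient_eq, this.eq_of_nhds]

lemma cover_bound {N : ℕ} {F : En N → ℝ} (hF : Continuous F) (h0 : ∀ x, 0 ≤ F x) {B : ℕ → ℝ} {b : ℝ}
    (hB : Tendsto B atTop (𝓝 b)) (h : ∀ n : ℕ, ∫ x in Metric.closedBall (0 : En N) n, F x ∂(kap N) ≤ B n) :
    Integrable F (kap N) ∧ ∫ x, F x ∂(kap N) ≤ b := by
  have hco : AECover (kap N) atTop (fun n : ℕ => Metric.closedBall (0 : En N) n) :=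
    aecover_closedBall tendsto_natCast_atTop_atTop
  have hintg : Integrable F (kap N) := by
    apply hco.integrable_of_integral_norm_bounded (b + 1)
    · intro n
      exact hF.continuousOn.integrableOn_compact (isCompact_closedBall _ _)
    · filter_upwards [hB.eventually (gt_mem_nhds (lt_add_one b))] with n hn
      simp_rw [Real.norm_of_nonneg (h0 _)]
      exact (h n).trans hn.le
  refine ⟨hintg, ?_⟩
  exact le_of_tendsto_of_tendsto' (hco.integral_tendsto_of_countably_generated hintg) hB h

lemma sobolev {N : ℕ} (hN : 3 ≤ N) (hS : 0 < Sconst N) {u : En N → ℝ} (h : H1 u) :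
    Integrable (fun x => |u x| ^ twoStar N) (kap N) ∧
    Sconst N * (∫ x, |u x| ^ twoStar N ∂(kap N)) ^ (2 / twoStar N) ≤ Qn u := by
  have hp := twoStar_gt hN
  obtain ⟨w, hw, hQ⟩ := cutoff_seq h
  set p := twoStar N
  have hpow : ∀ I Q : ℝ, 0 ≤ I → 0 ≤ Q → (Sconst N * I ^ (2 / p) ≤ Q ↔ I ≤ (Q / Sconst N) ^ (p / 2)) := by
    intro I Q hI hQ
    rw [← le_div_iff₀' hS]
    have e : I = (I ^ (2 / p)) ^ (p / 2) := by
      rw [← Real.rpow_mul hI]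
      have : 2 / p * (p / 2) = 1 := by field_simp
      rw [this, Real.rpow_one]
    conv_rhs => rw [e]
    rw [Real.rpow_le_rpow_iff (by positivity) (by positivity) (by positivity)]
  have hB : Tendsto (fun n => (Qn (w n) / Sconst N) ^ (p / 2)) atTop (𝓝 ((Qn u / Sconst N) ^ (p / 2))) :=
    (hQ.div_const _).rpow_const (Or.inr (by positivity))
  have := cover_bound (F := fun x => |u x| ^ p)
    (h.c1.continuous.abs.rpow_const (fun x => Or.inr (by linarith))) (fun x => by positivity) hB (by
      intro n
      have hwi : Integrable (fun x => |w n x| ^ p) (kap N) := by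
        apply Continuous.integrable_of_hasCompactSupport
        · exact ((hw n).1.continuous.abs.rpow_const (fun x => Or.inr (by linarith)))
        · apply HasCompactSupport.intro (hw n).2.1
          intro x hx
          rw [image_eq_zero_of_notMem_tsupport hx, abs_zero, Real.zero_rpow (by linarith)]
      calc _ = ∫ x in Metric.closedBall (0 : En N) n, |w n x| ^ p ∂(kap N) := by
            apply setIntegral_congr_fun measurableSet_closedBall
            intro x hx
            simp only
            rw [(hw n).2.2 x hx]
        _ ≤ ∫ x, |w n x| ^ p ∂(kap N) := setIntegral_le_integral hwi (Eventually.of_forall fun x => by positivity)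
        _ ≤ _ := by
            rw [← hpow _ _ (integral_nonneg fun x => by positivity) (Qn_nonneg _)]
            exact sob_cs hN (hw n).1 (hw n).2.1)
  refine ⟨this.1, ?_⟩
  rw [hpow _ _ (integral_nonneg fun x => by positivity) (Qn_nonneg _)]
  exact this.2


lemma hardy_cs {N : ℕ} {w : En N → ℝ} (h : ContDiff ℝ 1 w) (hs : HasCompactSupport w) :
    ∫ x, ‖x‖ ^ 2 * w x ^ 2 ∂(kap N) ≤ 16 * N * Qn w := by
  have hH := H1.of_cs h hs
  have hcs : ∀ F : En N → ℝ, Continuous F → (∀ x, w x = 0 → F x = 0) → Integrable F := by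
    intro F hF h0
    apply hF.integrable_of_hasCompactSupport
    apply HasCompactSupport.intro hs
    intro x hx
    exact h0 x (image_eq_zero_of_notMem_tsupport hx)
  have hcsk : ∀ F : En N → ℝ, Continuous F → (∀ x, w x = 0 → F x = 0) → Integrable F (kap N) := by
    intro F hF h0
    rw [kap_integrable]
    apply hcs _ (Kw_cont.mul hF)
    intro x hx; simp [h0 x hx]
  have hi : ∀ i : Fin N, ∫ x, (x i) ^ 2 * w x ^ 2 ∂(kap N) ≤ 16 * Qn w := by
    intro i
    set e : En N := EuclideanSpace.single i (1 : ℝ) with he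
    have hcoord : Continuous (fun x : En N => x i) := by fun_prop
    have hg : ∀ x : En N, HasFDerivAt (fun x : En N => x i * Kw x)
        ((x i) • (Kw x • ((1 / 4 : ℝ) • ((2 : ℝ) • innerSL ℝ x))) + Kw x • (EuclideanSpace.proj i : En N →L[ℝ] ℝ)) x := by
      intro x
      have h1 : HasFDerivAt (fun x : En N => x i) (EuclideanSpace.proj i : En N →L[ℝ] ℝ) x :=
        (EuclideanSpace.proj i : En N →L[ℝ] ℝ).hasFDerivAt
      have h2 : HasFDerivAt (fun x : En N => ‖x‖ ^ 2) ((2 : ℝ) • innerSL ℝ x) x := by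
        refine (hasStrictFDerivAt_norm_sq x).hasFDerivAt.congr_fderiv ?_
        ext y; simp
      have h3 : HasFDerivAt (fun x : En N => Kw x) (Kw x • ((1 / 4 : ℝ) • ((2 : ℝ) • innerSL ℝ x))) x := by
        have := (h2.const_mul (1 / 4 : ℝ)).exp
        have e : ∀ y : En N, Kw y = Real.exp (1 / 4 * ‖y‖ ^ 2) := by
          intro y; unfold Kw; congr 1; ring
        have e' : (fun y : En N => Kw y) = fun y => Real.exp (1 / 4 * ‖y‖ ^ 2) := funext e
        rw [e', e x]
        exact this
      exact h1.mul h3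
    have hgd : ∀ x : En N, fderiv ℝ (fun x : En N => x i * Kw x) x e = Kw x * (1 + (x i) ^ 2 / 2) := by
      intro x
      rw [(hg x).fderiv]
      have : inner ℝ x e = x i := by
        rw [he]; simp [EuclideanSpace.inner_single_right]
      simp only [FunLike.coe_add, Pi.add_apply, FunLike.coe_smul, Pi.smul_apply, innerSL_apply_apply, this, smul_eq_mul]
      have h2 : (EuclideanSpace.proj i : En N →L[ℝ] ℝ) e = 1 := by simp [he]
      rw [h2]
      ring
    have hfd : ∀ x, fderiv ℝ (fun x => w x ^ 2) x e = 2 * w x * inner ℝ (gradient w x) e := by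
      intro x
      have := (h.differentiable (by simp) x).hasFDerivAt.pow 2
      rw [this.fderiv, inner_gradient_left]
      simp
    have hgc := grad_cont h
    have ibp := integral_mul_fderiv_eq_neg_fderiv_mul_of_integrable (μ := (volume : Measure (En N)))
      (f := fun x => w x ^ 2) (g := fun x : En N => x i * Kw x) (v := e)
      (by
        simp_rw [hfd]
        apply hcs
        · have := Kw_cont (N := N)
          have := h.continuous
          fun_prop
        · intro x hx; simp [hx])
      (by
        simp_rw [hgd]
        apply hcs
        · have := Kw_cont (N := N)
          have := h.continuous
          fun_prop
        · intro x hx; simp [hx])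
      (by
        apply hcs
        · have := Kw_cont (N := N)
          have := h.continuous
          fun_prop
        · intro x hx; simp [hx])
      (fun x _ => ((h.differentiable (by simp)) x).pow 2)
      (fun x _ => (hg x).differentiableAt)
    simp_rw [hfd, hgd] at ibp
    have i1 : ∫ x, (1 + (x i) ^ 2 / 2) * w x ^ 2 ∂(kap N) = ∫ x, -(2 * w x * inner ℝ (gradient w x) e * x i) ∂(kap N) := by
      rw [kap_integral, kap_integral, ← integral_neg] at *
      refine Eq.trans (integral_congr_ae (Eventually.of_forall fun x => ?_))
        (ibp.trans (integral_congr_ae (Eventually.of_forall fun x => ?_)))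
      · simp only; ring
      · simp only; ring
    have hwc := h.continuous
    have i2 : ∫ x, -(2 * w x * inner ℝ (gradient w x) e * x i) ∂(kap N)
        ≤ ∫ x, ((1 / 4) * ((x i) ^ 2 * w x ^ 2) + 4 * (‖gradient w x‖ ^ 2 + w x ^ 2)) ∂(kap N) := by
      apply integral_mono
      · apply hcsk
        · fun_prop
        · intro x hx; simp [hx]
      · apply Integrable.add
        · apply hcsk
          · fun_prop
          · intro x hx; simp [hx]
        · exact hH.int.const_mul 4
      · intro x
        simp only
        have hn : |inner ℝ (gradient w x) e| ≤ ‖gradient w x‖ := by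
          have := abs_real_inner_le_norm (gradient w x) e
          rwa [he, PiLp.norm_single, norm_one, mul_one] at this
        have hn2 : (inner ℝ (gradient w x) e) ^ 2 ≤ ‖gradient w x‖ ^ 2 := by
          rw [← sq_abs]; gcongr
        nlinarith [sq_nonneg ((1 / 2) * (x i * w x) + 2 * inner ℝ (gradient w x) e), sq_nonneg (w x)]
    have i3 : Integrable (fun x : En N => (1 / 4) * ((x i) ^ 2 * w x ^ 2)) (kap N) := by
      apply hcsk
      · fun_prop
      · intro x hx; simp [hx]
    rw [integral_add i3 (hH.int.const_mul 4), integral_const_mul, integral_const_mul] at i2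
    have i4 : ∫ x, (1 / 2) * ((x i) ^ 2 * w x ^ 2) ∂(kap N) ≤ ∫ x, (1 + (x i) ^ 2 / 2) * w x ^ 2 ∂(kap N) := by
      apply integral_mono
      · apply hcsk
        · fun_prop
        · intro x hx; simp [hx]
      · apply hcsk
        · fun_prop
        · intro x hx; simp [hx]
      · intro x; simp only; nlinarith [sq_nonneg (w x)]
    rw [integral_const_mul] at i4
    unfold Qn
    linarith
  have : ∀ x : En N, ‖x‖ ^ 2 * w x ^ 2 = ∑ i, (x i) ^ 2 * w x ^ 2 := by
    intro x
    rw [EuclideanSpace.norm_sq_eq, Finset.sum_mul]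
    simp
  simp_rw [this]
  rw [integral_finsetSum]
  · calc _ ≤ ∑ i : Fin N, 16 * Qn w := Finset.sum_le_sum (fun i _ => hi i)
      _ = _ := by simp; ring
  · intro i _
    have hwc := h.continuous
    apply hcsk
    · fun_prop
    · intro x hx; simp [hx]

lemma hardy {N : ℕ} {u : En N → ℝ} (h : H1 u) :
    Integrable (fun x => ‖x‖ ^ 2 * u x ^ 2) (kap N) ∧
    ∫ x, ‖x‖ ^ 2 * u x ^ 2 ∂(kap N) ≤ 16 * N * Qn u := by
  obtain ⟨w, hw, hQ⟩ := cutoff_seq h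
  have huc := h.c1.continuous
  apply cover_bound (F := fun x => ‖x‖ ^ 2 * u x ^ 2) (by fun_prop) (fun x => by positivity) (hQ.const_mul _)
  intro n
  have hwc := (hw n).1.continuous
  calc _ = ∫ x in Metric.closedBall (0 : En N) n, ‖x‖ ^ 2 * w n x ^ 2 ∂(kap N) := by
            apply setIntegral_congr_fun measurableSet_closedBall
            intro x hx
            simp only
            rw [(hw n).2.2 x hx]
    _ ≤ ∫ x, ‖x‖ ^ 2 * w n x ^ 2 ∂(kap N) := by
        refine setIntegral_le_integral ?_ (Eventually.of_forall fun x => by positivity)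
        apply Continuous.integrable_of_hasCompactSupport (by fun_prop)
        apply HasCompactSupport.intro (hw n).2.1
        intro x hx
        rw [image_eq_zero_of_notMem_tsupport hx]; simp
    _ ≤ _ := hardy_cs (hw n).1 (hw n).2.1

lemma tail_bound {N : ℕ} {u : En N → ℝ} (h : H1 u) {R : ℝ} (hR : 0 < R) :
    ∫ x in (Metric.closedBall (0 : En N) R)ᶜ, u x ^ 2 ∂(kap N) ≤ 16 * N * Qn u / R ^ 2 := by
  obtain ⟨h1, h2⟩ := hardy h
  rw [le_div_iff₀ (by positivity), mul_comm, ← integral_const_mul]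
  refine le_trans ?_ h2
  refine le_trans ?_ (setIntegral_le_integral h1 (Eventually.of_forall fun x => by positivity)
    (s := (Metric.closedBall (0 : En N) R)ᶜ))
  apply setIntegral_mono_on (h.l2.integrableOn.const_mul _) h1.integrableOn measurableSet_closedBall.compl
  intro x hx
  have : R ≤ ‖x‖ := by
    simp at hx; exact hx.le
  gcongr

lemma sq_integral_le {α : Type*} [MeasurableSpace α] {μ : Measure α} [IsProbabilityMeasure μ] {f : α → ℝ}
    (h1 : Integrable f μ) (h2 : Integrable (fun x => f x ^ 2) μ) : (∫ x, f x ∂μ) ^ 2 ≤ ∫ x, f x ^ 2 ∂μ := by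
  set m := ∫ x, f x ∂μ with hm
  have : 0 ≤ ∫ x, (f x - m) ^ 2 ∂μ := integral_nonneg (fun x => by positivity)
  have e : ∀ x, (f x - m) ^ 2 = f x ^ 2 - (2 * m) * f x + m ^ 2 := fun x => by ring
  simp_rw [e] at this
  have h3 : Integrable (fun x => f x ^ 2 - (2 * m) * f x) μ := h2.sub (h1.const_mul _)
  rw [integral_add h3 (integrable_const _), integral_sub h2 (h1.const_mul _),
    integral_const_mul, ← hm] at this
  simp at this
  nlinarith

lemma translate_pt {N : ℕ} {w : En N → ℝ} (h : ContDiff ℝ 1 w) (x ξ : En N) :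
    (w (x + ξ) - w x) ^ 2 ≤ ‖ξ‖ ^ 2 * ∫ t in Set.Icc (0 : ℝ) 1, ‖gradient w (x + t • ξ)‖ ^ 2 := by
  have hgc := grad_cont h
  have hc : Continuous (fun t : ℝ => inner ℝ (gradient w (x + t • ξ)) ξ) := by fun_prop
  have hd : ∀ t ∈ Set.uIcc (0 : ℝ) 1, HasDerivAt (fun t : ℝ => w (x + t • ξ)) (inner ℝ (gradient w (x + t • ξ)) ξ) t := by
    intro t _
    have h1 : HasDerivAt (fun t : ℝ => x + t • ξ) ξ t := by
      simpa using ((hasDerivAt_id t).smul_const ξ).const_add x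
    have h2 := (h.differentiable (by simp) (x + t • ξ)).hasFDerivAt.comp_hasDerivAt t h1
    rw [inner_gradient_left]
    exact h2
  have ftc := intervalIntegral.integral_eq_sub_of_hasDerivAt hd (hc.intervalIntegrable 0 1)
  simp only [one_smul, zero_smul, add_zero] at ftc
  rw [← ftc, intervalIntegral.integral_of_le zero_le_one, ← integral_Icc_eq_integral_Ioc]
  have : IsProbabilityMeasure (volume.restrict (Set.Icc (0 : ℝ) 1)) := ⟨by simp⟩
  have hI : ∀ F : ℝ → ℝ, Continuous F → Integrable F (volume.restrict (Set.Icc (0 : ℝ) 1)) :=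
    fun F hF => hF.continuousOn.integrableOn_compact isCompact_Icc
  refine (sq_integral_le (hI _ hc) (hI _ (by fun_prop))).trans ?_
  rw [← integral_const_mul]
  apply integral_mono (hI _ (by fun_prop)) (hI _ (by fun_prop))
  intro t
  simp only
  have := abs_real_inner_le_norm (gradient w (x + t • ξ)) ξ
  rw [← sq_abs, ← mul_pow]
  rw [mul_comm] at this
  gcongr

lemma translate_est {N : ℕ} {w : En N → ℝ} (h : ContDiff ℝ 1 w) (ξ : En N) (A D : Set (En N))
    (hA : MeasurableSet A) (hD : MeasurableSet D) (hAD : ∀ x ∈ A, ∀ t ∈ Set.Icc (0 : ℝ) 1, x + t • ξ ∈ D) :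
    ∫⁻ x in A, ENNReal.ofReal ((w (x + ξ) - w x) ^ 2) ≤
      ENNReal.ofReal (‖ξ‖ ^ 2) * ∫⁻ x in D, ENNReal.ofReal (‖gradient w x‖ ^ 2) := by
  have hgc := grad_cont h
  have hmeas : Measurable (fun z : En N × ℝ => ENNReal.ofReal (‖gradient w (z.1 + z.2 • ξ)‖ ^ 2)) := by
    apply Measurable.ennreal_ofReal
    apply Continuous.measurable
    fun_prop
  calc _ ≤ ∫⁻ x in A, ENNReal.ofReal (‖ξ‖ ^ 2) * ∫⁻ t in Set.Icc (0 : ℝ) 1, ENNReal.ofReal (‖gradient w (x + t • ξ)‖ ^ 2) := by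
        apply lintegral_mono
        intro x
        beta_reduce
        rw [← ofReal_integral_eq_lintegral_ofReal, ← ENNReal.ofReal_mul (by positivity)]
        · exact ENNReal.ofReal_le_ofReal (translate_pt h x ξ)
        · apply ContinuousOn.integrableOn_compact isCompact_Icc
          exact Continuous.continuousOn (by fun_prop)
        · exact Eventually.of_forall (fun t => by positivity)
    _ = ENNReal.ofReal (‖ξ‖ ^ 2) * ∫⁻ x in A, ∫⁻ t in Set.Icc (0 : ℝ) 1, ENNReal.ofReal (‖gradient w (x + t • ξ)‖ ^ 2) := by
        rw [lintegral_const_mul]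
        exact hmeas.lintegral_prod_right'
    _ = ENNReal.ofReal (‖ξ‖ ^ 2) * ∫⁻ t in Set.Icc (0 : ℝ) 1, ∫⁻ x in A, ENNReal.ofReal (‖gradient w (x + t • ξ)‖ ^ 2) := by
        rw [lintegral_lintegral_swap]
        exact hmeas.aemeasurable
    _ ≤ ENNReal.ofReal (‖ξ‖ ^ 2) * ∫⁻ t in Set.Icc (0 : ℝ) 1, ∫⁻ x in D, ENNReal.ofReal (‖gradient w x‖ ^ 2) := by
        gcongr 1
        apply setLIntegral_mono measurable_const
        intro t ht
        rw [← lintegral_indicator hA, ← lintegral_indicator hD]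
        rw [← lintegral_add_right_eq_self (D.indicator fun x => ENNReal.ofReal (‖gradient w x‖ ^ 2)) (t • ξ)]
        apply lintegral_mono
        intro x
        beta_reduce
        by_cases hx : x ∈ A
        · rw [Set.indicator_of_mem hx, Set.indicator_of_mem (hAD x hx t ht)]
        · rw [Set.indicator_of_notMem hx]; exact zero_le
    _ = _ := by simp


lemma weak_sub {H : Type*} [NormedAddCommGroup H] [InnerProductSpace ℝ H] [CompleteSpace H]
    [TopologicalSpace.SeparableSpace H] (f : ℕ → H) (C : ℝ) (hC : ∀ n, ‖f n‖ ≤ C) :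
    ∃ σ : ℕ → ℕ, StrictMono σ ∧ ∀ y : H, ∃ l : ℝ, Tendsto (fun n => ⟪f (σ n), y⟫) atTop (𝓝 l) := by
  have hs := WeakDual.isSeqCompact_closedBall ℝ H 0 C
  let F : ℕ → WeakDual ℝ H := fun n => StrongDual.toWeakDual (InnerProductSpace.toDual ℝ H (f n))
  obtain ⟨z, -, σ, hσ, hz⟩ := hs (x := F) (by
    intro n
    simp [F]
    exact hC n)
  refine ⟨σ, hσ, fun y => ⟨z y, ?_⟩⟩
  have := ((WeakDual.eval_continuous y).tendsto z).comp hz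
  exact this

lemma vol_integrable {N : ℕ} {f : En N → ℝ} (h : Integrable f (kap N)) : Integrable f :=
  h.mono_measure vol_le_kap

lemma vol_integral_le {N : ℕ} {f : En N → ℝ} (h : Integrable f (kap N)) (h0 : ∀ x, 0 ≤ f x) :
    ∫ x, f x ≤ ∫ x, f x ∂(kap N) :=
  integral_mono_measure vol_le_kap (Eventually.of_forall h0) h

lemma weak_balls {N : ℕ} (u : ℕ → En N → ℝ) (hu : ∀ n, H1 (u n)) (C : ℝ) (hC : ∀ n, Qn (u n) ≤ C) :
    ∃ σ : ℕ → ℕ, StrictMono σ ∧ ∀ (x : En N) (r : ℝ), ∃ l : ℝ,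
      Tendsto (fun n => ∫ y in Metric.ball x r, u (σ n) y) atTop (𝓝 l) := by
  have : Fact ((2:ENNReal) ≠ ⊤) := ⟨by simp⟩
  have hm : ∀ n, MemLp (u n) 2 (volume : Measure (En N)) := by
    intro n
    rw [memLp_two_iff_integrable_sq (hu n).c1.continuous.aestronglyMeasurable]
    exact vol_integrable (hu n).l2
  let f : ℕ → Lp ℝ 2 (volume : Measure (En N)) := fun n => (hm n).toLp
  have hf : ∀ n, ‖f n‖ ≤ √C := by
    intro n
    apply Real.le_sqrt_of_sq_le
    rw [← real_inner_self_eq_norm_sq, L2.inner_def]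
    refine le_trans ?_ (hC n)
    have : ∫ x, ⟪(f n : En N → ℝ) x, (f n : En N → ℝ) x⟫ = ∫ x, u n x ^ 2 := by
      apply integral_congr_ae
      filter_upwards [(hm n).coeFn_toLp] with x hx
      simp only [f, hx]
      simp [sq]
    rw [this]
    refine (vol_integral_le (hu n).l2 (fun x => by positivity)).trans ?_
    exact integral_mono (hu n).l2 (hu n).int (fun x => by simp)
  obtain ⟨σ, hσ, h⟩ := weak_sub f _ hf
  refine ⟨σ, hσ, fun x r => ?_⟩
  have hfin : volume (Metric.ball x r) ≠ ⊤ := measure_ball_lt_top.ne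
  obtain ⟨l, hl⟩ := h (indicatorConstLp 2 Metric.isOpen_ball.measurableSet hfin (1 : ℝ))
  refine ⟨l, hl.congr fun n => ?_⟩
  rw [real_inner_comm, L2.inner_indicatorConstLp_one]
  apply setIntegral_congr_ae Metric.isOpen_ball.measurableSet
  filter_upwards [(hm (σ n)).coeFn_toLp] with y hy _
  exact hy

def avgm (N : ℕ) (r : ℝ) : Measure (En N) :=
  (volume (Metric.ball (0 : En N) r))⁻¹ • volume.restrict (Metric.ball 0 r)

lemma avgm_prob {N : ℕ} {r : ℝ} (hr : 0 < r) : IsProbabilityMeasure (avgm N r) := by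
  constructor
  simp only [avgm, Measure.smul_apply, Measure.restrict_apply MeasurableSet.univ, Set.univ_inter, smul_eq_mul]
  exact ENNReal.inv_mul_cancel (Metric.measure_ball_pos _ _ hr).ne' measure_ball_lt_top.ne

lemma avgm_integrable {N : ℕ} {r : ℝ} (hr : 0 < r) {f : En N → ℝ} (hf : Continuous f) :
    Integrable f (avgm N r) := by
  apply Integrable.smul_measure
  · apply IntegrableOn.mono_set (t := Metric.closedBall 0 r) _ Metric.ball_subset_closedBall
    exact hf.continuousOn.integrableOn_compact (isCompact_closedBall _ _)
  · simp [(Metric.measure_ball_pos _ _ hr).ne']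

lemma avgm_integral {N : ℕ} {r : ℝ} (f : En N → ℝ) (x : En N) :
    ∫ z, f (x + z) ∂(avgm N r) = (volume (Metric.ball (0 : En N) r)).toReal⁻¹ * ∫ y in Metric.ball x r, f y := by
  simp only [avgm, integral_smul_measure, ENNReal.toReal_inv, smul_eq_mul]
  congr 1
  rw [← integral_indicator Metric.isOpen_ball.measurableSet, ← integral_indicator Metric.isOpen_ball.measurableSet]
  rw [← integral_add_left_eq_self ((Metric.ball x r).indicator f) x]
  congr 1; ext z
  simp [Set.indicator]

lemma local_avg {N : ℕ} {w : En N → ℝ} (h : ContDiff ℝ 1 w) {r : ℝ} (hr : 0 < r) (A : Set (En N))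
    (hA : MeasurableSet A) :
    ∫⁻ x in A, ENNReal.ofReal (w x ^ 2) ≤
      2 * (∫⁻ x in A, ENNReal.ofReal ((∫ z, w (x + z) ∂(avgm N r)) ^ 2))
      + 2 * (ENNReal.ofReal (r ^ 2) * ∫⁻ x, ENNReal.ofReal (‖gradient w x‖ ^ 2)) := by
  have := avgm_prob (N := N) hr
  have hc := h.continuous
  have hm : Measurable (fun z : En N × En N => ENNReal.ofReal ((w (z.1 + z.2) - w z.1) ^ 2)) := by
    apply Measurable.ennreal_ofReal
    apply Continuous.measurable
    fun_prop
  have hsm : StronglyMeasurable (fun x => ∫ z, w (x + z) ∂(avgm N r)) := by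
    apply StronglyMeasurable.integral_prod_right' (f := fun z : En N × En N => w (z.1 + z.2))
    apply Continuous.stronglyMeasurable
    fun_prop
  have hpt : ∀ x, ENNReal.ofReal (w x ^ 2) ≤ 2 * ENNReal.ofReal ((∫ z, w (x + z) ∂(avgm N r)) ^ 2)
      + 2 * ∫⁻ z, ENNReal.ofReal ((w (x + z) - w x) ^ 2) ∂(avgm N r) := by
    intro x
    have i1 : Integrable (fun z => w (x + z)) (avgm N r) := avgm_integrable hr (by fun_prop)
    have i2 : Integrable (fun z => w (x + z) - w x) (avgm N r) := avgm_integrable hr (by fun_prop)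
    have i3 : Integrable (fun z => (w (x + z) - w x) ^ 2) (avgm N r) := avgm_integrable hr (by fun_prop)
    rw [← ofReal_integral_eq_lintegral_ofReal i3 (Eventually.of_forall fun z => by positivity)]
    have e2 : ∀ y : ℝ, 2 * ENNReal.ofReal y = ENNReal.ofReal (2 * y) := fun y => by
      rw [ENNReal.ofReal_mul (by norm_num)]; simp
    rw [e2, e2,
      ← ENNReal.ofReal_add (by positivity) (mul_nonneg (by norm_num) (integral_nonneg fun z => by positivity))]
    apply ENNReal.ofReal_le_ofReal
    have j := sq_integral_le i2 i3
    rw [integral_sub i1 (integrable_const _)] at j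
    simp only [integral_const, probReal_univ, one_smul] at j
    nlinarith [sq_nonneg (2 * (∫ z, w (x + z) ∂(avgm N r)) - w x)]
  calc _ ≤ ∫⁻ x in A, (2 * ENNReal.ofReal ((∫ z, w (x + z) ∂(avgm N r)) ^ 2)
      + 2 * ∫⁻ z, ENNReal.ofReal ((w (x + z) - w x) ^ 2) ∂(avgm N r)) := lintegral_mono hpt
    _ = 2 * (∫⁻ x in A, ENNReal.ofReal ((∫ z, w (x + z) ∂(avgm N r)) ^ 2))
       + 2 * ∫⁻ x in A, ∫⁻ z, ENNReal.ofReal ((w (x + z) - w x) ^ 2) ∂(avgm N r) := by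
        rw [lintegral_add_left, lintegral_const_mul, lintegral_const_mul]
        · exact hm.lintegral_prod_right'
        · exact (hsm.measurable.pow_const 2).ennreal_ofReal
        · exact (hsm.measurable.pow_const 2).ennreal_ofReal.const_mul _
    _ ≤ _ := by
      gcongr
      rw [lintegral_lintegral_swap hm.aemeasurable]
      calc _ ≤ ∫⁻ z, (ENNReal.ofReal (r ^ 2) * ∫⁻ x, ENNReal.ofReal (‖gradient w x‖ ^ 2)) ∂(avgm N r) := by
              apply lintegral_mono_ae
              have : ∀ᵐ z ∂(avgm N r), z ∈ Metric.ball (0 : En N) r := by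
                apply Measure.ae_smul_measure
                exact ae_restrict_mem Metric.isOpen_ball.measurableSet
              filter_upwards [this] with z hz
              refine (translate_est h z A Set.univ hA MeasurableSet.univ (fun _ _ _ _ => trivial)).trans ?_
              rw [Measure.restrict_univ]
              have : ‖z‖ ≤ r := by simpa using (Metric.mem_ball.1 hz).le
              gcongr
        _ = _ := by simp

lemma Qn_sub_le {N : ℕ} {u v : En N → ℝ} (hu : H1 u) (hv : H1 v) :
    H1 (fun x => u x - v x) ∧ Qn (fun x => u x - v x) ≤ 2 * Qn u + 2 * Qn v := by
  have hc := hu.c1.sub hv.c1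
  have e1 : ∀ x, ‖gradient (fun x => u x - v x) x‖ ^ 2 ≤ 2 * ‖gradient u x‖ ^ 2 + 2 * ‖gradient v x‖ ^ 2 := by
    intro x
    rw [grad_sub hu.c1 hv.c1]
    have := norm_sub_le (gradient u x) (gradient v x)
    have h0 := norm_nonneg (gradient u x - gradient v x)
    nlinarith [sq_nonneg (‖gradient u x‖ - ‖gradient v x‖)]
  have e2 : ∀ x, (u x - v x) ^ 2 ≤ 2 * u x ^ 2 + 2 * v x ^ 2 := by
    intro x; nlinarith [sq_nonneg (u x + v x)]
  have h1 : H1 (fun x => u x - v x) := by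
    refine ⟨hc, ?_, ?_⟩
    · refine ((hu.g.const_mul 2).add (hv.g.const_mul 2)).mono'
        ((grad_cont hc).norm.pow 2).aestronglyMeasurable (Eventually.of_forall fun x => ?_)
      rw [Real.norm_of_nonneg (by positivity)]; exact e1 x
    · refine ((hu.l2.const_mul 2).add (hv.l2.const_mul 2)).mono'
        (hc.continuous.pow 2).aestronglyMeasurable (Eventually.of_forall fun x => ?_)
      rw [Real.norm_of_nonneg (by positivity)]; exact e2 x
  refine ⟨h1, ?_⟩
  unfold Qn
  rw [← integral_const_mul, ← integral_const_mul, ← integral_add (hu.int.const_mul 2) (hv.int.const_mul 2)]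
  apply integral_mono h1.int ((hu.int.const_mul 2).add (hv.int.const_mul 2))
  intro x
  have := e1 x
  have := e2 x
  simp only [Pi.add_apply]
  linarith

lemma rellich {N : ℕ} (u : ℕ → En N → ℝ) (hu : ∀ n, H1 (u n)) (C : ℝ) (hC : ∀ n, Qn (u n) ≤ C) :
    ∃ σ : ℕ → ℕ, StrictMono σ ∧ ∀ δ > (0 : ℝ), ∃ M, ∀ m ≥ M, ∀ n ≥ M,
      ∫ x, (u (σ m) x - u (σ n) x) ^ 2 ∂(kap N) < δ := by
  obtain ⟨σ, hσ, hw⟩ := weak_balls u hu C hC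
  refine ⟨σ, hσ, fun δ hδ => ?_⟩
  have hC0 : 0 ≤ C := (Qn_nonneg _).trans (hC 0)
  set D := 4 * C with hD
  have hD0 : 0 ≤ D := by positivity
  let W : ℕ → ℕ → En N → ℝ := fun m n x => u (σ m) x - u (σ n) x
  have hW : ∀ m n, H1 (W m n) := fun m n => (Qn_sub_le (hu _) (hu _)).1
  have hQ : ∀ m n, Qn (W m n) ≤ D := fun m n => by
    have := (Qn_sub_le (hu (σ m)) (hu (σ n))).2
    have := hC (σ m)
    have := hC (σ n)
    have : Qn (W m n) ≤ 2 * Qn (u (σ m)) + 2 * Qn (u (σ n)) := (Qn_sub_le (hu (σ m)) (hu (σ n))).2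
    linarith
  have hL2 : ∀ m n, ∫ x, W m n x ^ 2 ∂(kap N) ≤ D := fun m n => by
    refine le_trans (integral_mono (hW m n).l2 (hW m n).int (fun x => by simp)) (hQ m n)
  have hG : ∀ m n, ∫ x, ‖gradient (W m n) x‖ ^ 2 ∂(kap N) ≤ D := fun m n => by
    refine le_trans (integral_mono (hW m n).g (hW m n).int (fun x => ?_)) (hQ m n)
    have := sq_nonneg (W m n x)
    simp only; linarith
  -- choose R
  obtain ⟨R, hR, hRt⟩ : ∃ R : ℝ, 0 < R ∧ 16 * N * D / R ^ 2 < δ / 3 := by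
    have : Tendsto (fun R : ℝ => 16 * N * D / R ^ 2) atTop (𝓝 0) :=
      tendsto_const_nhds.div_atTop (tendsto_pow_atTop (by norm_num))
    obtain ⟨R, h1, h2⟩ := ((this.eventually_lt_const (show 0 < δ / 3 by positivity)).and (eventually_gt_atTop 0)).exists
    exact ⟨R, h2, h1⟩
  set E := Real.exp (R ^ 2 / 4) with hE
  have hE0 : 0 < E := Real.exp_pos _
  obtain ⟨r, hr, hrt⟩ : ∃ r : ℝ, 0 < r ∧ E * (2 * (r ^ 2 * D)) < δ / 3 := by
    have : Tendsto (fun r : ℝ => E * (2 * (r ^ 2 * D))) (𝓝[>] 0) (𝓝 (E * (2 * (0 ^ 2 * D)))) := by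
      apply Tendsto.mono_left _ nhdsWithin_le_nhds
      apply Continuous.tendsto
      fun_prop
    simp only [ne_eq, OfNat.ofNat_ne_zero, not_false_eq_true, zero_pow, zero_mul, mul_zero] at this
    obtain ⟨r, h1, h2⟩ := ((this.eventually_lt_const (show 0 < δ / 3 by positivity)).and self_mem_nhdsWithin).exists
    exact ⟨r, h2, h1⟩
  have hprob := avgm_prob (N := N) hr
  set V := (volume (Metric.ball (0 : En N) r)).toReal with hV
  have hV0 : 0 < V := ENNReal.toReal_pos (Metric.measure_ball_pos _ _ hr).ne' measure_ball_lt_top.ne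
  let A : ℕ → ℕ → En N → ℝ := fun m n x => ∫ z, W m n (x + z) ∂(avgm N r)
  have hAm : ∀ m n, StronglyMeasurable (A m n) := by
    intro m n
    have := (hW m n).c1.continuous
    apply StronglyMeasurable.integral_prod_right' (f := fun z : En N × En N => W m n (z.1 + z.2))
    apply Continuous.stronglyMeasurable
    fun_prop
  have hAb : ∀ m n x, (A m n x) ^ 2 ≤ V⁻¹ * D := by
    intro m n x
    have hc := (hW m n).c1.continuous
    refine (sq_integral_le (avgm_integrable hr (by fun_prop)) (avgm_integrable hr (by fun_prop))).trans ?_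
    rw [avgm_integral (fun y => W m n y ^ 2)]
    gcongr
    refine (setIntegral_le_integral (vol_integrable (hW m n).l2) (Eventually.of_forall fun x => by positivity)).trans ?_
    exact (vol_integral_le (hW m n).l2 (fun x => by positivity)).trans (hL2 m n)
  have hA0 : ∀ x, Tendsto (fun p : ℕ × ℕ => A p.1 p.2 x) (atTop ×ˢ atTop) (𝓝 0) := by
    intro x
    obtain ⟨l, hl⟩ := hw x r
    have h1 : ∀ p : ℕ × ℕ, A p.1 p.2 x = V⁻¹ * (∫ y in Metric.ball x r, u (σ p.1) y) -
        V⁻¹ * (∫ y in Metric.ball x r, u (σ p.2) y) := by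
      intro p
      have c1 := (hu (σ p.1)).c1.continuous
      have c2 := (hu (σ p.2)).c1.continuous
      simp only [A, W]
      rw [integral_sub (avgm_integrable hr (by fun_prop)) (avgm_integrable hr (by fun_prop)),
        avgm_integral (u (σ p.1)), avgm_integral (u (σ p.2))]
    simp_rw [h1]
    have := ((hl.const_mul V⁻¹).comp (tendsto_fst (f := atTop) (g := (atTop : Filter ℕ)))).sub
      ((hl.const_mul V⁻¹).comp (tendsto_snd (f := (atTop : Filter ℕ)) (g := atTop)))
    simpa using this
  have hfin : IsFiniteMeasure (volume.restrict (Metric.closedBall (0 : En N) R)) :=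
    ⟨by simpa using measure_closedBall_lt_top⟩
  have hdct : Tendsto (fun p : ℕ × ℕ => ∫ x in Metric.closedBall (0 : En N) R, A p.1 p.2 x ^ 2)
      (atTop ×ˢ atTop) (𝓝 0) := by
    have := tendsto_integral_filter_of_dominated_convergence (μ := volume.restrict (Metric.closedBall (0 : En N) R))
      (l := (atTop : Filter ℕ) ×ˢ atTop) (F := fun p : ℕ × ℕ => fun x => A p.1 p.2 x ^ 2) (f := fun _ => (0 : ℝ))
      (fun _ => V⁻¹ * D) (Eventually.of_forall fun p => ((hAm p.1 p.2).pow 2).aestronglyMeasurable)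
      (Eventually.of_forall fun p => Eventually.of_forall fun x => by
        rw [Real.norm_of_nonneg (by positivity)]; exact hAb _ _ _) (integrable_const _)
      (Eventually.of_forall fun x => by simpa using (hA0 x).pow 2)
    simpa using this
  have hev := hdct.eventually_lt_const (show 0 < δ / (6 * E) by positivity)
  rw [prod_atTop_atTop_eq, eventually_atTop] at hev
  obtain ⟨⟨M1, M2⟩, hM⟩ := hev
  refine ⟨max M1 M2, fun m hm n hn => ?_⟩
  have hmn := hM (m, n) ⟨(le_max_left _ _).trans hm, (le_max_right _ _).trans hn⟩
  simp only at hmn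
  have hc := (hW m n).c1.continuous
  -- volume bound on ball
  have hAint : Integrable (fun x => A m n x ^ 2) (volume.restrict (Metric.closedBall (0 : En N) R)) := by
    refine (integrable_const (V⁻¹ * D)).mono' ((hAm m n).pow 2).aestronglyMeasurable (Eventually.of_forall fun x => ?_)
    rw [Real.norm_of_nonneg (by positivity)]; exact hAb _ _ _
  have hgv := vol_integrable (hW m n).g
  have hvol : ∫ x in Metric.closedBall (0 : En N) R, W m n x ^ 2 ≤
      2 * (∫ x in Metric.closedBall (0 : En N) R, A m n x ^ 2) + 2 * (r ^ 2 * D) := by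
    have := local_avg (hW m n).c1 hr (Metric.closedBall 0 R) measurableSet_closedBall
    rw [← ofReal_integral_eq_lintegral_ofReal (vol_integrable (hW m n).l2).integrableOn (Eventually.of_forall fun x => by positivity),
      ← ofReal_integral_eq_lintegral_ofReal hAint (Eventually.of_forall fun x => by positivity),
      ← ofReal_integral_eq_lintegral_ofReal hgv (Eventually.of_forall fun x => by positivity)] at this
    have i1 : 0 ≤ ∫ x in Metric.closedBall (0 : En N) R, A m n x ^ 2 := integral_nonneg fun x => by positivity
    have i2 : 0 ≤ ∫ x, ‖gradient (W m n) x‖ ^ 2 := integral_nonneg fun x => by positivity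
    have e2 : ∀ y : ℝ, 2 * ENNReal.ofReal y = ENNReal.ofReal (2 * y) := fun y => by
      rw [ENNReal.ofReal_mul (by norm_num)]; simp
    rw [← ENNReal.ofReal_mul (by positivity), e2, e2, ← ENNReal.ofReal_add (by positivity) (by positivity),
      ENNReal.ofReal_le_ofReal_iff (by positivity)] at this
    refine this.trans ?_
    have := (vol_integral_le (hW m n).g (fun x => by positivity)).trans (hG m n)
    gcongr
  have hkap : ∫ x in Metric.closedBall (0 : En N) R, W m n x ^ 2 ∂(kap N) ≤
      E * ∫ x in Metric.closedBall (0 : En N) R, W m n x ^ 2 := by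
    have hle : (kap N).restrict (Metric.closedBall 0 R) ≤
        ENNReal.ofReal E • volume.restrict (Metric.closedBall 0 R) := by
      rw [Measure.le_iff]
      intro s hs
      rw [Measure.restrict_apply hs, Measure.smul_apply, Measure.restrict_apply hs]
      exact kap_le_on_ball R _ Set.inter_subset_right
    refine (integral_mono_measure hle (Eventually.of_forall fun x => by positivity) ?_).trans ?_
    · exact (vol_integrable (hW m n).l2).integrableOn.smul_measure (by simp)
    · rw [integral_smul_measure, ENNReal.toReal_ofReal hE0.le, smul_eq_mul]
  have htail := tail_bound (hW m n) hR
  have htail2 : 16 * N * Qn (W m n) / R ^ 2 ≤ 16 * N * D / R ^ 2 := by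
    have := hQ m n
    gcongr
  have hsplit := integral_add_compl (measurableSet_closedBall (x := (0 : En N)) (ε := R)) (hW m n).l2
  change ∫ x, W m n x ^ 2 ∂(kap N) < δ
  have h6 : E * (2 * (∫ x in Metric.closedBall (0 : En N) R, A m n x ^ 2)) < δ / 3 := by
    rw [lt_div_iff₀ (by positivity)] at hmn
    linarith
  have h7 : E * ∫ x in Metric.closedBall (0 : En N) R, W m n x ^ 2 ≤
    E * (2 * (∫ x in Metric.closedBall (0 : En N) R, A m n x ^ 2) + 2 * (r ^ 2 * D)) := by gcongr
  linarith


structure Setup (N : ℕ) (p q β ν M₀ : ℝ) (W : En N → ℝ) (O : Set (En N)) (g G : En N → ℝ → ℝ) : Prop where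
  hN : 3 ≤ N
  hp : p = twoStar N
  hp2 : 2 < p
  hq1 : 1 < q
  hq2 : q < p - 1
  hβ : 0 < β
  hν : 0 < ν
  hM : 0 < M₀
  hW : Continuous W
  hWM : ∀ x, M₀ ≤ W x
  hO : IsOpen O
  hOb : Bornology.IsBounded O
  hOn : O.Nonempty
  hS : 0 < Sconst N
  g0 : ∀ x t, 0 ≤ g x t
  gout : ∀ x t, x ∉ O → 0 ≤ t → g x t ≤ ν * t
  gin : ∀ x t, x ∈ O → 0 ≤ t → g x t = β * t ^ q + t ^ (p - 1)
  G0 : ∀ x t, 0 ≤ t → 0 ≤ G x t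
  G1 : ∀ x t, 0 ≤ t → G x t ≤ g x t * t / 2
  G2 : ∀ x t, x ∈ O → 0 ≤ t → G x t ≤ g x t * t / (q + 1)
  gm : ∀ u : En N → ℝ, Continuous u → AEStronglyMeasurable (fun x => g x (u x)) (kap N)
  Gm : ∀ u : En N → ℝ, Continuous u → AEStronglyMeasurable (fun x => G x (u x)) (kap N)

/-- the squared weighted norm -/
def nW {N : ℕ} (W : En N → ℝ) (u : En N → ℝ) : ℝ := ∫ x, (‖gradient u x‖ ^ 2 + W x * u x ^ 2) ∂(kap N)

structure HW {N : ℕ} (W : En N → ℝ) (u : En N → ℝ) : Prop where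
  c1 : ContDiff ℝ 1 u
  int : Integrable (fun x => ‖gradient u x‖ ^ 2 + W x * u x ^ 2) (kap N)

def PD {N : ℕ} (W : En N → ℝ) (g : En N → ℝ → ℝ) (u φ : En N → ℝ) : ℝ :=
  (∫ x, (⟪gradient u x, gradient φ x⟫ + W x * u x * φ x) ∂(kap N)) - ∫ x, g x (u x) * φ x ∂(kap N)

namespace Setup
variable {N : ℕ} {p q β ν M₀ : ℝ} {W : En N → ℝ} {O : Set (En N)} {g G : En N → ℝ → ℝ}

lemma W0 (s : Setup N p q β ν M₀ W O g G) (x : En N) : 0 < W x := lt_of_lt_of_le s.hM (s.hWM x)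

lemma nW_nonneg (s : Setup N p q β ν M₀ W O g G) (u : En N → ℝ) : 0 ≤ nW W u :=
  integral_nonneg fun x => by have := (s.W0 x).le; positivity

lemma ig (s : Setup N p q β ν M₀ W O g G) {u : En N → ℝ} (h : HW W u) :
    Integrable (fun x => ‖gradient u x‖ ^ 2) (kap N) := by
  refine h.int.mono' ((grad_cont h.c1).norm.pow 2).aestronglyMeasurable (Eventually.of_forall fun x => ?_)
  rw [Real.norm_of_nonneg (by positivity)]
  have := mul_nonneg (s.W0 x).le (sq_nonneg (u x))
  linarith

lemma iw (s : Setup N p q β ν M₀ W O g G) {u : En N → ℝ} (h : HW W u) :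
    Integrable (fun x => W x * u x ^ 2) (kap N) := by
  refine h.int.mono' (s.hW.mul (h.c1.continuous.pow 2)).aestronglyMeasurable (Eventually.of_forall fun x => ?_)
  rw [Real.norm_of_nonneg (mul_nonneg (s.W0 x).le (sq_nonneg (u x)))]
  have := sq_nonneg (‖gradient u x‖)
  linarith

lemma toH1 (s : Setup N p q β ν M₀ W O g G) {u : En N → ℝ} (h : HW W u) : H1 u := by
  refine ⟨h.c1, s.ig h, ?_⟩
  refine ((s.iw h).const_mul M₀⁻¹).mono' (h.c1.continuous.pow 2).aestronglyMeasurable (Eventually.of_forall fun x => ?_)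
  rw [Real.norm_of_nonneg (by positivity), le_inv_mul_iff₀ s.hM]
  have := s.hWM x
  gcongr

lemma Qn_le (s : Setup N p q β ν M₀ W O g G) {u : En N → ℝ} (h : HW W u) : Qn u ≤ (1 + M₀⁻¹) * nW W u := by
  unfold Qn nW
  rw [← integral_const_mul]
  apply integral_mono (s.toH1 h).int (h.int.const_mul _)
  intro x
  have h1 : u x ^ 2 ≤ M₀⁻¹ * (W x * u x ^ 2) := by
    rw [le_inv_mul_iff₀ s.hM]
    have := s.hWM x
    gcongr
  have h2 := mul_nonneg (s.W0 x).le (sq_nonneg (u x))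
  have h3 := mul_nonneg (inv_nonneg.2 s.hM.le) (sq_nonneg (‖gradient u x‖))
  simp only
  nlinarith

lemma l2_le_Qn {N : ℕ} {u : En N → ℝ} (h : H1 u) : ∫ x, u x ^ 2 ∂(kap N) ≤ Qn u :=
  integral_mono h.l2 h.int (fun x => by simp)

/-- pointwise growth -/
lemma g_le (s : Setup N p q β ν M₀ W O g G) (x : En N) {t : ℝ} (ht : 0 ≤ t) :
    g x t ≤ (ν + β + 1) * (t + t ^ (p - 1)) := by
  have hp := s.hp2
  have hq := s.hq1
  have hq2 := s.hq2
  have h1 : 0 ≤ t ^ (p - 1) := Real.rpow_nonneg ht _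
  have hβ := s.hβ
  have hν := s.hν
  by_cases hx : x ∈ O
  · rw [s.gin x t hx ht]
    have : t ^ q ≤ t + t ^ (p - 1) := by
      rcases le_total t 1 with h | h
      · have : t ^ q ≤ t ^ (1 : ℝ) := by
          rcases ht.eq_or_lt with h0 | h0
          · rw [← h0, Real.zero_rpow (by linarith), Real.zero_rpow (by linarith)]
          · exact Real.rpow_le_rpow_of_exponent_ge h0 h hq.le
        rw [Real.rpow_one] at this; linarith
      · have : t ^ q ≤ t ^ (p - 1) := Real.rpow_le_rpow_of_exponent_le h hq2.le
        linarith
    nlinarith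
  · have := s.gout x t hx ht
    nlinarith

lemma rpow_split (s : Setup N p q β ν M₀ W O g G) {t : ℝ} (ht : 0 ≤ t) : t ^ (p - 1) * t = t ^ p := by
  have := s.hp2
  rw [← Real.rpow_add_one' ht (by linarith)]; congr 1; ring

lemma rpow_split2 (s : Setup N p q β ν M₀ W O g G) {t : ℝ} (ht : 0 ≤ t) : t ^ (p - 2) * t ^ 2 = t ^ p := by
  have := s.hp2
  rw [← Real.rpow_natCast t 2, ← Real.rpow_add' ht (by push_cast; linarith)]; congr 1; push_cast; ring

lemma young (s : Setup N p q β ν M₀ W O g G) {t r : ℝ} (ht : 0 ≤ t) (hr : 0 ≤ r) : t ^ (p - 1) * r ≤ t ^ p + r ^ p := by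
  have hp := s.hp2
  rcases le_total t r with h | h
  · have : t ^ (p - 1) * r ≤ r ^ (p - 1) * r := by
      gcongr
      linarith
    rw [s.rpow_split hr] at this
    have := Real.rpow_nonneg ht p
    linarith
  · have : t ^ (p - 1) * r ≤ t ^ (p - 1) * t := by
      gcongr
    rw [s.rpow_split ht] at this
    have := Real.rpow_nonneg hr p
    linarith

lemma ip (s : Setup N p q β ν M₀ W O g G) {u : En N → ℝ} (h : H1 u) :
    Integrable (fun x => |u x| ^ p) (kap N) := by
  rw [s.hp]; exact (sobolev s.hN s.hS h).1

lemma ip' (s : Setup N p q β ν M₀ W O g G) {u : En N → ℝ} (h : H1 u) (h0 : ∀ x, 0 ≤ u x) :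
    Integrable (fun x => u x ^ p) (kap N) := by
  have := s.ip h
  simpa only [abs_of_nonneg (h0 _)] using this

lemma sob (s : Setup N p q β ν M₀ W O g G) {u : En N → ℝ} (h : H1 u) :
    Sconst N * (∫ x, |u x| ^ p ∂(kap N)) ^ (2 / p) ≤ Qn u := by
  rw [s.hp]; exact (sobolev s.hN s.hS h).2

lemma igφ (s : Setup N p q β ν M₀ W O g G) {u φ : En N → ℝ} (hu : H1 u) (h0 : ∀ x, 0 ≤ u x) (hφ : H1 φ) :
    Integrable (fun x => g x (u x) * φ x) (kap N) := by
  have hK : 0 < ν + β + 1 := by have := s.hν; have := s.hβ; linarith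
  refine (((hu.l2.add hφ.l2).add ((s.ip' hu h0).add (s.ip hφ))).const_mul (ν + β + 1)).mono'
    ((s.gm u hu.c1.continuous).mul hφ.c1.continuous.aestronglyMeasurable) (Eventually.of_forall fun x => ?_)
  rw [norm_mul, Real.norm_of_nonneg (s.g0 _ _), Real.norm_eq_abs]
  simp only [Pi.add_apply]
  have h1 := s.g_le x (h0 x)
  have h2 := s.young (h0 x) (abs_nonneg (φ x))
  have h3 : u x * |φ x| ≤ u x ^ 2 + φ x ^ 2 := by
    rw [← sq_abs (φ x)]; nlinarith [sq_nonneg (u x - |φ x|), sq_nonneg (u x + |φ x|)]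
  calc g x (u x) * |φ x| ≤ ((ν + β + 1) * (u x + u x ^ (p - 1))) * |φ x| := by gcongr
    _ = (ν + β + 1) * (u x * |φ x| + u x ^ (p - 1) * |φ x|) := by ring
    _ ≤ _ := by gcongr

lemma iG (s : Setup N p q β ν M₀ W O g G) {u : En N → ℝ} (hu : H1 u) (h0 : ∀ x, 0 ≤ u x) :
    Integrable (fun x => G x (u x)) (kap N) := by
  refine ((s.igφ hu h0 hu).div_const 2).mono' (s.Gm u hu.c1.continuous) (Eventually.of_forall fun x => ?_)
  rw [Real.norm_of_nonneg (s.G0 _ _ (h0 x))]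
  exact s.G1 _ _ (h0 x)

lemma iE (s : Setup N p q β ν M₀ W O g G) {u φ : En N → ℝ} (hu : HW W u) (hφ : HW W φ) :
    Integrable (fun x => ⟪gradient u x, gradient φ x⟫ + W x * u x * φ x) (kap N) := by
  have hc1 := grad_cont hu.c1
  have hc2 := grad_cont hφ.c1
  have hc3 := hu.c1.continuous
  have hc4 := hφ.c1.continuous
  have hc5 := s.hW
  refine (hu.int.add hφ.int).mono' (Continuous.aestronglyMeasurable (by fun_prop)) (Eventually.of_forall fun x => ?_)
  simp only [Pi.add_apply]
  rw [Real.norm_eq_abs]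
  have h1 := abs_real_inner_le_norm (gradient u x) (gradient φ x)
  have h2 : |W x * u x * φ x| ≤ W x * (u x ^ 2 + φ x ^ 2) := by
    rw [mul_assoc, abs_mul, abs_of_pos (s.W0 x)]
    have := (s.W0 x).le
    gcongr
    rw [abs_le]; constructor <;> nlinarith [sq_nonneg (u x + φ x), sq_nonneg (u x - φ x)]
  have h3 := abs_add_le ⟪gradient u x, gradient φ x⟫ (W x * u x * φ x)
  nlinarith [sq_nonneg (‖gradient u x‖ - ‖gradient φ x‖), sq_nonneg (‖gradient u x‖ + ‖gradient φ x‖)]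

lemma PD_self (s : Setup N p q β ν M₀ W O g G) (u : En N → ℝ) :
    PD W g u u = nW W u - ∫ x, g x (u x) * u x ∂(kap N) := by
  unfold PD nW
  congr 2
  ext x
  rw [real_inner_self_eq_norm_sq]; ring

/-- step 3 -/
lemma energy (s : Setup N p q β ν M₀ W O g G) {u : En N → ℝ} (hu : HW W u) (h0 : ∀ x, 0 ≤ u x) :
    (1 / 2 - 1 / (q + 1)) * ∫ x in O, g x (u x) * u x ∂(kap N) ≤
      ((1 / 2) * nW W u - ∫ x, G x (u x) ∂(kap N)) - (1 / 2) * PD W g u u := by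
  have hH := s.toH1 hu
  have i1 := s.igφ hH h0 hH
  have i2 := s.iG hH h0
  rw [s.PD_self]
  have : ((1 / 2) * nW W u - ∫ x, G x (u x) ∂(kap N)) - (1 / 2) * (nW W u - ∫ x, g x (u x) * u x ∂(kap N)) =
    ∫ x, ((1 / 2) * (g x (u x) * u x) - G x (u x)) ∂(kap N) := by
    rw [integral_sub (i1.const_mul _) i2, integral_const_mul]; ring
  rw [this, ← integral_const_mul, ← integral_indicator s.hO.measurableSet]
  apply integral_mono
  · exact (i1.const_mul _).indicator s.hO.measurableSet
  · exact (i1.const_mul _).sub i2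
  · intro x
    simp only
    by_cases hx : x ∈ O
    · rw [Set.indicator_of_mem hx]
      have := s.G2 x _ hx (h0 x)
      have e : g x (u x) * u x / (q + 1) = 1 / (q + 1) * (g x (u x) * u x) := by ring
      rw [e] at this
      linarith
    · rw [Set.indicator_of_notMem hx]
      have := s.G1 x _ (h0 x)
      linarith

end Setup

namespace Setup
variable {N : ℕ} {p q β ν M₀ : ℝ} {W : En N → ℝ} {O : Set (En N)} {g G : En N → ℝ → ℝ}

lemma grad_cs {N : ℕ} {u : En N → ℝ} {x : En N} (hx : x ∉ tsupport u) : gradient u x = 0 := by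
  have : fderiv ℝ u x = 0 := by
    by_contra h
    exact hx (support_fderiv_subset ℝ h)
  rw [← norm_eq_zero, norm_grad, this, norm_zero]

lemma log_est (s : Setup N p q β ν M₀ W O g G) {v η : En N → ℝ} (hv : ContDiff ℝ 1 v) (hv0 : ∀ x, 0 ≤ v x)
    (hη : ContDiff ℝ 1 η) (hηs : HasCompactSupport η) (hη0 : ∀ x, 0 ≤ η x) (hη1 : ∀ x, η x ≤ 1)
    {e ε : ℝ} (he0 : 0 ≤ e) (hε : 0 < ε) (he1 : e ≤ 1) (heε : e ≤ ε ^ 2 / 8)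
    (hsup : ∀ φ : En N → ℝ, HW W φ → (∀ x, 0 ≤ φ x) →
      -(e * √(nW W φ)) ≤ ∫ x, (⟪gradient v x, gradient φ x⟫ + W x * v x * φ x) ∂(kap N)) :
    ∫ x, η x ^ 2 * (‖gradient v x‖ ^ 2 / (v x + ε) ^ 2) ∂(kap N) ≤
      6 * (∫ x, (2 * ‖gradient η x‖ ^ 2 + W x * η x ^ 2) ∂(kap N)) + 4 := by
  have hvε : ∀ x, 0 < v x + ε := fun x => by have := hv0 x; linarith
  have hvne : ∀ x, v x + ε ≠ 0 := fun x => (hvε x).ne'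
  set ζ : En N → ℝ := fun x => (v x + ε)⁻¹ with hζ
  have hζc : ContDiff ℝ 1 ζ := (hv.add contDiff_const).inv hvne
  set φ : En N → ℝ := fun x => (η x * η x) * ζ x with hφ
  have hφc : ContDiff ℝ 1 φ := (hη.mul hη).mul hζc
  have hgζ : ∀ x, gradient ζ x = (-((v x + ε) ^ 2)⁻¹) • gradient v x := by
    intro x
    apply grad_comp (ψ := fun t => (t + ε)⁻¹) hv
    have := ((hasDerivAt_id (v x)).add_const ε).inv (hvne x)
    refine HasDerivAt.congr_deriv this ?_
    rw [id, neg_div, one_div]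
  have hgφ : ∀ x, gradient φ x = (2 * η x * ζ x) • gradient η x - (η x ^ 2 * ζ x ^ 2) • gradient v x := by
    intro x
    rw [hφ, grad_mul (hη.mul hη) hζc, grad_mul hη hη, hgζ]
    simp only [hζ, inv_pow]
    module
  have hvc := hv.continuous
  have hηc := hη.continuous
  have hζcc := hζc.continuous
  have hgv := grad_cont hv
  have hgη := grad_cont hη
  have hWc := s.hW
  have hcs : ∀ F : En N → ℝ, Continuous F → (∀ x, x ∉ tsupport η → F x = 0) → Integrable F (kap N) := by
    intro F hF h0
    exact hF.integrable_of_hasCompactSupport (HasCompactSupport.intro hηs h0)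
  have hηz : ∀ x, x ∉ tsupport η → η x = 0 := fun x hx => image_eq_zero_of_notMem_tsupport hx
  have iZ : Integrable (fun x => η x ^ 2 * (‖gradient v x‖ ^ 2 * ζ x ^ 2)) (kap N) :=
    hcs _ (by fun_prop) (fun x hx => by simp [hηz x hx])
  have iB : Integrable (fun x => 2 * ‖gradient η x‖ ^ 2 + W x * η x ^ 2) (kap N) :=
    hcs _ (by fun_prop) (fun x hx => by simp [hηz x hx, grad_cs hx])
  have hgφc := grad_cont hφc
  have hφz : ∀ x, x ∉ tsupport η → φ x = 0 := fun x hx => by simp [hφ, hηz x hx]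
  have hgφz : ∀ x, x ∉ tsupport η → gradient φ x = 0 := fun x hx => by rw [hgφ]; simp [hηz x hx]
  have hφcc := hφc.continuous
  have iφ : Integrable (fun x => ‖gradient φ x‖ ^ 2 + W x * φ x ^ 2) (kap N) :=
    hcs _ (by fun_prop) (fun x hx => by simp [hφz x hx, hgφz x hx])
  have iE : Integrable (fun x => ⟪gradient v x, gradient φ x⟫ + W x * v x * φ x) (kap N) :=
    hcs _ (by fun_prop) (fun x hx => by simp [hφz x hx, hgφz x hx])
  have hζ0 : ∀ x, 0 < ζ x := fun x => inv_pos.2 (hvε x)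
  have hζε : ∀ x, ζ x ≤ ε⁻¹ := fun x => inv_anti₀ hε (by have := hv0 x; linarith)
  set Z := ∫ x, η x ^ 2 * (‖gradient v x‖ ^ 2 * ζ x ^ 2) ∂(kap N) with hZ
  set B := ∫ x, (2 * ‖gradient η x‖ ^ 2 + W x * η x ^ 2) ∂(kap N) with hB
  have hZ0 : 0 ≤ Z := integral_nonneg fun x => by positivity
  have hB0 : 0 ≤ B := integral_nonneg fun x => by have := (s.W0 x).le; positivity
  have hgoal : ∫ x, η x ^ 2 * (‖gradient v x‖ ^ 2 / (v x + ε) ^ 2) ∂(kap N) = Z := by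
    rw [hZ]; congr 1; ext x; simp [hζ, div_eq_mul_inv]
  rw [hgoal]
  have h1 := hsup φ ⟨hφc, iφ⟩ (fun x => by have := hζ0 x; have := hη0 x; positivity)
  have h2 : ∫ x, (⟪gradient v x, gradient φ x⟫ + W x * v x * φ x) ∂(kap N) ≤ -(1 / 2) * Z + B := by
    rw [hZ, hB, ← integral_const_mul, ← integral_add (iZ.const_mul _) iB]
    apply integral_mono iE ((iZ.const_mul _).add iB)
    intro x
    simp only [Pi.add_apply]
    rw [hgφ, inner_sub_right, real_inner_smul_right, real_inner_smul_right, real_inner_self_eq_norm_sq]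
    have c1 : ⟪gradient v x, gradient η x⟫ ≤ ‖gradient v x‖ * ‖gradient η x‖ := real_inner_le_norm _ _
    have c2 : 2 * η x * ζ x * ⟪gradient v x, gradient η x⟫ ≤ 2 * η x * ζ x * (‖gradient v x‖ * ‖gradient η x‖) := by
      have := hη0 x; have := (hζ0 x).le
      gcongr
    have c3 : v x * ζ x ≤ 1 := by
      rw [hζ]; simp only; rw [mul_inv_le_iff₀ (hvε x)]; linarith
    have c4 : W x * v x * φ x ≤ W x * η x ^ 2 := by
      have : W x * v x * φ x = W x * η x ^ 2 * (v x * ζ x) := by simp only [hφ]; ring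
      rw [this]
      exact mul_le_of_le_one_right (mul_nonneg (s.W0 x).le (sq_nonneg _)) c3
    nlinarith [sq_nonneg (η x * ζ x * ‖gradient v x‖ - 2 * ‖gradient η x‖)]
  have h3 : nW W φ ≤ (ε⁻¹) ^ 2 * (4 * B + 2 * Z) := by
    have : (ε⁻¹) ^ 2 * (4 * B + 2 * Z) = ∫ x, ((ε⁻¹) ^ 2 * (4 * (2 * ‖gradient η x‖ ^ 2 + W x * η x ^ 2))
        + (ε⁻¹) ^ 2 * (2 * (η x ^ 2 * (‖gradient v x‖ ^ 2 * ζ x ^ 2)))) ∂(kap N) := by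
      rw [integral_add ((iB.const_mul _).const_mul _) ((iZ.const_mul _).const_mul _)]
      simp only [integral_const_mul]
      ring
    rw [this]
    apply integral_mono iφ (((iB.const_mul _).const_mul _).add ((iZ.const_mul _).const_mul _))
    intro x
    simp only [Pi.add_apply]
    have a1 : ‖gradient φ x‖ ≤ 2 * η x * ζ x * ‖gradient η x‖ + η x ^ 2 * ζ x ^ 2 * ‖gradient v x‖ := by
      rw [hgφ]
      refine (norm_sub_le _ _).trans ?_
      rw [norm_smul, norm_smul, Real.norm_of_nonneg (by have := hη0 x; have := (hζ0 x).le; positivity),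
        Real.norm_of_nonneg (by positivity)]
    have a2 : 2 * η x * ζ x * ‖gradient η x‖ ≤ ε⁻¹ * (2 * ‖gradient η x‖) := by
      have : η x * ζ x ≤ 1 * ε⁻¹ := mul_le_mul (hη1 x) (hζε x) (hζ0 x).le (by norm_num)
      nlinarith [norm_nonneg (gradient η x)]
    have a3 : η x ^ 2 * ζ x ^ 2 * ‖gradient v x‖ ≤ ε⁻¹ * (η x * ζ x * ‖gradient v x‖) := by
      have : η x * ζ x ≤ 1 * ε⁻¹ := mul_le_mul (hη1 x) (hζε x) (hζ0 x).le (by norm_num)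
      have h5 : 0 ≤ η x * ζ x * ‖gradient v x‖ := by have := hη0 x; have := (hζ0 x).le; positivity
      nlinarith
    have a4 : ‖gradient φ x‖ ^ 2 ≤ (ε⁻¹ * (2 * ‖gradient η x‖ + η x * ζ x * ‖gradient v x‖)) ^ 2 := by
      gcongr
      linarith
    have a5 : φ x ^ 2 ≤ (ε⁻¹) ^ 2 * η x ^ 2 := by
      rw [← mul_pow]
      have := hη0 x; have := (hζ0 x).le
      have : φ x ≤ ε⁻¹ * η x := by
        simp only [hφ]
        have : η x * ζ x ≤ 1 * ε⁻¹ := mul_le_mul (hη1 x) (hζε x) (hζ0 x).le (by norm_num)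
        nlinarith
      have : 0 ≤ φ x := by simp only [hφ]; positivity
      gcongr
    have a6 : W x * φ x ^ 2 ≤ W x * ((ε⁻¹) ^ 2 * η x ^ 2) := by
      have := (s.W0 x).le; gcongr
    have a7 : (2 * ‖gradient η x‖ + η x * ζ x * ‖gradient v x‖) ^ 2 ≤
      8 * ‖gradient η x‖ ^ 2 + 2 * (η x ^ 2 * (‖gradient v x‖ ^ 2 * ζ x ^ 2)) := by
      nlinarith [sq_nonneg (2 * ‖gradient η x‖ - η x * ζ x * ‖gradient v x‖)]
    rw [mul_pow] at a4
    have a8 : ε⁻¹ ^ 2 * (2 * ‖gradient η x‖ + η x * ζ x * ‖gradient v x‖) ^ 2 ≤ ε⁻¹ ^ 2 * 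
      (8 * ‖gradient η x‖ ^ 2 + 2 * (η x ^ 2 * (‖gradient v x‖ ^ 2 * ζ x ^ 2))) := by gcongr
    have a9 : 0 ≤ W x * (ε⁻¹ ^ 2 * η x ^ 2) := by have := (s.W0 x).le; positivity
    linarith
  have h4 : √(nW W φ) ≤ 1 + nW W φ := by
    have := s.nW_nonneg φ
    nlinarith [Real.sq_sqrt this, sq_nonneg (√(nW W φ) - 1), Real.sqrt_nonneg (nW W φ)]
  have h5 : e * √(nW W φ) ≤ e * (1 + (ε⁻¹) ^ 2 * (4 * B + 2 * Z)) := by gcongr; linarith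
  have h6 : e * (ε⁻¹) ^ 2 ≤ 1 / 8 := by
    calc e * (ε⁻¹) ^ 2 ≤ ε ^ 2 / 8 * (ε⁻¹) ^ 2 := by gcongr
      _ = 1 / 8 := by field_simp
  have h7 : e * (ε⁻¹) ^ 2 * (4 * B + 2 * Z) ≤ 1 / 8 * (4 * B + 2 * Z) := by gcongr
  nlinarith
end Setup

namespace Setup
variable {N : ℕ} {p q β ν M₀ : ℝ} {W : En N → ℝ} {O : Set (En N)} {g G : En N → ℝ → ℝ}

/-- single-function estimate of superlevel sets -/
lemma level_est (s : Setup N p q β ν M₀ W O g G) {v η : En N → ℝ} (hv : HW W v) (hv0 : ∀ x, 0 ≤ v x)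
    (hη : ContDiff ℝ 1 η) (hηs : HasCompactSupport η) (hη0 : ∀ x, 0 ≤ η x) (hη1 : ∀ x, η x ≤ 1)
    {e ε : ℝ} (he0 : 0 ≤ e) (hε : 0 < ε) (he1 : e ≤ 1) (heε : e ≤ ε ^ 2 / 8)
    (hsup : ∀ φ : En N → ℝ, HW W φ → (∀ x, 0 ≤ φ x) →
      -(e * √(nW W φ)) ≤ ∫ x, (⟪gradient v x, gradient φ x⟫ + W x * v x * φ x) ∂(kap N))
    {y₀ y : En N} {r₀ δ : ℝ} (hδ : 0 < δ) (hr₀ : Metric.ball y₀ r₀ ⊆ O)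
    (hηb : ∀ x, ‖x‖ ≤ ‖y₀‖ + r₀ + ‖y - y₀‖ → η x = 1) :
    volume (Metric.ball y r₀ ∩ {x | δ < v x}) * ENNReal.ofReal (Real.log (1 + δ / ε) ^ 2) ≤
      ENNReal.ofReal (2 * (‖y - y₀‖ ^ 2 * (6 * (∫ x, (2 * ‖gradient η x‖ ^ 2 + W x * η x ^ 2) ∂(kap N)) + 4))
        + 2 * ((ε⁻¹) ^ 2 * ∫ x in O, v x ^ 2 ∂(kap N))) := by
  have hlog := s.log_est hv.c1 hv0 hη hηs hη0 hη1 he0 hε he1 heε hsup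
  set K := 6 * (∫ x, (2 * ‖gradient η x‖ ^ 2 + W x * η x ^ 2) ∂(kap N)) + 4 with hK
  set ξ := y - y₀ with hξ
  have hvε : ∀ x, 0 < v x + ε := fun x => by have := hv0 x; linarith
  have hvne : ∀ x, v x + ε ≠ 0 := fun x => (hvε x).ne'
  set w : En N → ℝ := fun x => Real.log (v x + ε) - Real.log ε with hw
  have hwc : ContDiff ℝ 1 w := ((hv.c1.add contDiff_const).log hvne).sub contDiff_const
  have hgw : ∀ x, gradient w x = (v x + ε)⁻¹ • gradient v x := by
    intro x
    apply grad_comp (ψ := fun t => Real.log (t + ε) - Real.log ε) hv.c1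
    have := (((hasDerivAt_id (v x)).add_const ε).log (hvne x)).sub_const (Real.log ε)
    refine HasDerivAt.congr_deriv this ?_
    rw [id, one_div]
  have hw0 : ∀ x, 0 ≤ w x := fun x => sub_nonneg.2 (Real.log_le_log hε (by have := hv0 x; linarith))
  have hwle : ∀ x, w x ≤ ε⁻¹ * v x := by
    intro x
    simp only [hw]
    rw [← Real.log_div (hvne x) hε.ne']
    refine (Real.log_le_sub_one_of_pos (div_pos (hvε x) hε)).trans (le_of_eq ?_)
    field_simp; ring
  have hwl : ∀ x, δ < v x → Real.log (1 + δ / ε) ≤ w x := by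
    intro x hx
    simp only [hw]
    rw [← Real.log_div (hvne x) hε.ne']
    apply Real.log_le_log (by positivity)
    rw [le_div_iff₀ hε]; field_simp; linarith
  have hl0 : 0 ≤ Real.log (1 + δ / ε) := Real.log_nonneg (by have : 0 < δ / ε := by positivity
                                                             linarith)
  have hvc := hv.c1.continuous
  have hwcc := hwc.continuous
  have hgv := grad_cont hv.c1
  have hηc := hη.continuous
  have iZ : Integrable (fun x => η x ^ 2 * (‖gradient v x‖ ^ 2 / (v x + ε) ^ 2)) (kap N) := by
    apply Continuous.integrable_of_hasCompactSupport
    · apply (hηc.pow 2).mul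
      exact (hgv.norm.pow 2).div (by fun_prop) (fun x => pow_ne_zero _ (hvne x))
    · exact HasCompactSupport.intro hηs (fun x hx => by simp [image_eq_zero_of_notMem_tsupport hx])
  set A := Metric.ball y₀ r₀ with hA
  have hAm : MeasurableSet A := Metric.isOpen_ball.measurableSet
  set D := Metric.closedBall (0 : En N) (‖y₀‖ + r₀ + ‖ξ‖) with hD
  have hAD : ∀ x ∈ A, ∀ t ∈ Set.Icc (0 : ℝ) 1, x + t • ξ ∈ D := by
    intro x hx t ht
    rw [hD, mem_closedBall_zero_iff]
    refine (norm_add_le _ _).trans ?_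
    have h1 : ‖x‖ ≤ ‖y₀‖ + r₀ := by
      have : ‖x - y₀‖ < r₀ := by simpa [hA, dist_eq_norm] using hx
      have := norm_sub_norm_le x y₀
      linarith
    have h2 : ‖t • ξ‖ ≤ ‖ξ‖ := by
      rw [norm_smul, Real.norm_of_nonneg ht.1]
      exact mul_le_of_le_one_left (norm_nonneg _) ht.2
    linarith
  have hDb : ∫⁻ x in D, ENNReal.ofReal (‖gradient w x‖ ^ 2) ≤ ENNReal.ofReal K := by
    calc _ ≤ ∫⁻ x in D, ENNReal.ofReal (η x ^ 2 * (‖gradient v x‖ ^ 2 / (v x + ε) ^ 2)) := by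
            apply setLIntegral_mono' measurableSet_closedBall
            intro x hx
            apply ENNReal.ofReal_le_ofReal
            rw [hηb x (by simpa [hD] using hx), hgw, norm_smul, Real.norm_of_nonneg (inv_pos.2 (hvε x)).le, mul_pow]
            apply le_of_eq
            field_simp
      _ ≤ ∫⁻ x, ENNReal.ofReal (η x ^ 2 * (‖gradient v x‖ ^ 2 / (v x + ε) ^ 2)) := setLIntegral_le_lintegral _ _
      _ = ENNReal.ofReal (∫ x, η x ^ 2 * (‖gradient v x‖ ^ 2 / (v x + ε) ^ 2)) := by
          rw [← ofReal_integral_eq_lintegral_ofReal (vol_integrable iZ) (Eventually.of_forall fun x => by positivity)]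
      _ ≤ _ := ENNReal.ofReal_le_ofReal ((vol_integral_le iZ fun x => by positivity).trans hlog)
  have htr := translate_est hwc ξ A D hAm measurableSet_closedBall hAD
  have hl2 : ∫⁻ x in A, ENNReal.ofReal (w x ^ 2) ≤ ENNReal.ofReal ((ε⁻¹) ^ 2 * ∫ x in O, v x ^ 2 ∂(kap N)) := by
    have il2 := (s.toH1 hv).l2
    calc _ ≤ ∫⁻ x in A, ENNReal.ofReal ((ε⁻¹) ^ 2 * v x ^ 2) := by
            apply lintegral_mono
            intro x
            apply ENNReal.ofReal_le_ofReal
            rw [← mul_pow]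
            have := hw0 x
            have := hwle x
            gcongr
      _ = ENNReal.ofReal (∫ x in A, (ε⁻¹) ^ 2 * v x ^ 2) := by
          rw [← ofReal_integral_eq_lintegral_ofReal ((vol_integrable il2).const_mul _).integrableOn (Eventually.of_forall fun x => by positivity)]
      _ ≤ _ := by
          apply ENNReal.ofReal_le_ofReal
          rw [integral_const_mul]
          refine mul_le_mul_of_nonneg_left ?_ (by positivity)
          refine (integral_mono_measure (Measure.restrict_mono hr₀ vol_le_kap)
            (Eventually.of_forall fun x => by positivity) il2.integrableOn)
  have e2 : ∀ y : ℝ, 2 * ENNReal.ofReal y = ENNReal.ofReal (2 * y) := fun y => by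
      rw [ENNReal.ofReal_mul (by norm_num)]; simp
  have hK0 : 0 ≤ K := by
    have : 0 ≤ ∫ x, (2 * ‖gradient η x‖ ^ 2 + W x * η x ^ 2) ∂(kap N) :=
      integral_nonneg fun x => by have := (s.W0 x).le; positivity
    positivity
  have hI0 : 0 ≤ ∫ x in O, v x ^ 2 ∂(kap N) := integral_nonneg fun x => by positivity
  rw [ENNReal.ofReal_add (by positivity) (by positivity), ← e2, ← e2, ENNReal.ofReal_mul (by positivity)]
  calc _ = ∫⁻ x in Metric.ball y r₀ ∩ {x | δ < v x}, ENNReal.ofReal (Real.log (1 + δ / ε) ^ 2) := by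
          rw [setLIntegral_const, mul_comm]
    _ ≤ ∫⁻ x in Metric.ball y r₀ ∩ {x | δ < v x}, ENNReal.ofReal (w x ^ 2) := by
        apply setLIntegral_mono' (Metric.isOpen_ball.measurableSet.inter (isOpen_lt continuous_const hvc).measurableSet)
        intro x hx
        apply ENNReal.ofReal_le_ofReal
        have := hwl x hx.2
        gcongr
    _ ≤ ∫⁻ x in Metric.ball y r₀, ENNReal.ofReal (w x ^ 2) := lintegral_mono_set Set.inter_subset_left
    _ = ∫⁻ x in A, ENNReal.ofReal (w (x + ξ) ^ 2) := by
        rw [← lintegral_indicator Metric.isOpen_ball.measurableSet, ← lintegral_indicator hAm]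
        rw [← lintegral_add_right_eq_self _ ξ]
        congr 1; ext x
        have : x + ξ ∈ Metric.ball y r₀ ↔ x ∈ A := by
          simp only [hA, Metric.mem_ball, dist_eq_norm, hξ]
          congr! 2; abel
        by_cases hx : x ∈ A
        · rw [Set.indicator_of_mem hx, Set.indicator_of_mem (this.2 hx)]
        · rw [Set.indicator_of_notMem hx, Set.indicator_of_notMem (fun h => hx (this.1 h))]
    _ ≤ ∫⁻ x in A, (2 * ENNReal.ofReal ((w (x + ξ) - w x) ^ 2) + 2 * ENNReal.ofReal (w x ^ 2)) := by
        apply lintegral_mono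
        intro x
        beta_reduce
        rw [e2, e2, ← ENNReal.ofReal_add (by positivity) (by positivity)]
        apply ENNReal.ofReal_le_ofReal
        nlinarith [sq_nonneg (w (x + ξ) - 2 * w x)]
    _ = 2 * (∫⁻ x in A, ENNReal.ofReal ((w (x + ξ) - w x) ^ 2)) + 2 * ∫⁻ x in A, ENNReal.ofReal (w x ^ 2) := by
        have m1 : Measurable (fun x => ENNReal.ofReal ((w (x + ξ) - w x) ^ 2)) := by
          apply Measurable.ennreal_ofReal
          apply Continuous.measurable; fun_prop
        have m2 : Measurable (fun x => ENNReal.ofReal (w x ^ 2)) := by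
          apply Measurable.ennreal_ofReal
          apply Continuous.measurable; fun_prop
        rw [lintegral_add_left (m1.const_mul _), lintegral_const_mul _ m1, lintegral_const_mul _ m2]
    _ ≤ _ := by
        gcongr
        exact htr.trans (by gcongr)

lemma ball_vanish (s : Setup N p q β ν M₀ W O g G) (ℱ : Filter ℕ) (v : ℕ → En N → ℝ)
    (hv : ∀ n, HW W (v n)) (hv0 : ∀ n x, 0 ≤ v n x) (e : ℕ → ℝ) (he0 : ∀ n, 0 ≤ e n) (he : Tendsto e ℱ (𝓝 0))
    (hsup : ∀ n, ∀ φ : En N → ℝ, HW W φ → (∀ x, 0 ≤ φ x) →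
      -(e n * √(nW W φ)) ≤ ∫ x, (⟪gradient (v n) x, gradient φ x⟫ + W x * v n x * φ x) ∂(kap N))
    (hO0 : Tendsto (fun n => ∫ x in O, v n x ^ 2 ∂(kap N)) ℱ (𝓝 0))
    {y₀ : En N} {r₀ δ : ℝ} (hδ : 0 < δ) (hr₀ : Metric.ball y₀ r₀ ⊆ O) (y : En N) :
    Tendsto (fun n => volume (Metric.ball y r₀ ∩ {x | δ < v n x})) ℱ (𝓝 0) := by
  obtain ⟨C, hC, χ, hχ⟩ := exists_cutoff N
  obtain ⟨j, hj⟩ := exists_nat_ge (‖y₀‖ + r₀ + ‖y - y₀‖)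
  obtain ⟨hη, hηs, hη01, hη1, -⟩ := hχ j
  set η := χ j
  set K := 6 * (∫ x, (2 * ‖gradient η x‖ ^ 2 + W x * η x ^ 2) ∂(kap N)) + 4 with hK
  rw [ENNReal.tendsto_nhds_zero]
  intro γ hγ
  rcases eq_or_ne γ ⊤ with rfl | hγt
  · exact Eventually.of_forall fun n => le_top
  obtain ⟨c, hc, rfl⟩ : ∃ c : ℝ, 0 < c ∧ γ = ENNReal.ofReal c :=
    ⟨γ.toReal, ENNReal.toReal_pos hγ.ne' hγt, (ENNReal.ofReal_toReal hγt).symm⟩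
  have hlim : Tendsto (fun t : ℝ => 2 * (‖y - y₀‖ ^ 2 * K) / Real.log (1 + t) ^ 2) atTop (𝓝 0) := by
    apply tendsto_const_nhds.div_atTop
    apply (tendsto_pow_atTop (by norm_num)).comp
    exact Real.tendsto_log_atTop.comp (tendsto_atTop_add_const_left _ _ tendsto_id)
  obtain ⟨t, ht1, ht2⟩ := ((hlim.eventually_lt_const (show 0 < c / 2 by positivity)).and (eventually_gt_atTop 0)).exists
  set ε := δ / t with hε
  have hε0 : 0 < ε := by positivity
  have hl : 0 < Real.log (1 + t) := Real.log_pos (by linarith)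
  have hlim2 : Tendsto (fun n => 2 * ((ε⁻¹) ^ 2 * ∫ x in O, v n x ^ 2 ∂(kap N)) / Real.log (1 + t) ^ 2) ℱ (𝓝 0) := by
    have := ((hO0.const_mul ((ε⁻¹) ^ 2)).const_mul 2).div_const (Real.log (1 + t) ^ 2)
    simpa using this
  filter_upwards [hlim2.eventually_lt_const (show 0 < c / 2 by positivity),
    he.eventually_le_const (show (0:ℝ) < 1 by norm_num), he.eventually_le_const (show (0:ℝ) < ε ^ 2 / 8 by positivity)]
    with n hn1 hn2 hn3
  have := s.level_est (hv n) (hv0 n) hη hηs (fun x => (hη01 x).1) (fun x => (hη01 x).2) (he0 n) hε0 hn2 hn3 (hsup n)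
    (y := y) hδ hr₀ (fun x hx => hη1 x (by linarith))
  have hde : δ / ε = t := by rw [hε]; field_simp
  rw [hde, ← hK] at this
  rw [← ENNReal.le_div_iff_mul_le (Or.inl (ENNReal.ofReal_pos.2 (by positivity)).ne') (Or.inl (by simp)), ← ENNReal.ofReal_div_of_pos (by positivity)] at this
  refine this.trans (ENNReal.ofReal_le_ofReal ?_)
  rw [add_div]
  linarith

lemma kap_vanish (s : Setup N p q β ν M₀ W O g G) (ℱ : Filter ℕ) (v : ℕ → En N → ℝ)
    (hv : ∀ n, HW W (v n)) (hv0 : ∀ n x, 0 ≤ v n x) (e : ℕ → ℝ) (he0 : ∀ n, 0 ≤ e n) (he : Tendsto e ℱ (𝓝 0))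
    (hsup : ∀ n, ∀ φ : En N → ℝ, HW W φ → (∀ x, 0 ≤ φ x) →
      -(e n * √(nW W φ)) ≤ ∫ x, (⟪gradient (v n) x, gradient φ x⟫ + W x * v n x * φ x) ∂(kap N))
    (hO0 : Tendsto (fun n => ∫ x in O, v n x ^ 2 ∂(kap N)) ℱ (𝓝 0))
    {δ : ℝ} (hδ : 0 < δ) (R : ℝ) :
    Tendsto (fun n => (kap N).real (Metric.closedBall 0 R ∩ {x | δ < v n x})) ℱ (𝓝 0) := by
  obtain ⟨y₀, hy₀⟩ := s.hOn
  obtain ⟨r₀, hr, hr₀⟩ := Metric.isOpen_iff.1 s.hO y₀ hy₀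
  have key : Tendsto (fun n => volume (Metric.closedBall (0 : En N) R ∩ {x | δ < v n x})) ℱ (𝓝 0) := by
    apply (isCompact_closedBall (0 : En N) R).induction_on
      (p := fun A => Tendsto (fun n => volume (A ∩ {x | δ < v n x})) ℱ (𝓝 0))
    · simpa using tendsto_const_nhds
    · intro A B hAB hB
      exact tendsto_of_tendsto_of_tendsto_of_le_of_le tendsto_const_nhds hB (fun n => zero_le)
        (fun n => measure_mono (Set.inter_subset_inter_left _ hAB))
    · intro A B hA hB
      have := hA.add hB
      rw [add_zero] at this
      refine tendsto_of_tendsto_of_tendsto_of_le_of_le tendsto_const_nhds this (fun n => zero_le)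
        (fun n => ?_)
      beta_reduce
      rw [Set.union_inter_distrib_right]
      exact measure_union_le _ _
    · intro x _
      exact ⟨Metric.ball x r₀, mem_nhdsWithin_of_mem_nhds (Metric.ball_mem_nhds _ hr),
        s.ball_vanish ℱ v hv hv0 e he0 he hsup hO0 hδ hr₀ x⟩
  have k2 : Tendsto (fun n => kap N (Metric.closedBall 0 R ∩ {x | δ < v n x})) ℱ (𝓝 0) := by
    have := ENNReal.Tendsto.const_mul (a := ENNReal.ofReal (Real.exp (R ^ 2 / 4))) key (Or.inr (by simp))
    rw [mul_zero] at this
    exact tendsto_of_tendsto_of_tendsto_of_le_of_le tendsto_const_nhds this (fun n => zero_le)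
      (fun n => kap_le_on_ball R _ Set.inter_subset_left)
  have := (ENNReal.tendsto_toReal (by simp : (0 : ENNReal) ≠ ⊤)).comp k2
  exact this

lemma pbound (s : Setup N p q β ν M₀ W O g G) {u : En N → ℝ} (h : H1 u) :
    ∫ x, |u x| ^ p ∂(kap N) ≤ (Qn u / Sconst N) ^ (p / 2) := by
  have h1 := s.sob h
  have hS := s.hS
  have hp := s.hp2
  have h0 : 0 ≤ ∫ x, |u x| ^ p ∂(kap N) := integral_nonneg fun x => by positivity
  rw [← le_div_iff₀' hS] at h1
  calc _ = ((∫ x, |u x| ^ p ∂(kap N)) ^ (2 / p)) ^ (p / 2) := by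
          rw [← Real.rpow_mul h0, show 2 / p * (p / 2) = 1 by field_simp, Real.rpow_one]
    _ ≤ _ := by gcongr

lemma l2_vanish (s : Setup N p q β ν M₀ W O g G) (ℱ : Filter ℕ) (v : ℕ → En N → ℝ)
    (hv : ∀ n, HW W (v n)) (hv0 : ∀ n x, 0 ≤ v n x) (e : ℕ → ℝ) (he0 : ∀ n, 0 ≤ e n) (he : Tendsto e ℱ (𝓝 0))
    (hsup : ∀ n, ∀ φ : En N → ℝ, HW W φ → (∀ x, 0 ≤ φ x) →
      -(e n * √(nW W φ)) ≤ ∫ x, (⟪gradient (v n) x, gradient φ x⟫ + W x * v n x * φ x) ∂(kap N))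
    (hO0 : Tendsto (fun n => ∫ x in O, v n x ^ 2 ∂(kap N)) ℱ (𝓝 0))
    {T : ℝ} (hT : ∀ n, Qn (v n) ≤ T) {γ : ℝ} (hγ : 0 < γ) :
    ∀ᶠ n in ℱ, ∫ x, v n x ^ 2 ∂(kap N) < γ := by
  rcases ℱ.eq_or_neBot with rfl | hne
  · simp
  have hT0 : 0 ≤ T := (Qn_nonneg _).trans (hT 0)
  have hp := s.hp2
  have hS := s.hS
  obtain ⟨R, hR, hRt⟩ : ∃ R : ℝ, 0 < R ∧ 16 * N * T / R ^ 2 < γ / 4 := by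
    have : Tendsto (fun R : ℝ => 16 * N * T / R ^ 2) atTop (𝓝 0) :=
      tendsto_const_nhds.div_atTop (tendsto_pow_atTop (by norm_num))
    obtain ⟨R, h1, h2⟩ := ((this.eventually_lt_const (show 0 < γ / 4 by positivity)).and (eventually_gt_atTop 0)).exists
    exact ⟨R, h2, h1⟩
  set m := (kap N).real (Metric.closedBall 0 R) with hm
  obtain ⟨δ, hδ, hδt⟩ : ∃ δ : ℝ, 0 < δ ∧ δ ^ 2 * m < γ / 4 := by
    have : Tendsto (fun r : ℝ => r ^ 2 * m) (𝓝[>] 0) (𝓝 (0 ^ 2 * m)) := by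
      apply Tendsto.mono_left _ nhdsWithin_le_nhds
      apply Continuous.tendsto
      fun_prop
    simp only [ne_eq, OfNat.ofNat_ne_zero, not_false_eq_true, zero_pow, zero_mul] at this
    obtain ⟨r, h1, h2⟩ := ((this.eventually_lt_const (show 0 < γ / 4 by positivity)).and self_mem_nhdsWithin).exists
    exact ⟨r, h2, h1⟩
  set P := (T / Sconst N) ^ (p / 2) with hP
  have hP0 : 0 ≤ P := by positivity
  obtain ⟨Λ, hΛ, hΛt⟩ : ∃ Λ : ℝ, 0 < Λ ∧ P / Λ ^ (p - 2) < γ / 4 := by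
    have : Tendsto (fun R : ℝ => P / R ^ (p - 2)) atTop (𝓝 0) :=
      tendsto_const_nhds.div_atTop (tendsto_rpow_atTop (by linarith))
    obtain ⟨R, h1, h2⟩ := ((this.eventually_lt_const (show 0 < γ / 4 by positivity)).and (eventually_gt_atTop 0)).exists
    exact ⟨R, h2, h1⟩
  have hkv := (s.kap_vanish ℱ v hv hv0 e he0 he hsup hO0 hδ R).const_mul (Λ ^ 2)
  rw [mul_zero] at hkv
  filter_upwards [hkv.eventually_lt_const (show 0 < γ / 4 by positivity)] with n hn
  have hH := s.toH1 (hv n)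
  have hvc := hH.c1.continuous
  have htail := tail_bound hH hR
  have htail2 : 16 * N * Qn (v n) / R ^ 2 ≤ 16 * N * T / R ^ 2 := by
    have := hT n
    gcongr
  have hsplit := integral_add_compl (measurableSet_closedBall (x := (0 : En N)) (ε := R)) hH.l2
  have hfin : kap N (Metric.closedBall 0 R) < ⊤ := (isCompact_closedBall _ _).measure_lt_top
  have hPb : ∫ x, v n x ^ p ∂(kap N) ≤ P := by
    have := s.pbound hH
    simp only [abs_of_nonneg (hv0 n _)] at this
    refine this.trans ?_
    have := hT n
    have := Qn_nonneg (v n)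
    rw [hP]
    gcongr
  have hL : MeasurableSet {x | δ < v n x} := (isOpen_lt continuous_const hvc).measurableSet
  set B := Metric.closedBall (0 : En N) R with hB
  have hBm : MeasurableSet B := measurableSet_closedBall
  have iB : Integrable (B.indicator (fun _ => δ ^ 2)) (kap N) := (integrableOn_const hfin.ne).integrable_indicator hBm
  have iL : Integrable ((B ∩ {x | δ < v n x}).indicator (fun _ => Λ ^ 2)) (kap N) :=
    (integrableOn_const (lt_of_le_of_lt (measure_mono Set.inter_subset_left) hfin).ne).integrable_indicator (hBm.inter hL)
  have ipp := s.ip' hH (hv0 n)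
  have hmain : ∫ x in B, v n x ^ 2 ∂(kap N) ≤ δ ^ 2 * m + Λ ^ 2 * (kap N).real (B ∩ {x | δ < v n x}) + P / Λ ^ (p - 2) := by
    rw [← integral_indicator hBm]
    calc _ ≤ ∫ x, ((B.indicator (fun _ => δ ^ 2) x + (B ∩ {x | δ < v n x}).indicator (fun _ => Λ ^ 2) x) + v n x ^ p / Λ ^ (p - 2)) ∂(kap N) := by
          apply integral_mono (hH.l2.indicator hBm) ((iB.add iL).add (ipp.div_const _))
          intro x
          simp only [Pi.add_apply]
          have hr0 : 0 ≤ v n x ^ p / Λ ^ (p - 2) := by have := hv0 n x; positivity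
          have hvx := hv0 n x
          by_cases hx : x ∈ B
          · rw [Set.indicator_of_mem hx, Set.indicator_of_mem hx]
            by_cases hx2 : δ < v n x
            · rw [Set.indicator_of_mem (show x ∈ B ∩ {x | δ < v n x} from ⟨hx, hx2⟩)]
              by_cases hx3 : v n x ≤ Λ
              · have : v n x ^ 2 ≤ Λ ^ 2 := by gcongr
                nlinarith
              · have : v n x ^ 2 ≤ v n x ^ p / Λ ^ (p - 2) := by
                  rw [le_div_iff₀ (by positivity), ← s.rpow_split2 hvx, mul_comm]
                  push Not at hx3
                  gcongr
                nlinarith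
            · rw [Set.indicator_of_notMem (fun h => hx2 h.2)]
              push Not at hx2
              have : v n x ^ 2 ≤ δ ^ 2 := by gcongr
              nlinarith
          · rw [Set.indicator_of_notMem hx, Set.indicator_of_notMem hx, Set.indicator_of_notMem (fun h => hx h.1)]
            linarith
      _ = δ ^ 2 * m + Λ ^ 2 * (kap N).real (B ∩ {x | δ < v n x}) + (∫ x, v n x ^ p ∂(kap N)) / Λ ^ (p - 2) := by
          have iBL : Integrable (fun x => B.indicator (fun _ => δ ^ 2) x + (B ∩ {x | δ < v n x}).indicator (fun _ => Λ ^ 2) x) (kap N) := iB.add iL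
          rw [integral_add iBL (ipp.div_const _), integral_add iB iL, integral_indicator hBm,
            integral_indicator (hBm.inter hL), integral_div]
          simp [hm, mul_comm]
      _ ≤ _ := by gcongr
  linarith
end Setup

namespace Setup
variable {N : ℕ} {p q β ν M₀ : ℝ} {W : En N → ℝ} {O : Set (En N)} {g G : En N → ℝ → ℝ}

lemma hw_smul (s : Setup N p q β ν M₀ W O g G) {u : En N → ℝ} (hu : HW W u) (c : ℝ) :
    HW W (fun x => c * u x) ∧ nW W (fun x => c * u x) = c ^ 2 * nW W u := by
  have e : ∀ x, ‖gradient (fun x => c * u x) x‖ ^ 2 + W x * (c * u x) ^ 2 = c ^ 2 * (‖gradient u x‖ ^ 2 + W x * u x ^ 2) := by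
    intro x
    rw [grad_smul c hu.c1, norm_smul, mul_pow, Real.norm_eq_abs, sq_abs]; ring
  refine ⟨⟨contDiff_const.mul hu.c1, ?_⟩, ?_⟩
  · simp_rw [e]; exact hu.int.const_mul _
  · unfold nW; simp_rw [e]; rw [integral_const_mul]

lemma kapO (s : Setup N p q β ν M₀ W O g G) : kap N O < ⊤ := s.hOb.measure_lt_top

lemma theta_pos (s : Setup N p q β ν M₀ W O g G) : 0 < 1 / 2 - 1 / (q + 1) := by
  have := s.hq1
  rw [sub_pos]
  apply one_div_lt_one_div_of_lt <;> linarith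

lemma intO_le (s : Setup N p q β ν M₀ W O g G) {u : En N → ℝ} (hu : HW W u) (h0 : ∀ x, 0 ≤ u x) {C e : ℝ}
    (hJ : (1 / 2) * nW W u - ∫ x, G x (u x) ∂(kap N) ≤ C)
    (hPS : |PD W g u u| ≤ e * √(nW W u)) :
    ∫ x in O, g x (u x) * u x ∂(kap N) ≤ (1 / 2 - 1 / (q + 1))⁻¹ * (C + |e| * √(nW W u) / 2) := by
  rw [le_inv_mul_iff₀ s.theta_pos]
  have h1 := s.energy hu h0
  have h2 := neg_abs_le (PD W g u u)
  have h3 : e * √(nW W u) ≤ |e| * √(nW W u) := by gcongr; exact le_abs_self e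
  linarith

lemma pow_le_g (s : Setup N p q β ν M₀ W O g G) {x : En N} (hx : x ∈ O) {t : ℝ} (ht : 0 ≤ t) : t ^ p ≤ g x t * t := by
  rw [s.gin x t hx ht, ← s.rpow_split ht]
  have := s.hβ
  have : 0 ≤ β * t ^ q * t := by positivity
  nlinarith

lemma bounded (s : Setup N p q β ν M₀ W O g G) (u : ℕ → En N → ℝ) (hu : ∀ n, HW W (u n)) (h0 : ∀ n x, 0 ≤ u n x)
    (C₀ : ℝ) (hJ : ∀ n, (1 / 2) * nW W (u n) - ∫ x, G x (u n x) ∂(kap N) ≤ C₀)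
    (ε : ℕ → ℝ) (hε : Tendsto ε atTop (𝓝 0))
    (hPS : ∀ n, ∀ φ : En N → ℝ, HW W φ → |PD W g (u n) φ| ≤ ε n * √(nW W φ)) :
    ∃ T, ∀ n, nW W (u n) ≤ T := by
  set t : ℕ → ℝ := fun n => √(nW W (u n)) with ht
  have ht0 : ∀ n, 0 ≤ t n := fun n => Real.sqrt_nonneg _
  have ht2 : ∀ n, t n ^ 2 = nW W (u n) := fun n => Real.sq_sqrt (s.nW_nonneg _)
  set τ : ℕ → ℝ := fun n => (t n)⁻¹ with hτ
  have hτ0 : ∀ n, 0 ≤ τ n := fun n => inv_nonneg.2 (ht0 n)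
  have hττ : ∀ n, τ n ^ 2 * t n = τ n := fun n => by
    rcases (ht0 n).eq_or_lt with h | h
    · simp [hτ, ← h]
    · simp only [hτ]; field_simp
  have hτ1 : ∀ n, τ n ^ 2 * t n ^ 2 ≤ 1 := fun n => by
    rcases (ht0 n).eq_or_lt with h | h
    · simp [hτ, ← h]
    · simp only [hτ]; rw [← mul_pow, inv_mul_cancel₀ h.ne']; simp
  set ℱ : Filter ℕ := atTop ⊓ comap t atTop with hℱ
  have htl : Tendsto t ℱ atTop := tendsto_comap.mono_left inf_le_right
  have hτl : Tendsto τ ℱ (𝓝 0) := tendsto_inv_atTop_zero.comp htl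
  have hεl : Tendsto (fun n => |ε n|) ℱ (𝓝 0) := by
    have := (hε.mono_left (inf_le_left : ℱ ≤ atTop)).abs
    simpa using this
  set v : ℕ → En N → ℝ := fun n x => τ n * u n x with hv
  have hvW : ∀ n, HW W (v n) := fun n => (s.hw_smul (hu n) (τ n)).1
  have hvn : ∀ n, nW W (v n) ≤ 1 := fun n => by
    rw [(s.hw_smul (hu n) (τ n)).2, ← ht2]; exact hτ1 n
  have hM := s.hM
  have hvQ : ∀ n, Qn (v n) ≤ 1 + M₀⁻¹ := fun n => by
    refine (s.Qn_le (hvW n)).trans ?_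
    exact mul_le_of_le_one_right (by positivity) (hvn n)
  have hv0 : ∀ n x, 0 ≤ v n x := fun n x => mul_nonneg (hτ0 n) (h0 n x)
  have hel : Tendsto (fun n => τ n * |ε n|) ℱ (𝓝 0) := by simpa using hτl.mul hεl
  have hsup : ∀ n, ∀ φ : En N → ℝ, HW W φ → (∀ x, 0 ≤ φ x) →
      -((τ n * |ε n|) * √(nW W φ)) ≤ ∫ x, (⟪gradient (v n) x, gradient φ x⟫ + W x * v n x * φ x) ∂(kap N) := by
    intro n φ hφ hφ0
    have e : ∀ x, ⟪gradient (v n) x, gradient φ x⟫ + W x * v n x * φ x =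
        τ n * (⟪gradient (u n) x, gradient φ x⟫ + W x * u n x * φ x) := by
      intro x
      simp only [hv]
      rw [grad_smul (τ n) (hu n).c1, real_inner_smul_left]; ring
    simp_rw [e]
    rw [integral_const_mul, mul_assoc, ← mul_neg]
    apply mul_le_mul_of_nonneg_left _ (hτ0 n)
    have h1 := (neg_abs_le _).trans' (neg_le_neg (hPS n φ hφ))
    have h2 : 0 ≤ ∫ x, g x (u n x) * φ x ∂(kap N) := integral_nonneg fun x => mul_nonneg (s.g0 _ _) (hφ0 x)
    have h3 : ε n * √(nW W φ) ≤ |ε n| * √(nW W φ) := by gcongr; exact le_abs_self _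
    unfold PD at h1
    linarith
  set θ := (1 / 2 - 1 / (q + 1))⁻¹ with hθ
  have hθ0 : 0 < θ := inv_pos.2 s.theta_pos
  have hI : ∀ n, ∫ x in O, g x (u n x) * u n x ∂(kap N) ≤ θ * (C₀ + |ε n| * t n / 2) :=
    fun n => s.intO_le (hu n) (h0 n) (hJ n) (hPS n _ (hu n))
  set m := (kap N).real O
  have hO1 : ∀ n, ∫ x in O, u n x ^ 2 ∂(kap N) ≤ m + ∫ x in O, g x (u n x) * u n x ∂(kap N) := by
    intro n
    have hH := s.toH1 (hu n)
    have i1 : IntegrableOn (fun _ => (1 : ℝ)) O (kap N) := integrableOn_const s.kapO.ne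
    have i2 := (s.igφ hH (h0 n) hH).integrableOn (s := O)
    have : m = ∫ x in O, (1 : ℝ) ∂(kap N) := by simp [m]
    rw [this, ← integral_add i1 i2]
    apply setIntegral_mono_on hH.l2.integrableOn (i1.add i2) s.hO.measurableSet
    intro x hx
    simp only [Pi.add_apply]
    have h1 := s.pow_le_g hx (h0 n x)
    have hp := s.hp2
    have hux := h0 n x
    rcases le_total (u n x) 1 with h | h
    · have := mul_nonneg (s.g0 x (u n x)) hux
      nlinarith
    · have : u n x ^ (2 : ℝ) ≤ u n x ^ p := Real.rpow_le_rpow_of_exponent_le h hp.le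
      rw [Real.rpow_two] at this
      linarith
  have hb : Tendsto (fun n => τ n ^ 2 * (m + θ * C₀) + θ / 2 * (τ n * |ε n|)) ℱ (𝓝 0) := by
    have := ((hτl.pow 2).mul_const (m + θ * C₀)).add (hel.const_mul (θ / 2))
    simpa using this
  have hIb : ∀ n, τ n ^ 2 * (m + ∫ x in O, g x (u n x) * u n x ∂(kap N)) ≤ τ n ^ 2 * (m + θ * C₀) + θ / 2 * (τ n * |ε n|) := by
    intro n
    calc _ ≤ τ n ^ 2 * (m + θ * (C₀ + |ε n| * t n / 2)) := by gcongr; exact hI n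
      _ = τ n ^ 2 * (m + θ * C₀) + θ / 2 * ((τ n ^ 2 * t n) * |ε n|) := by ring
      _ = _ := by rw [hττ]
  have hO0 : Tendsto (fun n => ∫ x in O, v n x ^ 2 ∂(kap N)) ℱ (𝓝 0) := by
    refine tendsto_of_tendsto_of_tendsto_of_le_of_le tendsto_const_nhds hb
      (fun n => integral_nonneg fun x => by positivity) (fun n => ?_)
    refine le_trans ?_ (hIb n)
    simp only [hv, mul_pow]
    rw [integral_const_mul]
    gcongr
    exact hO1 n
  have hν := s.hν
  have hfin := s.l2_vanish ℱ v hvW hv0 _ (fun n => mul_nonneg (hτ0 n) (abs_nonneg _)) hel hsup hO0 hvQ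
    (show 0 < 1 / (3 * ν) by positivity)
  have hFalse : ∀ᶠ n in ℱ, False := by
    filter_upwards [hfin, hb.eventually_lt_const (show (0:ℝ) < 1 / 3 by norm_num),
      hel.eventually_lt_const (show (0:ℝ) < 1 / 3 by norm_num), htl.eventually_gt_atTop 0] with n h1 h2 h3 h4
    have hH := s.toH1 (hu n)
    have iu := s.igφ hH (h0 n) hH
    have h5 : t n ^ 2 ≤ |ε n| * t n + ∫ x, g x (u n x) * u n x ∂(kap N) := by
      have := hPS n _ (hu n)
      rw [s.PD_self] at this
      have a1 := le_abs_self (nW W (u n) - ∫ x, g x (u n x) * u n x ∂(kap N))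
      have a2 : ε n * √(nW W (u n)) ≤ |ε n| * t n := by gcongr; exact le_abs_self _
      rw [ht2]; linarith
    have h6 : ∫ x, g x (u n x) * u n x ∂(kap N) ≤ (∫ x in O, g x (u n x) * u n x ∂(kap N)) + ν * ∫ x, u n x ^ 2 ∂(kap N) := by
      rw [← integral_indicator s.hO.measurableSet, ← integral_const_mul,
        ← integral_add (iu.indicator s.hO.measurableSet) (hH.l2.const_mul ν)]
      apply integral_mono iu ((iu.indicator s.hO.measurableSet).add (hH.l2.const_mul ν))
      intro x
      simp only [Pi.add_apply]
      by_cases hx : x ∈ O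
      · rw [Set.indicator_of_mem hx]
        have : 0 ≤ ν * u n x ^ 2 := by positivity
        linarith
      · rw [Set.indicator_of_notMem hx]
        have := mul_le_mul_of_nonneg_right (s.gout x _ hx (h0 n x)) (h0 n x)
        nlinarith
    have h7 : ∫ x, v n x ^ 2 ∂(kap N) = τ n ^ 2 * ∫ x, u n x ^ 2 ∂(kap N) := by
      simp only [hv, mul_pow]; rw [integral_const_mul]
    have h8 := hIb n
    have hm : 0 ≤ m := measureReal_nonneg
    have h9 : τ n ^ 2 * t n ^ 2 = 1 := by
      simp only [hτ]; rw [← mul_pow, inv_mul_cancel₀ h4.ne']; simp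
    have h10 : τ n ^ 2 * t n ^ 2 ≤ τ n ^ 2 * (|ε n| * t n + ((∫ x in O, g x (u n x) * u n x ∂(kap N)) + ν * ∫ x, u n x ^ 2 ∂(kap N))) := by
      gcongr; linarith
    have h11 : τ n ^ 2 * (|ε n| * t n) = τ n * |ε n| := by
      rw [mul_left_comm, hττ]; ring
    have h12 : ν * (τ n ^ 2 * ∫ x, u n x ^ 2 ∂(kap N)) < 1 / 3 := by
      rw [← h7]
      rw [lt_div_iff₀ (by positivity)] at h1
      linarith
    have h13 : 0 ≤ τ n ^ 2 * m := by positivity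
    nlinarith
  rw [hℱ, eventually_inf] at hFalse
  obtain ⟨A, hA, B, hB, hAB⟩ := hFalse
  obtain ⟨M, hM'⟩ := mem_atTop_sets.1 hA
  obtain ⟨B', hB', hBB⟩ := mem_comap.1 hB
  obtain ⟨T, hT⟩ := mem_atTop_sets.1 hB'
  have hlarge : ∀ n ≥ M, t n ≤ T := by
    intro n hn
    by_contra h
    push Not at h
    exact hAB n ⟨hM' n hn, hBB (hT _ h.le)⟩
  obtain ⟨T', hT'⟩ := ((Finset.range M).image t).bddAbove
  refine ⟨(max T T') ^ 2, fun n => ?_⟩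
  rw [← ht2]
  have := ht0 n
  have : t n ≤ max T T' := by
    by_cases hn : n < M
    · exact (hT' (by simp; exact ⟨n, hn, rfl⟩)).trans (le_max_right _ _)
    · exact (hlarge n (not_lt.1 hn)).trans (le_max_left _ _)
  gcongr
end Setup

namespace Setup
variable {N : ℕ} {p q β ν M₀ : ℝ} {W : En N → ℝ} {O : Set (En N)} {g G : En N → ℝ → ℝ}

lemma comp_hw (s : Setup N p q β ν M₀ W O g G) {u : En N → ℝ} (hu : HW W u) {ψ ψ' : ℝ → ℝ}
    (hc : ContDiff ℝ 1 (fun x => ψ (u x))) (hd : ∀ x, HasDerivAt ψ (ψ' (u x)) (u x)) {D : ℝ}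
    (h1 : ∀ x, |ψ' (u x)| ≤ D) (h2 : ∀ x, |ψ (u x)| ≤ D * |u x|) :
    HW W (fun x => ψ (u x)) ∧ nW W (fun x => ψ (u x)) ≤ D ^ 2 * nW W u := by
  have e : ∀ x, ‖gradient (fun x => ψ (u x)) x‖ ^ 2 + W x * ψ (u x) ^ 2 ≤ D ^ 2 * (‖gradient u x‖ ^ 2 + W x * u x ^ 2) := by
    intro x
    rw [grad_comp hu.c1 (hd x), norm_smul, mul_pow, Real.norm_eq_abs, ← sq_abs (ψ (u x)), mul_add, ← sq_abs (u x)]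
    have a1 := h1 x
    have a2 := h2 x
    have hD : 0 ≤ D := (abs_nonneg _).trans a1
    have hW := (s.W0 x).le
    have : |ψ (u x)| ^ 2 ≤ (D * |u x|) ^ 2 := by gcongr
    have h3 : |ψ' (u x)| ^ 2 * ‖gradient u x‖ ^ 2 ≤ D ^ 2 * ‖gradient u x‖ ^ 2 := by gcongr
    have h4 : W x * |ψ (u x)| ^ 2 ≤ W x * (D * |u x|) ^ 2 := by gcongr
    nlinarith
  have hI : Integrable (fun x => ‖gradient (fun x => ψ (u x)) x‖ ^ 2 + W x * ψ (u x) ^ 2) (kap N) := by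
    refine (hu.int.const_mul (D ^ 2)).mono' ?_ (Eventually.of_forall fun x => ?_)
    · exact (((grad_cont hc).norm.pow 2).add (s.hW.mul (hc.continuous.pow 2))).aestronglyMeasurable
    · have hW := (s.W0 x).le
      rw [Real.norm_of_nonneg (by positivity)]
      exact e x
  refine ⟨⟨hc, hI⟩, ?_⟩
  unfold nW
  rw [← integral_const_mul]
  exact integral_mono hI (hu.int.const_mul _) e

lemma holder (s : Setup N p q β ν M₀ W O g G) {u V : En N → ℝ} (hu : H1 u) (h0 : ∀ x, 0 ≤ u x) (hV : H1 V)
    (hV0 : ∀ x, 0 ≤ V x) :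
    IntegrableOn (fun x => u x ^ (p - 2) * V x ^ 2) O (kap N) ∧
    ∫ x in O, u x ^ (p - 2) * V x ^ 2 ∂(kap N) ≤ (∫ x in O, u x ^ p ∂(kap N)) ^ ((p - 2) / p) * (∫ x, V x ^ p ∂(kap N)) ^ (2 / p) := by
  have hp := s.hp2
  have hcu : Continuous fun x => u x ^ (p - 2) := hu.c1.continuous.rpow_const (fun x => Or.inr (by linarith))
  have hcv : Continuous fun x => V x ^ 2 := hV.c1.continuous.pow 2
  have hpq : (p / (p - 2)).HolderConjugate (p / 2) := by
    rw [Real.holderConjugate_iff]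
    constructor
    · rw [lt_div_iff₀ (by linarith)]; linarith
    · have : p - 2 ≠ 0 := by linarith
      field_simp; ring
  have e1 : ∀ x, (u x ^ (p - 2)) ^ (p / (p - 2)) = u x ^ p := fun x => by
    rw [← Real.rpow_mul (h0 x)]; congr 1
    have : p - 2 ≠ 0 := by linarith
    field_simp
  have e2 : ∀ x, (V x ^ 2) ^ (p / 2) = V x ^ p := fun x => by
    rw [← Real.rpow_natCast (V x) 2, ← Real.rpow_mul (hV0 x)]; congr 1
    push_cast; field_simp
  have m1 : MemLp (fun x => u x ^ (p - 2)) (ENNReal.ofReal (p / (p - 2))) ((kap N).restrict O) := by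
    rw [← integrable_norm_rpow_iff hcu.aestronglyMeasurable (by simp; exact div_pos (by linarith) (by linarith)) (by simp)]
    rw [ENNReal.toReal_ofReal hpq.nonneg]
    refine ((s.ip' hu h0).integrableOn (s := O)).congr (Eventually.of_forall fun x => ?_)
    simp only
    rw [Real.norm_of_nonneg (Real.rpow_nonneg (h0 x) _), e1]
  have m2 : MemLp (fun x => V x ^ 2) (ENNReal.ofReal (p / 2)) ((kap N).restrict O) := by
    rw [← integrable_norm_rpow_iff hcv.aestronglyMeasurable (by simp; linarith) (by simp)]
    rw [ENNReal.toReal_ofReal hpq.symm.nonneg]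
    refine ((s.ip' hV hV0).integrableOn (s := O)).congr (Eventually.of_forall fun x => ?_)
    simp only
    rw [Real.norm_of_nonneg (by positivity), e2]
  constructor
  · have iu := (s.ip' hu h0)
    have iv := (s.ip' hV hV0)
    refine ((iu.add iv).integrableOn (s := O)).mono' (hcu.mul hcv).aestronglyMeasurable (Eventually.of_forall fun x => ?_)
    have a := h0 x
    have b := hV0 x
    simp only [Pi.add_apply]
    rw [Real.norm_of_nonneg (by positivity)]
    rcases le_total (u x) (V x) with h | h
    · have : u x ^ (p - 2) * V x ^ 2 ≤ V x ^ (p - 2) * V x ^ 2 := by gcongr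
      rw [s.rpow_split2 b] at this
      have : 0 ≤ u x ^ p := by positivity
      linarith
    · have : u x ^ (p - 2) * V x ^ 2 ≤ u x ^ (p - 2) * u x ^ 2 := by gcongr
      rw [s.rpow_split2 a] at this
      have : 0 ≤ V x ^ p := by positivity
      linarith
  · have := integral_mul_le_Lp_mul_Lq_of_nonneg hpq (μ := (kap N).restrict O)
      (Eventually.of_forall fun x => Real.rpow_nonneg (h0 x) _) (Eventually.of_forall fun x => sq_nonneg (V x)) m1 m2
    refine this.trans ?_
    simp_rw [e1, e2]
    rw [one_div_div, one_div_div]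
    have h1 : ∫ x in O, V x ^ p ∂(kap N) ≤ ∫ x, V x ^ p ∂(kap N) :=
      setIntegral_le_integral (s.ip' hV hV0) (Eventually.of_forall fun x => Real.rpow_nonneg (hV0 x) _)
    have h2 : 0 ≤ ∫ x in O, V x ^ p ∂(kap N) := integral_nonneg fun x => Real.rpow_nonneg (hV0 x) _
    have h3 : 0 ≤ ∫ x in O, u x ^ p ∂(kap N) := integral_nonneg fun x => Real.rpow_nonneg (h0 x) _
    gcongr

/-- interpolation of the subcritical term -/
lemma subcrit (s : Setup N p q β ν M₀ W O g G) {η : ℝ} (hη : 0 < η) :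
    ∃ C, 0 ≤ C ∧ ∀ t, 0 ≤ t → β * t ^ q ≤ η * t ^ (p - 1) + C * t := by
  have hq1 := s.hq1
  have hq2 := s.hq2
  have hβ := s.hβ
  set A := (β / η) ^ (1 / (p - 1 - q)) with hA
  have hA0 : 0 < A := by positivity
  refine ⟨β * A ^ (q - 1), by positivity, fun t ht => ?_⟩
  rcases ht.eq_or_lt with h | h
  · rw [← h, Real.zero_rpow (by linarith), Real.zero_rpow (by linarith)]; simp
  rcases le_total t A with h1 | h1
  · have : t ^ q = t ^ (q - 1) * t := by
      rw [← Real.rpow_add_one h.ne']; congr 1; ring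
    rw [this]
    have h2 : t ^ (q - 1) ≤ A ^ (q - 1) := by gcongr
    have h3 : β * (t ^ (q - 1) * t) ≤ β * (A ^ (q - 1) * t) := by gcongr
    have h4 : 0 ≤ η * t ^ (p - 1) := by positivity
    linarith
  · have h2 : t ^ (p - 1) = t ^ (p - 1 - q) * t ^ q := by
      rw [← Real.rpow_add h]; congr 1; ring
    have h3 : A ^ (p - 1 - q) ≤ t ^ (p - 1 - q) := by gcongr
    have h4 : A ^ (p - 1 - q) = β / η := by
      rw [hA, ← Real.rpow_mul (by positivity), one_div_mul_cancel (by linarith), Real.rpow_one]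
    rw [h4] at h3
    rw [h2]
    have h5 : (β / η) * t ^ q ≤ t ^ (p - 1 - q) * t ^ q := by gcongr
    have h6 : η * ((β / η) * t ^ q) ≤ η * (t ^ (p - 1 - q) * t ^ q) := by gcongr
    have h7 : η * ((β / η) * t ^ q) = β * t ^ q := by field_simp
    have h8 : 0 ≤ β * A ^ (q - 1) * t := by positivity
    linarith

/-- the one-function Moser estimate -/
lemma moser (s : Setup N p q β ν M₀ W O g G) {u : En N → ℝ} (hu : HW W u) (h0 : ∀ x, 0 ≤ u x)
    {m m' : ℝ → ℝ} {r B : ℝ} (hr : 0 ≤ r) (hr1 : r ≤ 1)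
    (hmd : ∀ t, 0 ≤ t → HasDerivAt m (m' t) t) (hm1 : ∀ t, 0 ≤ t → 1 ≤ m t) (hmB : ∀ t, 0 ≤ t → m t ≤ B)
    (hm'0 : ∀ t, 0 ≤ t → 0 ≤ t * m' t) (hm' : ∀ t, 0 ≤ t → t * m' t ≤ r * m t)
    (hmp : ∀ t, 0 ≤ t → m t ^ 2 ≤ (1 + t) ^ (p - 2))
    (hmc : ContDiff ℝ 1 (fun x => m (u x)))
    {e : ℝ} (hPS : ∀ φ : En N → ℝ, HW W φ → |PD W g u φ| ≤ e * √(nW W φ))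
    {τ : ℝ} (hτ : ∫ x in O, u x ^ p ∂(kap N) ≤ τ)
    {η Cη : ℝ} (hη : 0 < η) (hC0 : 0 ≤ Cη) (hC : ∀ t, 0 ≤ t → β * t ^ q ≤ η * t ^ (p - 1) + Cη * t) :
    H1 (fun x => u x * m (u x)) ∧
    (1 - (1 + r) ^ 2 * (1 + η) * (τ ^ ((p - 2) / p) / Sconst N)) * Qn (fun x => u x * m (u x)) ≤
      ((1 + r) ^ 2 * (Cη + ν) + 1) * (2 ^ (p - 2) * ((∫ x, u x ^ 2 ∂(kap N)) + ∫ x, u x ^ p ∂(kap N)))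
       + (1 + r) ^ 2 * (|e| * (3 * B ^ 2 * √(nW W u))) := by
  have hp := s.hp2
  have hν := s.hν
  have hH := s.toH1 hu
  have hB1 : 1 ≤ B := (hm1 0 le_rfl).trans (hmB 0 le_rfl)
  -- V
  have hVd : ∀ t, 0 ≤ t → HasDerivAt (fun t => t * m t) (m t + t * m' t) t := fun t ht => by
    refine HasDerivAt.congr_deriv ((hasDerivAt_id t).mul (hmd t ht)) ?_
    simp
  have hVb : ∀ t, 0 ≤ t → |m t + t * m' t| ≤ 2 * B := fun t ht => by
    have a1 := hm1 t ht
    have a2 := hmB t ht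
    have a3 := hm'0 t ht
    have a4 := hm' t ht
    rw [abs_of_nonneg (by linarith)]
    nlinarith
  obtain ⟨hVW, -⟩ := s.comp_hw hu (ψ := fun t => t * m t) (ψ' := fun t => m t + t * m' t)
    (hu.c1.mul hmc) (fun x => hVd _ (h0 x)) (D := 2 * B) (fun x => hVb _ (h0 x)) (fun x => by
      have a1 := hm1 _ (h0 x)
      have a2 := hmB _ (h0 x)
      have a3 := h0 x
      rw [abs_of_nonneg (by positivity), abs_of_nonneg a3]
      nlinarith)
  have hφd : ∀ t, 0 ≤ t → HasDerivAt (fun t => t * m t ^ 2) (m t ^ 2 + 2 * m t * (t * m' t)) t := fun t ht => by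
    refine HasDerivAt.congr_deriv ((hasDerivAt_id t).mul ((hmd t ht).pow 2)) ?_
    simp; ring
  obtain ⟨hφW, hφn⟩ := s.comp_hw hu (ψ := fun t => t * m t ^ 2) (ψ' := fun t => m t ^ 2 + 2 * m t * (t * m' t))
    (hu.c1.mul (hmc.pow 2)) (fun x => hφd _ (h0 x)) (D := 3 * B ^ 2) (fun x => by
      have a1 := hm1 _ (h0 x)
      have a2 := hmB _ (h0 x)
      have a3 := hm'0 _ (h0 x)
      have a4 := hm' _ (h0 x)
      rw [abs_of_nonneg (by positivity)]
      have a5 : m (u x) ^ 2 ≤ B ^ 2 := by gcongr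
      have a6 : u x * m' (u x) ≤ m (u x) := by nlinarith
      nlinarith) (fun x => by
      have a1 := hm1 _ (h0 x)
      have a2 := hmB _ (h0 x)
      have a3 := h0 x
      rw [abs_of_nonneg (by positivity), abs_of_nonneg a3]
      have a5 : m (u x) ^ 2 ≤ B ^ 2 := by gcongr
      nlinarith)
  set V : En N → ℝ := fun x => u x * m (u x) with hV
  set φ : En N → ℝ := fun x => u x * m (u x) ^ 2 with hφ
  have hV1 := s.toH1 hVW
  have hφ1 := s.toH1 hφW
  have hV0 : ∀ x, 0 ≤ V x := fun x => mul_nonneg (h0 x) (by have := hm1 _ (h0 x); linarith)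
  refine ⟨hV1, ?_⟩
  -- key gradient estimate
  have hPφ := hPS φ hφW
  have hsφ : √(nW W φ) ≤ 3 * B ^ 2 * √(nW W u) := by
    rw [show 3 * B ^ 2 * √(nW W u) = √((3 * B ^ 2) ^ 2 * nW W u) by
      rw [Real.sqrt_mul (by positivity), Real.sqrt_sq (by positivity)]]
    exact Real.sqrt_le_sqrt hφn
  have hE : e * √(nW W φ) ≤ |e| * (3 * B ^ 2 * √(nW W u)) :=
    (mul_le_mul_of_nonneg_right (le_abs_self e) (Real.sqrt_nonneg _)).trans
      (mul_le_mul_of_nonneg_left hsφ (abs_nonneg e))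
  have hpt : ∀ x, ‖gradient V x‖ ^ 2 ≤ (1 + r) ^ 2 * (⟪gradient u x, gradient φ x⟫ + W x * u x * φ x) := by
    intro x
    have g1 : gradient V x = (m (u x) + u x * m' (u x)) • gradient u x := grad_comp hu.c1 (hVd _ (h0 x))
    have g2 : gradient φ x = (m (u x) ^ 2 + 2 * m (u x) * (u x * m' (u x))) • gradient u x := grad_comp hu.c1 (hφd _ (h0 x))
    rw [g1, g2, norm_smul, mul_pow, Real.norm_eq_abs, sq_abs, real_inner_smul_right, real_inner_self_eq_norm_sq]
    have a1 := hm1 _ (h0 x)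
    have a3 := hm'0 _ (h0 x)
    have a4 := hm' _ (h0 x)
    have a5 := h0 x
    have a6 := (s.W0 x).le
    have b1 : (m (u x) + u x * m' (u x)) ^ 2 ≤ (1 + r) ^ 2 * m (u x) ^ 2 := by
      rw [← mul_pow]
      gcongr
      nlinarith
    have b2 : 0 ≤ W x * u x * φ x := by simp only [hφ]; positivity
    have b3 : m (u x) ^ 2 ≤ m (u x) ^ 2 + 2 * m (u x) * (u x * m' (u x)) := by
      have : 0 ≤ 2 * m (u x) * (u x * m' (u x)) := by positivity
      linarith
    calc (m (u x) + u x * m' (u x)) ^ 2 * ‖gradient u x‖ ^ 2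
        ≤ ((1 + r) ^ 2 * m (u x) ^ 2) * ‖gradient u x‖ ^ 2 := by gcongr
      _ ≤ ((1 + r) ^ 2 * (m (u x) ^ 2 + 2 * m (u x) * (u x * m' (u x)))) * ‖gradient u x‖ ^ 2 := by gcongr
      _ = (1 + r) ^ 2 * ((m (u x) ^ 2 + 2 * m (u x) * (u x * m' (u x))) * ‖gradient u x‖ ^ 2) := by ring
      _ ≤ _ := by gcongr; linarith
  have iE := s.iE hu hφW
  have hG : ∫ x, ‖gradient V x‖ ^ 2 ∂(kap N) ≤ (1 + r) ^ 2 * ((∫ x, g x (u x) * φ x ∂(kap N)) + |e| * (3 * B ^ 2 * √(nW W u))) := by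
    have h1 : ∫ x, ‖gradient V x‖ ^ 2 ∂(kap N) ≤ (1 + r) ^ 2 * ∫ x, (⟪gradient u x, gradient φ x⟫ + W x * u x * φ x) ∂(kap N) := by
      rw [← integral_const_mul]
      exact integral_mono hV1.g (iE.const_mul _) hpt
    refine h1.trans ?_
    gcongr
    have := le_abs_self (PD W g u φ)
    unfold PD at this hPφ
    linarith
  -- the nonlinear term
  obtain ⟨iH, hHol⟩ := s.holder hH h0 hV1 hV0
  have hgφ : ∫ x, g x (u x) * φ x ∂(kap N) ≤ (1 + η) * (∫ x in O, u x ^ (p - 2) * V x ^ 2 ∂(kap N)) + (Cη + ν) * ∫ x, V x ^ 2 ∂(kap N) := by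
    have i1 : Integrable (O.indicator fun x => u x ^ (p - 2) * V x ^ 2) (kap N) := iH.integrable_indicator s.hO.measurableSet
    have i2 := i1.const_mul (1 + η)
    have i3 := hV1.l2.const_mul (Cη + ν)
    rw [← integral_indicator s.hO.measurableSet, ← integral_const_mul, ← integral_const_mul, ← integral_add i2 i3]
    apply integral_mono (s.igφ hH h0 hφ1) (i2.add i3)
    intro x
    simp only [Pi.add_apply]
    have a5 := h0 x
    have eV : u x * φ x = V x ^ 2 := by simp only [hV, hφ]; ring
    have a1 := hm1 _ (h0 x)
    have hφ0 : 0 ≤ φ x := by simp only [hφ]; positivity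
    by_cases hx : x ∈ O
    · rw [Set.indicator_of_mem hx, s.gin x _ hx a5]
      have h1 := hC _ a5
      have h2 : u x ^ (p - 1) = u x ^ (p - 2) * u x := by
        rw [← Real.rpow_add_one' a5 (by linarith)]; congr 1; ring
      have h3 : (β * u x ^ q + u x ^ (p - 1)) * φ x ≤ ((1 + η) * (u x ^ (p - 2) * u x) + Cη * u x) * φ x := by
        refine mul_le_mul_of_nonneg_right ?_ hφ0; rw [h2] at h1 ⊢; linarith
      have h4 : 0 ≤ ν * V x ^ 2 := by positivity
      have h5 : ((1 + η) * (u x ^ (p - 2) * u x) + Cη * u x) * φ x = (1 + η) * (u x ^ (p - 2) * (u x * φ x)) + Cη * (u x * φ x) := by ring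
      rw [h5, eV] at h3
      linarith
    · rw [Set.indicator_of_notMem hx]
      have h1 := mul_le_mul_of_nonneg_right (s.gout x _ hx a5) hφ0
      rw [mul_assoc, eV] at h1
      have : 0 ≤ Cη * V x ^ 2 := by positivity
      linarith
  have hS := s.hS
  have hHol2 : ∫ x in O, u x ^ (p - 2) * V x ^ 2 ∂(kap N) ≤ (τ ^ ((p - 2) / p) / Sconst N) * Qn V := by
    refine hHol.trans ?_
    have h1 := s.sob hV1
    simp only [abs_of_nonneg (hV0 _)] at h1
    rw [← le_div_iff₀' hS] at h1
    have h3 : 0 ≤ ∫ x in O, u x ^ p ∂(kap N) := integral_nonneg fun x => Real.rpow_nonneg (h0 x) _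
    have h2 : (∫ x in O, u x ^ p ∂(kap N)) ^ ((p - 2) / p) ≤ τ ^ ((p - 2) / p) := by
      gcongr
    have h4 : 0 ≤ τ ^ ((p - 2) / p) := Real.rpow_nonneg (h3.trans hτ) _
    have h5 : 0 ≤ (∫ x, V x ^ p ∂(kap N)) ^ (2 / p) := Real.rpow_nonneg (integral_nonneg fun x => Real.rpow_nonneg (hV0 x) _) _
    calc _ ≤ τ ^ ((p - 2) / p) * (Qn V / Sconst N) := mul_le_mul h2 h1 h5 h4
      _ = _ := by ring
  have hV2 : ∫ x, V x ^ 2 ∂(kap N) ≤ 2 ^ (p - 2) * ((∫ x, u x ^ 2 ∂(kap N)) + ∫ x, u x ^ p ∂(kap N)) := by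
    have ip := s.ip' hH h0
    rw [← integral_add hH.l2 ip, ← integral_const_mul]
    apply integral_mono hV1.l2 ((hH.l2.add ip).const_mul _)
    intro x
    have a5 := h0 x
    have h1 := hmp _ a5
    simp only [hV, mul_pow, Pi.add_apply]
    have h2 : u x ^ 2 * m (u x) ^ 2 ≤ u x ^ 2 * (1 + u x) ^ (p - 2) := by gcongr
    refine h2.trans ?_
    rcases le_total (u x) 1 with h | h
    · have h3 : (1 + u x) ^ (p - 2) ≤ 2 ^ (p - 2) := by gcongr <;> linarith
      have h4 : u x ^ 2 * (1 + u x) ^ (p - 2) ≤ u x ^ 2 * 2 ^ (p - 2) := by gcongr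
      have h5 : 0 ≤ (2:ℝ) ^ (p - 2) * u x ^ p := by positivity
      linarith
    · have h3 : (1 + u x) ^ (p - 2) ≤ (2 * u x) ^ (p - 2) := by gcongr <;> linarith
      rw [Real.mul_rpow (by norm_num) a5] at h3
      have h4 : u x ^ 2 * (1 + u x) ^ (p - 2) ≤ u x ^ 2 * (2 ^ (p - 2) * u x ^ (p - 2)) := by gcongr
      have h5 : 0 ≤ (2:ℝ) ^ (p - 2) * u x ^ 2 := by positivity
      rw [show u x ^ 2 * ((2:ℝ) ^ (p - 2) * u x ^ (p - 2)) = 2 ^ (p - 2) * (u x ^ (p - 2) * u x ^ 2) by ring, s.rpow_split2 a5] at h4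
      linarith
  have hQ : Qn V = (∫ x, ‖gradient V x‖ ^ 2 ∂(kap N)) + ∫ x, V x ^ 2 ∂(kap N) := integral_add hV1.g hV1.l2
  set I2 := ∫ x, V x ^ 2 ∂(kap N)
  set A := τ ^ ((p - 2) / p) / Sconst N
  have f1 : ∫ x, g x (u x) * φ x ∂(kap N) ≤ (1 + η) * (A * Qn V) + (Cη + ν) * I2 := by
    refine hgφ.trans ?_
    gcongr
  have f2 : ∫ x, ‖gradient V x‖ ^ 2 ∂(kap N) ≤ (1 + r) ^ 2 * (((1 + η) * (A * Qn V) + (Cη + ν) * I2) + |e| * (3 * B ^ 2 * √(nW W u))) := by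
    refine hG.trans ?_
    gcongr
  have f3 : ((1 + r) ^ 2 * (Cη + ν) + 1) * I2 ≤ ((1 + r) ^ 2 * (Cη + ν) + 1) * (2 ^ (p - 2) * ((∫ x, u x ^ 2 ∂(kap N)) + ∫ x, u x ^ p ∂(kap N))) := by
    gcongr
  have f4 : Qn V ≤ (1 + r) ^ 2 * (((1 + η) * (A * Qn V) + (Cη + ν) * I2) + |e| * (3 * B ^ 2 * √(nW W u))) + I2 := by linarith
  linarith
end Setup

namespace Setup
variable {N : ℕ} {p q β ν M₀ : ℝ} {W : En N → ℝ} {O : Set (En N)} {g G : En N → ℝ → ℝ}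

lemma mol {N : ℕ} {p L r : ℝ} (hL : 1 ≤ L) (hr : 0 < r) (hrp : 2 * r ≤ p - 2) : ∃ m m' : ℝ → ℝ,
    (∀ t, 0 ≤ t → HasDerivAt m (m' t) t) ∧ (∀ t, 0 ≤ t → 1 ≤ m t) ∧ (∀ t, 0 ≤ t → m t ≤ L ^ r) ∧
    (∀ t, 0 ≤ t → 0 ≤ t * m' t) ∧ (∀ t, 0 ≤ t → t * m' t ≤ r * m t) ∧
    (∀ t, 0 ≤ t → m t ^ 2 ≤ (1 + t) ^ (p - 2)) ∧ (∀ t, L ≤ t → ((1 + L) / 2) ^ r ≤ m t) ∧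
    (∀ u : En N → ℝ, ContDiff ℝ 1 u → (∀ x, 0 ≤ u x) → ContDiff ℝ 1 (fun x => m (u x))) := by
  have hL0 : 0 < L := by linarith
  set y : ℝ → ℝ := fun t => L * (1 + t) / (L + t) with hy
  have y1 : ∀ t, 0 ≤ t → 1 ≤ y t := fun t ht => by
    simp only [hy]; rw [le_div_iff₀ (by linarith)]; nlinarith
  have yL : ∀ t, 0 ≤ t → y t ≤ L := fun t ht => by
    simp only [hy]; rw [div_le_iff₀ (by linarith)]; nlinarith
  have yt : ∀ t, 0 ≤ t → y t ≤ 1 + t := fun t ht => by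
    simp only [hy]; rw [div_le_iff₀ (by linarith)]; nlinarith
  have y2 : ∀ t, L ≤ t → (1 + L) / 2 ≤ y t := fun t ht => by
    simp only [hy]; rw [le_div_iff₀ (by linarith)]; nlinarith
  have yd : ∀ t, 0 ≤ t → HasDerivAt y (L * (L - 1) / (L + t) ^ 2) t := fun t ht => by
    have h : L + t ≠ 0 := by linarith
    refine HasDerivAt.congr_deriv ((((hasDerivAt_id t).const_add 1).const_mul L).div ((hasDerivAt_id t).const_add L) h) ?_
    simp only [id]; ring
  have key : ∀ t, 0 ≤ t → t * (L * (L - 1) / (L + t) ^ 2 * r * y t ^ (r - 1)) = r * y t ^ r * (t * (L - 1) / ((L + t) * (1 + t))) := fun t ht => by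
    have h0 : 0 < y t := by have := y1 t ht; linarith
    rw [Real.rpow_sub_one h0.ne']
    simp only [hy]
    have h : L + t ≠ 0 := by linarith
    have h' : 1 + t ≠ 0 := by linarith
    field_simp
  refine ⟨fun t => y t ^ r, fun t => L * (L - 1) / (L + t) ^ 2 * r * y t ^ (r - 1), ?_, ?_, ?_, ?_, ?_, ?_, ?_, ?_⟩
  · intro t ht
    exact (yd t ht).rpow_const (Or.inl (by have := y1 t ht; linarith))
  · intro t ht; exact Real.one_le_rpow (y1 t ht) hr.le
  · intro t ht; exact Real.rpow_le_rpow (by have := y1 t ht; linarith) (yL t ht) hr.le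
  · intro t ht
    beta_reduce
    have h0 : 0 < y t := by have := y1 t ht; linarith
    have h1 : 0 ≤ L - 1 := by linarith
    positivity
  · intro t ht
    beta_reduce
    rw [key t ht]
    have h0 : 0 < y t := by have := y1 t ht; linarith
    apply mul_le_of_le_one_right (by positivity)
    rw [div_le_one (by positivity)]
    nlinarith
  · intro t ht
    have h0 : 0 < y t := by have := y1 t ht; linarith
    beta_reduce
    rw [← Real.rpow_natCast, ← Real.rpow_mul h0.le]
    calc y t ^ (r * (2 : ℕ)) ≤ (1 + t) ^ (r * (2 : ℕ)) := Real.rpow_le_rpow h0.le (yt t ht) (by positivity)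
      _ ≤ (1 + t) ^ (p - 2) := Real.rpow_le_rpow_of_exponent_le (by linarith) (by push_cast; linarith)
  · intro t ht
    exact Real.rpow_le_rpow (by linarith) (y2 t ht) hr.le
  · intro u hu h0
    have : ContDiff ℝ 1 (fun x => y (u x)) := by
      simp only [hy]
      exact (contDiff_const.mul (contDiff_const.add hu)).div (contDiff_const.add hu) (fun x => by have := h0 x; linarith)
    exact this.rpow_const_of_ne (fun x => by have := y1 _ (h0 x); linarith)

lemma ui (s : Setup N p q β ν M₀ W O g G) (u : ℕ → En N → ℝ) (hu : ∀ n, HW W (u n)) (h0 : ∀ n x, 0 ≤ u n x)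
    {c : ℝ} (hc0 : 0 < c) (hc : c < (1 / 2 - 1 / (q + 1)) * Sconst N ^ ((N : ℝ) / 2))
    (hJ : Tendsto (fun n => (1 / 2) * nW W (u n) - ∫ x, G x (u n x) ∂(kap N)) atTop (𝓝 c))
    (ε : ℕ → ℝ) (hε : Tendsto ε atTop (𝓝 0))
    (hPS : ∀ n, ∀ φ : En N → ℝ, HW W φ → |PD W g (u n) φ| ≤ ε n * √(nW W φ))
    {T : ℝ} (hT : ∀ n, nW W (u n) ≤ T) {δ : ℝ} (hδ : 0 < δ) :
    ∃ L : ℝ, 1 ≤ L ∧ ∀ᶠ n in atTop, ∫ x in {x | L < u n x}, u n x ^ p ∂(kap N) ≤ δ := by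
  have hp := s.hp2
  have hS := s.hS
  have hν := s.hν
  have hM := s.hM
  have hθ := s.theta_pos
  have hT0 : 0 ≤ T := (s.nW_nonneg _).trans (hT 0)
  have hεa : Tendsto (fun n => |ε n|) atTop (𝓝 0) := by simpa using hε.abs
  set θ := 1 / 2 - 1 / (q + 1) with hθd
  obtain ⟨τ, hτ1, hτ2⟩ := exists_between (show θ⁻¹ * c < Sconst N ^ ((N : ℝ) / 2) by
    rwa [inv_mul_lt_iff₀ hθ])
  have hτ0 : 0 < τ := lt_trans (by positivity) hτ1
  set A := τ ^ ((p - 2) / p) / Sconst N with hA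
  have hA0 : 0 ≤ A := by positivity
  have hA1 : A < 1 := by
    rw [hA, div_lt_one hS]
    have hN0 : (0 : ℝ) < N := by have := s.hN; exact_mod_cast (by omega)
    have e1 : (p - 2) / p = 2 / N := by rw [s.hp]; exact twoStar_ratio s.hN
    rw [e1]
    calc τ ^ (2 / (N : ℝ)) < (Sconst N ^ ((N : ℝ) / 2)) ^ (2 / (N : ℝ)) := Real.rpow_lt_rpow hτ0.le hτ2 (by positivity)
      _ = Sconst N := by
        rw [← Real.rpow_mul hS.le, div_mul_div_cancel₀ (by norm_num), div_self hN0.ne', Real.rpow_one]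
  obtain ⟨r, hr0, hr1, hrp, hrA⟩ : ∃ r : ℝ, 0 < r ∧ r ≤ 1 ∧ 2 * r ≤ p - 2 ∧ (1 + r) ^ 2 * (1 + r) * A < 1 := by
    have h1 : Tendsto (fun r : ℝ => (1 + r) ^ 2 * (1 + r) * A) (𝓝[>] 0) (𝓝 ((1 + 0) ^ 2 * (1 + 0) * A)) :=
      (Continuous.tendsto (by fun_prop) 0).mono_left nhdsWithin_le_nhds
    have h2 := h1.eventually_lt_const (show (1 + 0) ^ 2 * (1 + 0) * A < 1 by linarith)
    have h3 : ∀ᶠ r : ℝ in 𝓝[>] 0, r < min 1 ((p - 2) / 2) :=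
      (eventually_lt_nhds (lt_min one_pos (by linarith))).filter_mono nhdsWithin_le_nhds
    obtain ⟨r, h4, h5, h6⟩ := (h2.and (h3.and self_mem_nhdsWithin)).exists
    rw [lt_min_iff] at h5
    exact ⟨r, h6, h5.1.le, by linarith [h5.2], h4⟩
  obtain ⟨Cη, hCη0, hCη⟩ := s.subcrit hr0
  set κ := (1 + r) ^ 2 * (1 + r) * A with hκ
  have hH := fun n => s.toH1 (hu n)
  have hQ : ∀ n, Qn (u n) ≤ (1 + M₀⁻¹) * T := fun n => (s.Qn_le (hu n)).trans (by gcongr; exact hT n)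
  set T1 := (1 + M₀⁻¹) * T
  have hT1 : 0 ≤ T1 := by positivity
  set T2 := (T1 / Sconst N) ^ (p / 2)
  have hp1 : ∀ n, ∫ x, u n x ^ p ∂(kap N) ≤ T2 := fun n => by
    have := s.pbound (hH n)
    simp only [abs_of_nonneg (h0 n _)] at this
    refine this.trans ?_
    have := Qn_nonneg (u n)
    have := hQ n
    show _ ≤ (T1 / Sconst N) ^ (p / 2)
    gcongr
  set D := ((1 + r) ^ 2 * (Cη + ν) + 1) * (2 ^ (p - 2) * (T1 + T2)) + (1 + r) ^ 2 * 1 with hD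
  have hT2 : 0 ≤ T2 := by positivity
  have hD0 : 0 ≤ D := by positivity
  set D2 := (D / (1 - κ) / Sconst N) ^ (p / 2) with hD2
  have hκ1 : 0 < 1 - κ := by linarith
  -- choice of L
  have hLt : Tendsto (fun L : ℝ => ((1 + L) / 2) ^ (r * p) * δ) atTop atTop := by
    apply Tendsto.atTop_mul_const hδ
    apply (tendsto_rpow_atTop (by positivity)).comp
    exact (tendsto_atTop_add_const_left _ _ tendsto_id).atTop_div_const (by norm_num)
  obtain ⟨L, hL1, hL⟩ := ((eventually_ge_atTop (1:ℝ)).and (hLt.eventually_ge_atTop D2)).exists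
  refine ⟨L, hL1, ?_⟩
  obtain ⟨m, m', hmd, hm1, hmB, hm'0, hm', hmp, hmL, hmc⟩ := mol (N := N) hL1 hr0 hrp
  have ev1 : ∀ᶠ n in atTop, ∫ x in O, u n x ^ p ∂(kap N) ≤ τ := by
    have l1 : Tendsto (fun n => θ⁻¹ * (((1 / 2) * nW W (u n) - ∫ x, G x (u n x) ∂(kap N)) + |ε n| * √T / 2)) atTop (𝓝 (θ⁻¹ * (c + 0 * √T / 2))) :=
      (hJ.add ((hεa.mul_const _).div_const _)).const_mul _
    filter_upwards [l1.eventually_lt_const (show θ⁻¹ * (c + 0 * √T / 2) < τ by simpa using hτ1)] with n hn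
    have h1 := s.intO_le (hu n) (h0 n) le_rfl (hPS n _ (hu n))
    have h2 : ∫ x in O, u n x ^ p ∂(kap N) ≤ ∫ x in O, g x (u n x) * u n x ∂(kap N) :=
      setIntegral_mono_on (s.ip' (hH n) (h0 n)).integrableOn (s.igφ (hH n) (h0 n) (hH n)).integrableOn s.hO.measurableSet
        (fun x hx => s.pow_le_g hx (h0 n x))
    refine h2.trans (h1.trans (le_trans ?_ hn.le))
    have := hT n
    gcongr
  have ev2 : ∀ᶠ n in atTop, |ε n| * (3 * (L ^ r) ^ 2 * √T) ≤ 1 := by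
    have := hεa.mul_const (3 * (L ^ r) ^ 2 * √T)
    rw [zero_mul] at this
    exact (this.eventually_lt_const one_pos).mono fun n hn => hn.le
  filter_upwards [ev1, ev2] with n hn1 hn2
  obtain ⟨hV, hVb⟩ := s.moser (hu n) (h0 n) hr0.le hr1 hmd hm1 hmB hm'0 hm' hmp (hmc _ (hu n).c1 (h0 n)) (hPS n) hn1 hr0 hCη0 hCη
  set V : En N → ℝ := fun x => u n x * m (u n x) with hVd
  have hV0 : ∀ x, 0 ≤ V x := fun x => mul_nonneg (h0 n x) (by have := hm1 _ (h0 n x); linarith)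
  have hQV : Qn V ≤ D / (1 - κ) := by
    rw [le_div_iff₀' hκ1]
    refine hVb.trans ?_
    rw [hD]
    have a1 := (l2_le_Qn (hH n)).trans (hQ n)
    have a2 := hp1 n
    have a3 : |ε n| * (3 * (L ^ r) ^ 2 * √(nW W (u n))) ≤ 1 := by
      refine le_trans ?_ hn2
      have := hT n
      gcongr
    gcongr
  have hVp : ∫ x, V x ^ p ∂(kap N) ≤ D2 := by
    have := s.pbound hV
    simp only [abs_of_nonneg (hV0 _)] at this
    refine this.trans ?_
    have := Qn_nonneg V
    rw [hD2]
    gcongr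
  have hcu := (hu n).c1.continuous
  have hms : MeasurableSet {x | L < u n x} := (isOpen_lt continuous_const hcu).measurableSet
  have hip := s.ip' (hH n) (h0 n)
  have hiV := s.ip' hV hV0
  have hfin : ((1 + L) / 2) ^ (r * p) * ∫ x in {x | L < u n x}, u n x ^ p ∂(kap N) ≤ D2 := by
    calc _ = ∫ x in {x | L < u n x}, ((1 + L) / 2) ^ (r * p) * u n x ^ p ∂(kap N) := by rw [integral_const_mul]
      _ ≤ ∫ x in {x | L < u n x}, V x ^ p ∂(kap N) := by
        apply setIntegral_mono_on (hip.const_mul _).integrableOn hiV.integrableOn hms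
        intro x hx
        have a1 := hmL _ (le_of_lt hx)
        have a2 := h0 n x
        have a3 := hm1 _ a2
        simp only [hVd]
        rw [Real.mul_rpow a2 (by linarith), mul_comm, Real.rpow_mul (by linarith)]
        gcongr
      _ ≤ ∫ x, V x ^ p ∂(kap N) := setIntegral_le_integral hiV (Eventually.of_forall fun x => Real.rpow_nonneg (hV0 x) _)
      _ ≤ D2 := hVp
  have hpos : 0 < ((1 + L) / 2) ^ (r * p) := by positivity
  exact le_of_mul_le_mul_left (hfin.trans hL) hpos
end Setup

namespace Setup
variable {N : ℕ} {p q β ν M₀ : ℝ} {W : En N → ℝ} {O : Set (En N)} {g G : En N → ℝ → ℝ}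

lemma hw_sub (s : Setup N p q β ν M₀ W O g G) {u v : En N → ℝ} (hu : HW W u) (hv : HW W v) :
    HW W (fun x => u x - v x) ∧ nW W (fun x => u x - v x) ≤ 2 * nW W u + 2 * nW W v := by
  have hc : ContDiff ℝ 1 (fun x => u x - v x) := hu.c1.sub hv.c1
  have i1 := (hu.int.const_mul 2)
  have i2 := (hv.int.const_mul 2)
  have e : ∀ x, ‖gradient (fun x => u x - v x) x‖ ^ 2 + W x * (u x - v x) ^ 2 ≤
      2 * (‖gradient u x‖ ^ 2 + W x * u x ^ 2) + 2 * (‖gradient v x‖ ^ 2 + W x * v x ^ 2) := by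
    intro x
    rw [grad_sub hu.c1 hv.c1]
    have h1 := norm_sub_le (gradient u x) (gradient v x)
    have h2 : ‖gradient u x - gradient v x‖ ^ 2 ≤ (‖gradient u x‖ + ‖gradient v x‖) ^ 2 := by gcongr
    have h3 := mul_nonneg (s.W0 x).le (sq_nonneg (u x + v x))
    nlinarith [sq_nonneg (‖gradient u x‖ - ‖gradient v x‖)]
  have hI : Integrable (fun x => ‖gradient (fun x => u x - v x) x‖ ^ 2 + W x * (u x - v x) ^ 2) (kap N) := by
    refine (i1.add i2).mono' ?_ (Eventually.of_forall fun x => ?_)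
    · exact (((grad_cont hc).norm.pow 2).add (s.hW.mul (hc.continuous.pow 2))).aestronglyMeasurable
    · have hW := (s.W0 x).le
      rw [Real.norm_of_nonneg (by positivity)]
      exact e x
  refine ⟨⟨hc, hI⟩, ?_⟩
  unfold nW
  rw [← integral_const_mul, ← integral_const_mul, ← integral_add i1 i2]
  exact integral_mono hI (i1.add i2) e

lemma nW_sub_eq (s : Setup N p q β ν M₀ W O g G) {u v : En N → ℝ} (hu : HW W u) (hv : HW W v)
    (hu0 : ∀ x, 0 ≤ u x) (hv0 : ∀ x, 0 ≤ v x) :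
    nW W (fun x => u x - v x) = PD W g u (fun x => u x - v x) - PD W g v (fun x => u x - v x)
      + ∫ x, (g x (u x) - g x (v x)) * (u x - v x) ∂(kap N) := by
  obtain ⟨hw, -⟩ := s.hw_sub hu hv
  have iu := s.igφ (s.toH1 hu) hu0 (s.toH1 hw)
  have iv := s.igφ (s.toH1 hv) hv0 (s.toH1 hw)
  have eu := s.iE hu hw
  have ev := s.iE hv hw
  have h1 : ∫ x, (g x (u x) - g x (v x)) * (u x - v x) ∂(kap N) =
      (∫ x, g x (u x) * (u x - v x) ∂(kap N)) - ∫ x, g x (v x) * (u x - v x) ∂(kap N) := by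
    rw [← integral_sub iu iv]; congr 1; ext x; ring
  have h2 : nW W (fun x => u x - v x) = (∫ x, (⟪gradient u x, gradient (fun x => u x - v x) x⟫ + W x * u x * (u x - v x)) ∂(kap N))
      - ∫ x, (⟪gradient v x, gradient (fun x => u x - v x) x⟫ + W x * v x * (u x - v x)) ∂(kap N) := by
    unfold nW
    rw [← integral_sub eu ev]; congr 1; ext x
    rw [← real_inner_self_eq_norm_sq, grad_sub hu.c1 hv.c1, inner_sub_left]
    ring
  rw [h1, h2]
  unfold PD
  ring

lemma pt_est (s : Setup N p q β ν M₀ W O g G) {a b L : ℝ} (ha : 0 ≤ a) (hb : 0 ≤ b) (hL : 1 ≤ L) :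
    (a ^ (p - 1) + b ^ (p - 1)) * |a - b| ≤ L ^ (p - 2) * ((a + b) * |a - b|)
      + 2 * (if L < a then a ^ p else 0) + 2 * (if L < b then b ^ p else 0) := by
  have hp := s.hp2
  have A : ∀ t, 0 ≤ t → t ≤ L → t ^ (p - 1) ≤ L ^ (p - 2) * t := fun t ht htL => by
    have : t ^ (p - 1) = t ^ (p - 2) * t := by
      rw [← Real.rpow_add_one' ht (by linarith)]; congr 1; ring
    rw [this]; gcongr
  have B : ∀ t r : ℝ, 0 ≤ t → t ≤ r → (t ^ (p - 1) + r ^ (p - 1)) * |t - r| ≤ 2 * r ^ p := fun t r ht htr => by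
    have h1 : t ^ (p - 1) ≤ r ^ (p - 1) := by gcongr; linarith
    have hr : 0 ≤ r := ht.trans htr
    have h2 : |t - r| ≤ r := by rw [abs_of_nonpos (by linarith)]; linarith
    calc (t ^ (p - 1) + r ^ (p - 1)) * |t - r| ≤ (r ^ (p - 1) + r ^ (p - 1)) * r := by gcongr
      _ = 2 * (r ^ (p - 1) * r) := by ring
      _ = _ := by rw [s.rpow_split hr]
  have hia : 0 ≤ (if L < a then a ^ p else 0) := by split_ifs <;> positivity
  have hib : 0 ≤ (if L < b then b ^ p else 0) := by split_ifs <;> positivity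
  have hab : 0 ≤ L ^ (p - 2) * ((a + b) * |a - b|) := by positivity
  rcases le_total a b with h | h
  · by_cases hbL : L < b
    · have := B a b ha h
      rw [if_pos hbL] at *
      linarith
    · push Not at hbL
      have h1 := A a ha (h.trans hbL)
      have h2 := A b hb hbL
      have h3 : (a ^ (p - 1) + b ^ (p - 1)) * |a - b| ≤ (L ^ (p - 2) * a + L ^ (p - 2) * b) * |a - b| := by gcongr
      linarith
  · by_cases hbL : L < a
    · have := B b a hb h
      rw [abs_sub_comm b a, add_comm] at this
      rw [if_pos hbL] at *
      linarith
    · push Not at hbL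
      have h1 := A a ha hbL
      have h2 := A b hb (h.trans hbL)
      have h3 : (a ^ (p - 1) + b ^ (p - 1)) * |a - b| ≤ (L ^ (p - 2) * a + L ^ (p - 2) * b) * |a - b| := by gcongr
      linarith

lemma nonlin_est (s : Setup N p q β ν M₀ W O g G) {u v : En N → ℝ} (hu : HW W u) (hv : HW W v)
    (hu0 : ∀ x, 0 ≤ u x) (hv0 : ∀ x, 0 ≤ v x) {L γ δ : ℝ} (hL : 1 ≤ L) (hγ : 0 < γ)
    (h1 : ∫ x in {x | L < u x}, u x ^ p ∂(kap N) ≤ δ) (h2 : ∫ x in {x | L < v x}, v x ^ p ∂(kap N) ≤ δ) :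
    ∫ x, (g x (u x) - g x (v x)) * (u x - v x) ∂(kap N) ≤
      (ν + β + 1) * ((1 + L ^ (p - 2)) * (γ * (Qn u + Qn v) + (2 * γ)⁻¹ * ∫ x, (u x - v x) ^ 2 ∂(kap N)) + 4 * δ) := by
  have hβ := s.hβ
  have hν := s.hν
  have hU := s.toH1 hu
  have hV := s.toH1 hv
  have hw := s.toH1 (s.hw_sub hu hv).1
  have ip1 := s.ip' hU hu0
  have ip2 := s.ip' hV hv0
  have ms1 : MeasurableSet {x | L < u x} := (isOpen_lt continuous_const hu.c1.continuous).measurableSet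
  have ms2 : MeasurableSet {x | L < v x} := (isOpen_lt continuous_const hv.c1.continuous).measurableSet
  rw [← integral_indicator ms1] at h1
  rw [← integral_indicator ms2] at h2
  have j1 := (ip1.indicator ms1)
  have j2 := (ip2.indicator ms2)
  set K := ν + β + 1
  set P := 1 + L ^ (p - 2)
  have hP : 0 ≤ P := by positivity
  have hK : 0 ≤ K := by positivity
  have k1 : Integrable (fun x => P * (γ * (u x ^ 2 + v x ^ 2) + (2 * γ)⁻¹ * (u x - v x) ^ 2)) (kap N) :=
    (((hU.l2.add hV.l2).const_mul γ).add (hw.l2.const_mul _)).const_mul P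
  have k2 : Integrable (fun x => 2 * ({x | L < u x}.indicator (fun x => u x ^ p) x + {x | L < v x}.indicator (fun x => v x ^ p) x)) (kap N) :=
    (j1.add j2).const_mul 2
  have k3 : Integrable (fun x => K * (P * (γ * (u x ^ 2 + v x ^ 2) + (2 * γ)⁻¹ * (u x - v x) ^ 2) +
      2 * ({x | L < u x}.indicator (fun x => u x ^ p) x + {x | L < v x}.indicator (fun x => v x ^ p) x))) (kap N) :=
    (k1.add k2).const_mul K
  have iL : Integrable (fun x => (g x (u x) - g x (v x)) * (u x - v x)) (kap N) := by
    refine ((s.igφ hU hu0 hw).sub (s.igφ hV hv0 hw)).congr (Eventually.of_forall fun x => ?_)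
    simp only [Pi.sub_apply]; ring
  have hpt : ∀ x, (g x (u x) - g x (v x)) * (u x - v x) ≤ K * (P * (γ * (u x ^ 2 + v x ^ 2) + (2 * γ)⁻¹ * (u x - v x) ^ 2) +
      2 * ({x | L < u x}.indicator (fun x => u x ^ p) x + {x | L < v x}.indicator (fun x => v x ^ p) x)) := by
    intro x
    have a0 := hu0 x
    have b0 := hv0 x
    have e1 : {x | L < u x}.indicator (fun x => u x ^ p) x = if L < u x then u x ^ p else 0 := by
      simp [Set.indicator_apply]
    have e2 : {x | L < v x}.indicator (fun x => v x ^ p) x = if L < v x then v x ^ p else 0 := by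
      simp [Set.indicator_apply]
    rw [e1, e2]
    have c1 := s.pt_est a0 b0 hL
    have c2 := s.g_le x a0
    have c3 := s.g_le x b0
    have c4 := s.g0 x (u x)
    have c5 := s.g0 x (v x)
    have c6 : (u x + v x) * |u x - v x| ≤ γ * (u x ^ 2 + v x ^ 2) + (2 * γ)⁻¹ * (u x - v x) ^ 2 := by
      have e : γ * (u x ^ 2 + v x ^ 2) + (2 * γ)⁻¹ * (u x - v x) ^ 2 - (u x + v x) * |u x - v x|
        = (2 * γ)⁻¹ * ((γ * (u x + v x) - |u x - v x|) ^ 2 + γ ^ 2 * (u x - v x) ^ 2) := by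
        rw [← sq_abs (u x - v x)]
        field_simp
        have := sq_abs (u x - v x)
        nlinarith
      have : 0 ≤ (2 * γ)⁻¹ * ((γ * (u x + v x) - |u x - v x|) ^ 2 + γ ^ 2 * (u x - v x) ^ 2) := by positivity
      linarith
    calc (g x (u x) - g x (v x)) * (u x - v x) ≤ |(g x (u x) - g x (v x)) * (u x - v x)| := le_abs_self _
      _ = |g x (u x) - g x (v x)| * |u x - v x| := abs_mul _ _
      _ ≤ (K * ((u x + v x) + (u x ^ (p - 1) + v x ^ (p - 1)))) * |u x - v x| := by
        gcongr
        rw [abs_le]; constructor <;> nlinarith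
      _ = K * ((u x + v x) * |u x - v x| + (u x ^ (p - 1) + v x ^ (p - 1)) * |u x - v x|) := by ring
      _ ≤ K * (P * ((u x + v x) * |u x - v x|) + 2 * ((if L < u x then u x ^ p else 0) + (if L < v x then v x ^ p else 0))) := by
        apply mul_le_mul_of_nonneg_left _ hK
        simp only [P]
        linarith
      _ ≤ _ := by gcongr
  have hintg := integral_mono iL k3 hpt
  refine hintg.trans ?_
  have q1 : Integrable (fun x => γ * (u x ^ 2 + v x ^ 2)) (kap N) := (hU.l2.add hV.l2).const_mul γ
  have q2 : Integrable (fun x => (2 * γ)⁻¹ * (u x - v x) ^ 2) (kap N) := hw.l2.const_mul _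
  rw [integral_const_mul, integral_add k1 k2, integral_const_mul, integral_const_mul, integral_add q1 q2, integral_const_mul,
    integral_const_mul, integral_add hU.l2 hV.l2, integral_add j1 j2]
  have l1 := l2_le_Qn hU
  have l2 := l2_le_Qn hV
  have l3 : 2 * ((∫ x, {x | L < u x}.indicator (fun x => u x ^ p) x ∂(kap N)) +
      ∫ x, {x | L < v x}.indicator (fun x => v x ^ p) x ∂(kap N)) ≤ 4 * δ := by linarith
  gcongr

theorem main_result (s : Setup N p q β ν M₀ W O g G) (u : ℕ → En N → ℝ) (hu : ∀ n, HW W (u n)) (h0 : ∀ n x, 0 ≤ u n x)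
    {c : ℝ} (hc0 : 0 < c) (hc : c < (1 / 2 - 1 / (q + 1)) * Sconst N ^ ((N : ℝ) / 2))
    (hJ : Tendsto (fun n => (1 / 2) * nW W (u n) - ∫ x, G x (u n x) ∂(kap N)) atTop (𝓝 c))
    (ε : ℕ → ℝ) (hε : Tendsto ε atTop (𝓝 0))
    (hPS : ∀ n, ∀ φ : En N → ℝ, HW W φ → |PD W g (u n) φ| ≤ ε n * √(nW W φ)) :
    ∃ σ : ℕ → ℕ, StrictMono σ ∧ ∀ ε' > (0:ℝ), ∃ M : ℕ, ∀ m ≥ M, ∀ n ≥ M,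
      √(nW W (fun x => u (σ m) x - u (σ n) x)) < ε' := by
  have hM := s.hM
  have hβ := s.hβ
  have hν := s.hν
  obtain ⟨C₀, hC₀⟩ := hJ.bddAbove_range
  obtain ⟨T, hT⟩ := s.bounded u hu h0 C₀ (fun n => hC₀ ⟨n, rfl⟩) ε hε hPS
  have hT0 : 0 ≤ T := (s.nW_nonneg _).trans (hT 0)
  have hQ : ∀ n, Qn (u n) ≤ (1 + M₀⁻¹) * T := fun n => (s.Qn_le (hu n)).trans (by gcongr; exact hT n)
  set T1 := (1 + M₀⁻¹) * T
  have hT1 : 0 ≤ T1 := by positivity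
  obtain ⟨σ, hσ, hC⟩ := rellich u (fun n => s.toH1 (hu n)) T1 hQ
  refine ⟨σ, hσ, fun ε' hε' => ?_⟩
  have hεa : Tendsto (fun n => |ε n|) atTop (𝓝 0) := by simpa using hε.abs
  set ζ := ε' ^ 2 with hζ
  have hζ0 : 0 < ζ := by positivity
  set K := ν + β + 1 with hK
  have hK0 : 0 < K := by positivity
  set δ := ζ / (32 * K) with hδ
  obtain ⟨L, hL, hui⟩ := s.ui u hu h0 hc0 hc hJ ε hε hPS hT (show 0 < δ by positivity)
  set P := 1 + L ^ (p - 2) with hP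
  have hP0 : 0 < P := by positivity
  set γ := ζ / (16 * K * P * (T1 + 1)) with hγ
  have hγ0 : 0 < γ := by positivity
  obtain ⟨M1, hM1⟩ := hC (ζ * γ / (4 * K * P)) (by positivity)
  have he : ∀ᶠ n in atTop, |ε n| * √(4 * T) < ζ / 8 := by
    have := hεa.mul_const (√(4 * T))
    rw [zero_mul] at this
    exact this.eventually_lt_const (by positivity)
  obtain ⟨M2, hM2⟩ := eventually_atTop.1 (hui.and he)
  refine ⟨max M1 M2, fun m hm n hn => ?_⟩
  rw [Real.sqrt_lt' hε']
  have hm2 := hM2 (σ m) ((le_max_right _ _).trans (hm.le.trans (hσ.id_le m)))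
  have hn2 := hM2 (σ n) ((le_max_right _ _).trans (hn.le.trans (hσ.id_le n)))
  have hmn := hM1 m ((le_max_left _ _).trans hm) n ((le_max_left _ _).trans hn)
  have hum := hu (σ m)
  have hun := hu (σ n)
  obtain ⟨hw, hwn⟩ := s.hw_sub hum hun
  have hwT : √(nW W (fun x => u (σ m) x - u (σ n) x)) ≤ √(4 * T) :=
    Real.sqrt_le_sqrt (by linarith [hT (σ m), hT (σ n)])
  rw [s.nW_sub_eq hum hun (h0 _) (h0 _)]
  have n1 := s.nonlin_est hum hun (h0 _) (h0 _) hL hγ0 hm2.1 hn2.1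
  have p1 := (le_abs_self _).trans (hPS (σ m) _ hw)
  have p2 := (neg_le_abs _).trans (hPS (σ n) _ hw)
  have p3 : ∀ k, ε k * √(nW W (fun x => u (σ m) x - u (σ n) x)) ≤ |ε k| * √(4 * T) := fun k =>
    (mul_le_mul_of_nonneg_right (le_abs_self _) (Real.sqrt_nonneg _)).trans (mul_le_mul_of_nonneg_left hwT (abs_nonneg _))
  have p4 := p3 (σ m)
  have p5 := p3 (σ n)
  have n2 : K * (P * (γ * (Qn (u (σ m)) + Qn (u (σ n))) + (2 * γ)⁻¹ * ∫ x, (u (σ m) x - u (σ n) x) ^ 2 ∂(kap N)) + 4 * δ)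
      ≤ K * (P * (γ * (T1 + T1) + (2 * γ)⁻¹ * (ζ * γ / (4 * K * P))) + 4 * δ) := by
    have := hQ (σ m)
    have := hQ (σ n)
    gcongr
  have n3 : K * (P * (γ * (T1 + T1) + (2 * γ)⁻¹ * (ζ * γ / (4 * K * P))) + 4 * δ) = 2 * (K * P * γ * T1) + ζ / 8 + ζ / 8 := by
    rw [hδ]
    field_simp
    ring
  have n4 : K * P * γ * T1 ≤ ζ / 16 := by
    have : K * P * γ * (T1 + 1) = ζ / 16 := by rw [hγ]; field_simp
    have : 0 ≤ K * P * γ := by positivity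
    linarith
  linarith [hm2.2, hn2.2]
end Setup

namespace NL
variable {q p β ν₀ ρ : ℝ}

lemma h_eq (hp : 2 < p) (hq : 1 < q) {t : ℝ} (ht : 0 ≤ t) : hfun q p β t = β * t ^ q + t ^ (p - 1) := by
  unfold hfun
  split_ifs with h
  · have : t = 0 := le_antisymm h ht
    rw [this, Real.zero_rpow (by linarith), Real.zero_rpow (by linarith)]; simp
  · rfl

lemma h_nonneg (hβ : 0 < β) (t : ℝ) : 0 ≤ hfun q p β t := by
  unfold hfun
  split_ifs with h
  · exact le_rfl
  · push Not at h; positivity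

lemma f_nonneg (hβ : 0 < β) (hν : 0 < ν₀) (t : ℝ) : 0 ≤ ffun q p β ν₀ ρ t := by
  unfold ffun
  split_ifs with h h'
  · exact le_rfl
  · push Not at h; positivity
  · push Not at h; positivity

def kf (q p β t : ℝ) : ℝ := β * t ^ (q - 1) + t ^ (p - 2)

lemma kf_cont (hp : 2 < p) (hq : 1 < q) : Continuous (kf q p β) := by
  unfold kf
  exact (continuous_const.mul (Real.continuous_rpow_const (by linarith))).add (Real.continuous_rpow_const (by linarith))

lemma kf_mono (hp : 2 < p) (hq : 1 < q) (hβ : 0 < β) {x y : ℝ} (hx : 0 ≤ x) (hxy : x ≤ y) : kf q p β x ≤ kf q p β y := by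
  unfold kf
  have h1 : x ^ (q - 1) ≤ y ^ (q - 1) := Real.rpow_le_rpow hx hxy (by linarith)
  have h2 : x ^ (p - 2) ≤ y ^ (p - 2) := Real.rpow_le_rpow hx hxy (by linarith)
  have := mul_le_mul_of_nonneg_left h1 hβ.le
  linarith

lemma kf_mul {t : ℝ} (ht : 0 < t) : β * t ^ q + t ^ (p - 1) = kf q p β t * t := by
  unfold kf
  have h1 : t ^ q = t ^ (q - 1) * t := by rw [← Real.rpow_add_one ht.ne']; congr 1; ring
  have h2 : t ^ (p - 1) = t ^ (p - 2) * t := by rw [← Real.rpow_add_one ht.ne']; congr 1; ring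
  rw [h1, h2]; ring

lemma h_form (t : ℝ) : hfun q p β t = kf q p β (max t 0) * max t 0 := by
  unfold hfun
  split_ifs with h
  · rw [max_eq_right h, mul_zero]
  · push Not at h
    rw [max_eq_left h.le, kf_mul h]

lemma f_form (hρ : 0 < ρ) (hρeq : β * ρ ^ (q - 1) + ρ ^ (p - 2) = ν₀) (t : ℝ) :
    ffun q p β ν₀ ρ t = kf q p β (min (max t 0) ρ) * max t 0 := by
  unfold ffun
  split_ifs with h h'
  · rw [max_eq_right h, mul_zero]
  · push Not at h
    rw [max_eq_left h.le, min_eq_left h', kf_mul h]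
  · push Not at h h'
    rw [max_eq_left h.le, min_eq_right h'.le, ← hρeq, kf]

lemma h_cont (hp : 2 < p) (hq : 1 < q) : Continuous (hfun q p β) := by
  rw [show hfun q p β = fun t => kf q p β (max t 0) * max t 0 from funext h_form]
  have := kf_cont (β := β) hp hq
  fun_prop

lemma f_cont (hp : 2 < p) (hq : 1 < q) (hρ : 0 < ρ) (hρeq : β * ρ ^ (q - 1) + ρ ^ (p - 2) = ν₀) :
    Continuous (ffun q p β ν₀ ρ) := by
  rw [show ffun q p β ν₀ ρ = fun t => kf q p β (min (max t 0) ρ) * max t 0 from funext (f_form hρ hρeq)]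
  have := kf_cont (β := β) hp hq
  fun_prop

lemma f_le (hp : 2 < p) (hq : 1 < q) (hβ : 0 < β) (hρ : 0 < ρ) (hρeq : β * ρ ^ (q - 1) + ρ ^ (p - 2) = ν₀)
    {t : ℝ} (ht : 0 ≤ t) : ffun q p β ν₀ ρ t ≤ ν₀ * t := by
  rw [f_form hρ hρeq, max_eq_left ht]
  apply mul_le_mul_of_nonneg_right _ ht
  rw [← hρeq]
  exact kf_mono hp hq hβ (le_min ht hρ.le) (min_le_right _ _)

lemma prim_le {φ : ℝ → ℝ} (hφ : Continuous φ) {r : ℝ} (hr : 0 ≤ r) {t : ℝ} (ht : 0 ≤ t)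
    (h : ∀ τ, 0 ≤ τ → τ ≤ t → φ τ * t ^ r ≤ φ t * τ ^ r) : ∫ τ in (0:ℝ)..t, φ τ ≤ φ t * t / (r + 1) := by
  rcases ht.eq_or_lt with h0 | h0
  · rw [← h0]; simp
  have hc : Continuous fun τ : ℝ => φ t / t ^ r * τ ^ r := continuous_const.mul (Real.continuous_rpow_const hr)
  have h1 : ∫ τ in (0:ℝ)..t, φ τ ≤ ∫ τ in (0:ℝ)..t, φ t / t ^ r * τ ^ r := by
    apply intervalIntegral.integral_mono_on ht (hφ.intervalIntegrable _ _) (hc.intervalIntegrable _ _)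
    intro τ hτ
    have := h τ hτ.1 hτ.2
    rw [div_mul_eq_mul_div, le_div_iff₀ (by positivity)]
    exact this
  refine h1.trans (le_of_eq ?_)
  rw [intervalIntegral.integral_const_mul, integral_rpow (Or.inl (by linarith)), Real.zero_rpow (by linarith),
    Real.rpow_add_one h0.ne']
  have : t ^ r ≠ 0 := by positivity
  field_simp
  ring

lemma H_le (hp : 2 < p) (hq : 1 < q) (hβ : 0 < β) {t : ℝ} (ht : 0 ≤ t) :
    Hfun q p β t ≤ hfun q p β t * t / 2 := by
  have := prim_le (h_cont (β := β) hp hq) zero_le_one ht (fun τ h1 h2 => by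
    rw [Real.rpow_one, Real.rpow_one, h_form, h_form, max_eq_left h1, max_eq_left ht]
    have := mul_le_mul_of_nonneg_right (kf_mono hp hq hβ h1 h2) (mul_nonneg h1 ht)
    linarith)
  norm_num at this
  exact this

lemma F_le (hp : 2 < p) (hq : 1 < q) (hβ : 0 < β) (hρ : 0 < ρ) (hρeq : β * ρ ^ (q - 1) + ρ ^ (p - 2) = ν₀)
    {t : ℝ} (ht : 0 ≤ t) : Ffun q p β ν₀ ρ t ≤ ffun q p β ν₀ ρ t * t / 2 := by
  have := prim_le (f_cont hp hq hρ hρeq) zero_le_one ht (fun τ h1 h2 => by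
    rw [Real.rpow_one, Real.rpow_one, f_form hρ hρeq, f_form hρ hρeq, max_eq_left h1, max_eq_left ht]
    have := mul_le_mul_of_nonneg_right (kf_mono hp hq hβ (le_min h1 hρ.le) (min_le_min_right ρ h2)) (mul_nonneg h1 ht)
    linarith)
  norm_num at this
  exact this

lemma H_le2 (hp : 2 < p) (hq : 1 < q) (hqp : q < p - 1) (hβ : 0 < β) {t : ℝ} (ht : 0 ≤ t) :
    Hfun q p β t ≤ hfun q p β t * t / (q + 1) := by
  apply prim_le (h_cont (β := β) hp hq) (by linarith) ht
  intro τ h1 h2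
  rw [h_eq hp hq h1, h_eq hp hq ht]
  have e : ∀ y : ℝ, 0 ≤ y → y ^ (p - 1) = y ^ (p - 1 - q) * y ^ q := fun y hy => by
    rw [← Real.rpow_add' hy (by linarith)]; congr 1; ring
  have h3 : τ ^ (p - 1 - q) ≤ t ^ (p - 1 - q) := Real.rpow_le_rpow h1 h2 (by linarith)
  rw [e τ h1, e t ht]
  have h4 : 0 ≤ τ ^ q * t ^ q := by positivity
  have := mul_le_mul_of_nonneg_right h3 h4
  linarith
end NL

/-- for `λ ≥ 1` and `c ∈ (0, (1/2 − 1/(q+1))S^{N/2})`, every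
(PS)_c sequence for `Φ_λ` has a subsequence that is Cauchy in the `‖·‖_{K,λ}` norm,
i.e. converges strongly in `H^1_{K,λ}(ℝ^N)`. -/
theorem PS_condition {N k : ℕ} (hN : 3 ≤ N) (hk : 0 < k)
    (q : ℝ) (hq1 : 1 < q) (hq2 : q < twoStar N - 1)
    (a b : En N → ℝ)
    (ha_cont : Continuous a) (ha_nonneg : ∀ x, 0 ≤ a x)
    (Ωs : Fin k → Set (En N))
    (hΩ_open : ∀ j, IsOpen (Ωs j))
    (hΩ_ne : ∀ j, (Ωs j).Nonempty)
    (hΩ_conn : ∀ j, IsConnected (Ωs j))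
    (hΩ_sep : ∀ i j, i ≠ j → ∃ d > (0:ℝ), ∀ x ∈ Ωs i, ∀ y ∈ Ωs j, d ≤ dist x y)
    (hΩ_int : interior (a ⁻¹' {0}) = ⋃ j, Ωs j)
    (hΩ_bdd : Bornology.IsBounded (⋃ j, Ωs j))
    (hΩ_cl : a ⁻¹' {0} = closure (⋃ j, Ωs j))
    (hb_cont : Continuous b) (M₁ : ℝ) (hM₁ : 0 < M₁) (hb_bdd : ∀ x, |b x| ≤ M₁)
    (M₀ : ℝ) (hM₀ : 0 < M₀) (hab : ∀ x, M₀ ≤ a x + b x)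
    (Ωs' : Fin k → Set (En N))
    (hΩ'_open : ∀ j, IsOpen (Ωs' j))
    (hΩ'_bdd : ∀ j, Bornology.IsBounded (Ωs' j))
    (hΩ'_sub : ∀ j, closure (Ωs j) ⊆ Ωs' j)
    (hΩ'_disj : ∀ i j, i ≠ j → closure (Ωs' i) ∩ closure (Ωs' j) = ∅)
    (Γ : Finset (Fin k)) (hΓ : Γ.Nonempty)
    (β : ℝ) (hβ : 0 < β) (ν₀ : ℝ) (hν₀ : 0 < ν₀) (ρ : ℝ) (hρ : 0 < ρ)
    (hρeq : β * ρ ^ (q - 1) + ρ ^ (twoStar N - 2) = ν₀)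
    (lam : ℝ) (hlam : 1 ≤ lam)
    (c : ℝ) (hc : c ∈ Set.Ioo (0:ℝ) ((1/2 - 1/(q+1)) * Sconst N ^ ((N : ℝ) / 2)))
    (u : ℕ → En N → ℝ)
    (hu_nonneg : ∀ n x, 0 ≤ u n x)
    (hu_smooth : ∀ n, ContDiff ℝ 1 (u n))
    (hu_int : ∀ n, Integrable (fun x =>
      Kw x * (‖gradient (u n) x‖ ^ 2 + (lam * a x + b x) * u n x ^ 2)))
    (hPhi : Tendsto (fun n => Phi q (twoStar N) β ν₀ ρ lam a b (⋃ j ∈ Γ, Ωs' j) (u n))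
      atTop (𝓝 c))
    (ε : ℕ → ℝ) (hε : Tendsto ε atTop (𝓝 0))
    (hPS : ∀ n, ∀ φ : En N → ℝ, ContDiff ℝ 1 φ →
      Integrable (fun x => Kw x * (‖gradient φ x‖ ^ 2 + (lam * a x + b x) * φ x ^ 2)) →
      |PhiD q (twoStar N) β ν₀ ρ lam a b (⋃ j ∈ Γ, Ωs' j) (u n) φ|
        ≤ ε n * Real.sqrt (nrmSq lam a b φ)) :
    ∃ σ : ℕ → ℕ, StrictMono σ ∧
      ∀ ε' > (0:ℝ), ∃ M : ℕ, ∀ m ≥ M, ∀ n ≥ M,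
        Real.sqrt (nrmSq lam a b (fun x => u (σ m) x - u (σ n) x)) < ε' := by
  set p := twoStar N with hp
  have hp2 : 2 < p := twoStar_gt hN
  have hS : 0 < Sconst N := by
    have h1 : 0 ≤ Sconst N := by
      apply Real.sInf_nonneg
      rintro y ⟨v, -, -, -, rfl⟩
      exact integral_nonneg fun x => mul_nonneg (Real.exp_pos _).le (by positivity)
    rcases h1.eq_or_lt with h | h
    · have hN0 : (0 : ℝ) < N := by exact_mod_cast (by omega)
      rw [← h, Real.zero_rpow (by positivity), mul_zero] at hc
      exact absurd (hc.1.trans hc.2) (lt_irrefl _)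
    · exact h
  have hOo : IsOpen (⋃ j ∈ Γ, Ωs' j) := isOpen_biUnion fun j _ => hΩ'_open j
  set O := ⋃ j ∈ Γ, Ωs' j with hOdef
  set W : En N → ℝ := fun x => lam * a x + b x with hWdef
  have s : Setup N p q β ν₀ M₀ W O (gfun q p β ν₀ ρ O) (Gfun q p β ν₀ ρ O) :=
    { hN := hN
      hp := hp
      hp2 := hp2
      hq1 := hq1
      hq2 := hq2
      hβ := hβ
      hν := hν₀
      hM := hM₀
      hW := (continuous_const.mul ha_cont).add hb_cont
      hWM := fun x => by
        have h1 := hab x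
        have h2 := ha_nonneg x
        simp only [hWdef]
        nlinarith
      hO := hOo
      hOb := (Bornology.isBounded_biUnion Γ.finite_toSet).2 fun j _ => hΩ'_bdd j
      hOn := by
        obtain ⟨j, hj⟩ := hΓ
        obtain ⟨x, hx⟩ := hΩ_ne j
        exact ⟨x, Set.mem_biUnion (show j ∈ (Γ : Set (Fin k)) from hj) (hΩ'_sub j (subset_closure hx))⟩
      hS := hS
      g0 := fun x t => by
        unfold gfun
        split_ifs
        · exact NL.h_nonneg hβ t
        · exact NL.f_nonneg hβ hν₀ t
      gout := fun x t hx ht => by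
        unfold gfun
        rw [if_neg hx]
        exact NL.f_le hp2 hq1 hβ hρ hρeq ht
      gin := fun x t hx ht => by
        unfold gfun
        rw [if_pos hx]
        exact NL.h_eq hp2 hq1 ht
      G0 := fun x t ht => by
        unfold Gfun
        split_ifs
        · exact intervalIntegral.integral_nonneg ht fun y _ => NL.h_nonneg hβ y
        · exact intervalIntegral.integral_nonneg ht fun y _ => NL.f_nonneg hβ hν₀ y
      G1 := fun x t ht => by
        unfold Gfun gfun
        split_ifs
        · exact NL.H_le hp2 hq1 hβ ht
        · exact NL.F_le hp2 hq1 hβ hρ hρeq ht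
      G2 := fun x t hx ht => by
        unfold Gfun gfun
        rw [if_pos hx, if_pos hx]
        exact NL.H_le2 hp2 hq1 hq2 hβ ht
      gm := fun v hv => by
        classical
        have : (fun x => gfun q p β ν₀ ρ O x (v x)) =
            O.piecewise (fun x => hfun q p β (v x)) (fun x => ffun q p β ν₀ ρ (v x)) := by
          ext x; simp [gfun, Set.piecewise]
        rw [this]
        exact (Measurable.piecewise hOo.measurableSet ((NL.h_cont hp2 hq1).comp hv).measurable
          ((NL.f_cont hp2 hq1 hρ hρeq).comp hv).measurable).aestronglyMeasurable
      Gm := fun v hv => by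
        classical
        have : (fun x => Gfun q p β ν₀ ρ O x (v x)) =
            O.piecewise (fun x => Hfun q p β (v x)) (fun x => Ffun q p β ν₀ ρ (v x)) := by
          ext x; simp [Gfun, Set.piecewise]
        rw [this]
        have c1 : Continuous (Hfun q p β) :=
          intervalIntegral.continuous_primitive (fun y z => (NL.h_cont hp2 hq1).intervalIntegrable y z) 0
        have c2 : Continuous (Ffun q p β ν₀ ρ) :=
          intervalIntegral.continuous_primitive (fun y z => (NL.f_cont hp2 hq1 hρ hρeq).intervalIntegrable y z) 0
        exact (Measurable.piecewise hOo.measurableSet (c1.comp hv).measurable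
          (c2.comp hv).measurable).aestronglyMeasurable }
  have eN : ∀ v, nW W v = nrmSq lam a b v := fun v => by
    unfold nW nrmSq; rw [kap_integral]
  have hu : ∀ n, HW W (u n) := fun n => ⟨hu_smooth n, kap_integrable.2 (hu_int n)⟩
  obtain ⟨σ, hσ, hσ2⟩ := s.main_result u hu hu_nonneg hc.1 hc.2 (by
    refine hPhi.congr fun n => ?_
    unfold Phi
    rw [eN, kap_integral]) ε hε (by
    intro n φ hφ
    have h1 := hPS n φ hφ.c1 (kap_integrable.1 hφ.int)
    rw [eN]
    have e : PD W (gfun q p β ν₀ ρ O) (u n) φ = PhiD q p β ν₀ ρ lam a b O (u n) φ := by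
      unfold PD PhiD
      rw [kap_integral, kap_integral]
      simp only [mul_assoc, hWdef]
    rw [e]
    exact h1)
  refine ⟨σ, hσ, fun ε' hε' => ?_⟩
  obtain ⟨M, hM⟩ := hσ2 ε' hε'
  refine ⟨M, fun m hm n hn => ?_⟩
  rw [← eN]
  exact hM m hm n hn
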